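/- arXiv:2505.19072 — 3 statements merged into one kernel-verified Lean document; each statement's English description precedes it below -/
import Mathlib

section
/- For any skew shape λ/μ and any positive integer n, the hybrid Grothendieck polynomial G_{λ/μ}(x_1,...,x_n; t; w) is symmetric in the variables x_1,...,x_n: for every permutation σ of {1,...,n}, substituting x_{σ(j)} for x_j (for all j) leaves the polynomial unchanged. -/
open scoped Classical

/-- A partition, given as its weakly decreasing sequence of parts (0-indexed),
with finitely many nonzero parts. -/
def IsPartitionFun (f : ℕ → ℕ) : Prop :=
  (∀ i, f (i + 1) ≤ f i) ∧ ∃ N, ∀ i, N ≤ i → f i = 0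

/-- Box `(i, j)` (row `i`, column `j`, both 0-indexed) lies in the skew shape `lam/mu`. -/
def InShape (lam mu : ℕ → ℕ) (i j : ℕ) : Prop :=
  mu i ≤ j ∧ j < lam i

/-- `A ≤ B` for finite sets of naturals: every element of `A` is at most every
element of `B` (for nonempty sets this says `max A ≤ min B`). -/
def FinsetLE (A B : Finset ℕ) : Prop :=
  ∀ a ∈ A, ∀ b ∈ B, a ≤ b

/-- A set-valued reverse plane partition of skew shape `lam/mu`: every box of the
shape is filled with a nonempty finite set of positive integers, the sets weakly
increase along rows and down columns, and boxes outside the shape are empty. -/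
def IsSVRPP (lam mu : ℕ → ℕ) (T : ℕ → ℕ → Finset ℕ) : Prop :=
  (∀ i j, ¬ InShape lam mu i j → T i j = ∅) ∧
  (∀ i j, InShape lam mu i j → (T i j).Nonempty) ∧
  (∀ i j x, x ∈ T i j → 1 ≤ x) ∧
  (∀ i j, InShape lam mu i j → InShape lam mu i (j + 1) → FinsetLE (T i j) (T i (j + 1))) ∧
  (∀ i j, InShape lam mu i j → InShape lam mu (i + 1) j → FinsetLE (T i j) (T (i + 1) j))

/-- An SVRPP all of whose entries are subsets of `{1, …, n}`. -/
def IsSVRPPn (lam mu : ℕ → ℕ) (n : ℕ) (T : ℕ → ℕ → Finset ℕ) : Prop :=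
  IsSVRPP lam mu T ∧ ∀ i j, T i j ⊆ Finset.Icc 1 n

/-- `ircont T v` = number of columns of `T` containing a set that contains `v`. -/
noncomputable def ircont (T : ℕ → ℕ → Finset ℕ) (v : ℕ) : ℕ :=
  Set.ncard {j : ℕ | ∃ i, v ∈ T i j}

/-- `ceq lam mu T i` = number of boxes `(i,j)` of the shape with `(i+1,j)` also in the
shape and `max T(i,j) = min T(i+1,j)`. -/
noncomputable def ceq (lam mu : ℕ → ℕ) (T : ℕ → ℕ → Finset ℕ) (i : ℕ) : ℕ :=
  Set.ncard {j : ℕ | InShape lam mu i j ∧ InShape lam mu (i + 1) j ∧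
    ∃ m, m ∈ T i j ∧ (∀ x ∈ T i j, x ≤ m) ∧ m ∈ T (i + 1) j ∧ ∀ x ∈ T (i + 1) j, m ≤ x}

/-- `exv lam mu T i` = excess of row `i`: the sum over the boxes of row `i` of
(cardinality of the filling minus one). -/
def exv (lam mu : ℕ → ℕ) (T : ℕ → ℕ → Finset ℕ) (i : ℕ) : ℕ :=
  ∑ j ∈ Finset.Ico (mu i) (lam i), ((T i j).card - 1)

/-- The hybrid Grothendieck polynomial `G_{lam/mu}(x_1,…,x_n; t; w)`, a polynomial in
`x_1, …, x_n` (variables `Sum.inl v`, `v : Fin n`, with `x_{v+1} = X (Sum.inl v)`) with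
coefficients involving the variables `t_r = X (Sum.inr (Sum.inl r))` and
`w_r = X (Sum.inr (Sum.inr r))` (`r` ranging over the 0-indexed rows). -/
noncomputable def hybridG (lam mu : ℕ → ℕ) (n : ℕ) :
    MvPolynomial (Fin n ⊕ ℕ ⊕ ℕ) ℤ :=
  ∑ᶠ T ∈ {T : ℕ → ℕ → Finset ℕ | IsSVRPPn lam mu n T},
    (∏ v : Fin n, MvPolynomial.X (Sum.inl v) ^ ircont T ((v : ℕ) + 1)) *
    (∏ᶠ r : ℕ, MvPolynomial.X (Sum.inr (Sum.inl r)) ^ ceq lam mu T r) *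
    (∏ᶠ r : ℕ, MvPolynomial.X (Sum.inr (Sum.inr r)) ^ exv lam mu T r)

namespace HG

noncomputable def Wd (p q : ℕ → ℕ) : ℕ → Finset (ℕ → ℕ)
  | 0 => {fun _ => 0}
  | c + 1 => (Finset.Icc (2 * p c) (2 * q c) ×ˢ Wd p q c).image
      (fun z => Function.update z.2 c z.1)

theorem mem_Wd (p q : ℕ → ℕ) (c : ℕ) : ∀ f, f ∈ Wd p q c ↔
    (∀ i, i < c → 2 * p i ≤ f i ∧ f i ≤ 2 * q i) ∧ ∀ i, c ≤ i → f i = 0 := by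
  induction c with
  | zero =>
    intro f
    simp only [Wd, Finset.mem_singleton]
    constructor
    · rintro rfl; simp
    · rintro ⟨_, h⟩; funext i; exact h i (Nat.zero_le _)
  | succ c ih =>
    intro f
    simp only [Wd, Finset.mem_image, Finset.mem_product, Finset.mem_Icc, Prod.exists]
    constructor
    · rintro ⟨x, g, ⟨hx, hg⟩, rfl⟩
      rw [ih] at hg
      constructor
      · intro i hi
        by_cases h : i = c
        · subst h; simpa using hx
        · rw [Function.update_of_ne h]; exact hg.1 i (by omega)
      · intro i hi
        rw [Function.update_of_ne (by omega)]; exact hg.2 i (by omega)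
    · rintro ⟨h1, h2⟩
      refine ⟨f c, Function.update f c 0, ⟨h1 c (by omega), ?_⟩, ?_⟩
      · rw [ih]
        constructor
        · intro i hi
          rw [Function.update_of_ne (by omega)]; exact h1 i (by omega)
        · intro i hi
          by_cases h : i = c
          · subst h; simp
          · rw [Function.update_of_ne h]; exact h2 i (by omega)
      · simp

theorem sum_Wd_succ {R : Type*} [AddCommMonoid R] (p q : ℕ → ℕ) (c : ℕ) (F : (ℕ → ℕ) → R) :
    ∑ f ∈ Wd p q (c + 1), F f =
      ∑ x ∈ Finset.Icc (2 * p c) (2 * q c), ∑ f ∈ Wd p q c, F (Function.update f c x) := by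
  rw [Wd, Finset.sum_image, Finset.sum_product]
  rintro ⟨x, f⟩ hx ⟨y, g⟩ hy h
  simp only [Finset.coe_product, Set.mem_prod, Finset.mem_coe, mem_Wd] at hx hy h
  have e1 : x = y := by simpa using congrFun h c
  subst e1
  congr 1
  funext i
  by_cases hi : i = c
  · subst hi; rw [hx.2.2 i le_rfl, hy.2.2 i le_rfl]
  · simpa [hi] using congrFun h i

def sgt (a b : ℕ) : Prop := b < a ∨ (b = a ∧ b % 2 = 0)

def mid (p q : ℕ → ℕ) (j s : ℕ) : Prop := 2 * p j < s ∧ s < 2 * q j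

def ovl (p q : ℕ → ℕ) (j : ℕ) : Prop := p j < q (j + 1) ∧ p j < q j ∧ p (j + 1) < q (j + 1)

def nodesc (p q : ℕ → ℕ) (j x y : ℕ) : Prop :=
  ¬ (x = 2 * p j ∧ y = 2 * q (j + 1) ∧ ovl p q j) ∧
  ¬ (mid p q j x ∧ y = 2 * q (j + 1) ∧ mid p q (j + 1) x) ∧
  ¬ (x = 2 * p j ∧ mid p q (j + 1) y ∧ mid p q j y)

def Valid (p q : ℕ → ℕ) (c s : ℕ) (f : ℕ → ℕ) : Prop :=
  (∀ i, i < c → mid p q i (f i) → sgt (f i) s) ∧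
  (∀ i i', i < i' → i' < c → mid p q i (f i) → mid p q i' (f i') → sgt (f i) (f i')) ∧
  (∀ i, i + 1 < c → nodesc p q i (f i) (f (i + 1)))

theorem sgt_trans {a b c : ℕ} (h : sgt a b) (h' : sgt b c) : sgt a c := by
  unfold sgt at *; omega

theorem valid_congr {p q : ℕ → ℕ} {c s : ℕ} {f g : ℕ → ℕ} (h : ∀ i, i < c → f i = g i)
    (hf : Valid p q c s f) : Valid p q c s g := by
  obtain ⟨h1, h2, h3⟩ := hf
  refine ⟨fun i hi => ?_, fun i i' hi hi' => ?_, fun i hi => ?_⟩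
  · rw [← h i hi]; exact h1 i hi
  · rw [← h i (by omega), ← h i' hi']; exact h2 i i' hi hi'
  · rw [← h i (by omega), ← h (i+1) hi]; exact h3 i hi

theorem valid_upd {p q : ℕ → ℕ} {c s x : ℕ} {f : ℕ → ℕ} :
    Valid p q c s (Function.update f c x) ↔ Valid p q c s f :=
  ⟨valid_congr (fun i hi => Function.update_of_ne (by omega) _ _),
   valid_congr (fun i hi => (Function.update_of_ne (by omega) _ _).symm)⟩

/-- appending a pure letter -/
theorem valid_succ_pure {p q : ℕ → ℕ} {c s : ℕ} {f : ℕ → ℕ} (hm : ¬ mid p q c (f c)) :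
    Valid p q (c + 1) s f ↔ Valid p q c s f ∧ ∀ c', c = c' + 1 → nodesc p q c' (f c') (f c) := by
  constructor
  · rintro ⟨h1, h2, h3⟩
    refine ⟨⟨fun i hi => h1 i (by omega), fun i i' hi hi' => h2 i i' hi (by omega),
      fun i hi => h3 i (by omega)⟩, ?_⟩
    rintro c' rfl; exact h3 c' (by omega)
  · rintro ⟨⟨h1, h2, h3⟩, h4⟩
    refine ⟨fun i hi hh => ?_, fun i i' hi hi' ha hb => ?_, fun i hi => ?_⟩
    · rcases Nat.lt_succ_iff_lt_or_eq.1 hi with h | rfl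
      · exact h1 i h hh
      · exact absurd hh hm
    · rcases Nat.lt_succ_iff_lt_or_eq.1 hi' with h | rfl
      · exact h2 i i' hi h ha hb
      · exact absurd hb hm
    · rcases Nat.lt_succ_iff_lt_or_eq.1 hi with h | rfl
      · exact h3 i h
      · exact h4 i rfl

theorem valid_succ_mid {p q : ℕ → ℕ} {c s : ℕ} {f : ℕ → ℕ} (hm : mid p q c (f c)) :
    Valid p q (c + 1) s f ↔ sgt (f c) s ∧ Valid p q c (f c) f ∧
      ∀ c', c = c' + 1 → nodesc p q c' (f c') (f c) := by
  constructor
  · rintro ⟨h1, h2, h3⟩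
    refine ⟨h1 c (by omega) hm, ⟨fun i hi hh => h2 i c hi (by omega) hh hm,
      fun i i' hi hi' => h2 i i' hi (by omega),
      fun i hi => h3 i (by omega)⟩, ?_⟩
    rintro c' rfl; exact h3 c' (by omega)
  · rintro ⟨h0, ⟨h1, h2, h3⟩, h4⟩
    refine ⟨fun i hi hh => ?_, fun i i' hi hi' ha hb => ?_, fun i hi => ?_⟩
    · rcases Nat.lt_succ_iff_lt_or_eq.1 hi with h | rfl
      · exact sgt_trans (h1 i h hh) h0
      · exact h0
    · rcases Nat.lt_succ_iff_lt_or_eq.1 hi' with h | rfl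
      · exact h2 i i' hi h ha hb
      · exact h1 i hi ha
    · rcases Nat.lt_succ_iff_lt_or_eq.1 hi with h | rfl
      · exact h3 i h
      · exact h4 i rfl

section
variable {R : Type*} [CommRing R] (p q : ℕ → ℕ) (cw : ℕ → ℕ → R)

noncomputable def NN (c s : ℕ) : R :=
  ∑ f ∈ Wd p q c, if Valid p q c s f then ∏ i ∈ Finset.range c, cw i (f i) else 0

noncomputable def LL (c s x : ℕ) : R :=
  ∑ f ∈ Wd p q c, if Valid p q (c + 1) s (Function.update f c x)
    then ∏ i ∈ Finset.range c, cw i (f i) else 0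

theorem prod_upd (c x : ℕ) (f : ℕ → ℕ) :
    ∏ i ∈ Finset.range c, cw i (Function.update f c x i) = ∏ i ∈ Finset.range c, cw i (f i) := by
  refine Finset.prod_congr rfl fun i hi => ?_
  rw [Function.update_of_ne (by have := Finset.mem_range.1 hi; omega)]

theorem NN_zero (s : ℕ) : NN p q cw 0 s = 1 := by
  simp [NN, Wd, Valid]

theorem NN_succ (c s : ℕ) : NN p q cw (c + 1) s =
    ∑ x ∈ Finset.Icc (2 * p c) (2 * q c), cw c x * LL p q cw c s x := by
  rw [NN, sum_Wd_succ]
  refine Finset.sum_congr rfl fun x _ => ?_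
  rw [LL, Finset.mul_sum]
  refine Finset.sum_congr rfl fun f _ => ?_
  rw [Finset.prod_range_succ, prod_upd]
  split_ifs <;> simp [mul_comm]

theorem LL_two (c s : ℕ) : LL p q cw c s (2 * p c) = NN p q cw c s := by
  refine Finset.sum_congr rfl fun f _ => ?_
  have : Valid p q (c + 1) s (Function.update f c (2 * p c)) ↔ Valid p q c s f := by
    rw [valid_succ_pure (by simp [mid]), valid_upd]
    refine and_iff_left ?_
    rintro c' rfl
    simp only [Function.update_self, nodesc, mid, ovl]
    omega
  simp only [this]

/-- appending letter `x` in general, recursion on the preceding letter -/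
theorem LL_succ_pure (c s x : ℕ) (hm : ¬ mid p q (c + 1) x) : LL p q cw (c + 1) s x =
    ∑ y ∈ Finset.Icc (2 * p c) (2 * q c),
      if nodesc p q c y x then cw c y * LL p q cw c s y else 0 := by
  rw [LL, sum_Wd_succ]
  refine Finset.sum_congr rfl fun y _ => ?_
  by_cases hd : nodesc p q c y x
  · rw [if_pos hd, LL, Finset.mul_sum]
    refine Finset.sum_congr rfl fun f _ => ?_
    rw [Finset.prod_range_succ, prod_upd]
    have : Valid p q (c + 1 + 1) s (Function.update (Function.update f c y) (c + 1) x) ↔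
        Valid p q (c + 1) s (Function.update f c y) := by
      rw [valid_succ_pure (by simpa using hm), valid_upd]
      refine and_iff_left ?_
      intro c' hc
      obtain rfl : c = c' := by omega
      simpa using hd
    simp only [this]
    split_ifs <;> simp [mul_comm]
  · rw [if_neg hd]
    refine Finset.sum_eq_zero fun f _ => if_neg ?_
    rw [valid_succ_pure (by simpa using hm)]
    rintro ⟨_, h⟩
    apply hd
    simpa using h c rfl

theorem LL_succ_mid (c s x : ℕ) (hm : mid p q (c + 1) x) (hs : sgt x s) :
    LL p q cw (c + 1) s x =
    ∑ y ∈ Finset.Icc (2 * p c) (2 * q c),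
      if nodesc p q c y x then cw c y * LL p q cw c x y else 0 := by
  rw [LL, sum_Wd_succ]
  refine Finset.sum_congr rfl fun y _ => ?_
  by_cases hd : nodesc p q c y x
  · rw [if_pos hd, LL, Finset.mul_sum]
    refine Finset.sum_congr rfl fun f _ => ?_
    rw [Finset.prod_range_succ, prod_upd]
    have : Valid p q (c + 1 + 1) s (Function.update (Function.update f c y) (c + 1) x) ↔
        Valid p q (c + 1) x (Function.update f c y) := by
      rw [valid_succ_mid (by simpa using hm), valid_upd]
      simp only [Function.update_self]
      constructor
      · exact fun h => h.2.1
      · refine fun h => ⟨hs, h, ?_⟩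
        intro c' hc
        obtain rfl : c = c' := by omega
        simpa using hd
    simp only [this]
    split_ifs <;> simp [mul_comm]
  · rw [if_neg hd]
    refine Finset.sum_eq_zero fun f _ => if_neg ?_
    rw [valid_succ_mid (by simpa using hm)]
    rintro ⟨_, _, h⟩
    apply hd
    simpa using h c rfl

theorem LL_mid_not (c s x : ℕ) (hm : mid p q c x) (hs : ¬ sgt x s) :
    LL p q cw c s x = 0 := by
  refine Finset.sum_eq_zero fun f _ => if_neg ?_
  rw [valid_succ_mid (by simpa using hm)]
  simp only [Function.update_self]
  tauto

theorem LL_zero (s x : ℕ) (hs : mid p q 0 x → sgt x s) : LL p q cw 0 s x = 1 := by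
  have hV : ∀ f, Valid p q (0 + 1) s (Function.update f 0 x) := by
    intro f
    refine ⟨fun i hi => ?_, fun i i' hi hi' => by omega, fun i hi => by omega⟩
    obtain rfl : i = 0 := by omega
    simpa using hs
  simp [LL, Wd, hV]

noncomputable def Bt : ℕ → ℕ → R
  | 0, _ => 0
  | c + 1, x => if mid p q c x then cw c (2 * p c) * NN p q cw c x else 0

theorem LL_mid (c s x : ℕ) (hm : mid p q c x) (hs : sgt x s) :
    LL p q cw c s x = NN p q cw c x - Bt p q cw c x := by
  cases c with
  | zero => rw [LL_zero _ _ _ _ _ (fun _ => hs), NN_zero]; simp [Bt]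
  | succ c =>
    rw [LL_succ_mid _ _ _ _ _ _ hm hs, NN_succ, eq_sub_iff_add_eq]
    have : Bt p q cw (c + 1) x = ∑ y ∈ Finset.Icc (2 * p c) (2 * q c),
        if y = 2 * p c then (if mid p q c x then cw c y * LL p q cw c x y else 0) else 0 := by
      rw [Finset.sum_ite_eq', Bt, LL_two]
      by_cases h : mid p q c x
      · rw [if_pos (Finset.mem_Icc.2 (by unfold mid at h; omega))]
      · simp [h]
    rw [this, ← Finset.sum_add_distrib]
    refine Finset.sum_congr rfl fun y _ => ?_
    by_cases h1 : y = 2 * p c <;> by_cases h2 : mid p q c x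
    · have : ¬ nodesc p q c y x := fun h => h.2.2 ⟨h1, hm, h2⟩
      simp [h1, h2] at this ⊢; simp [this]
    all_goals
      have : nodesc p q c y x := by
        unfold nodesc; unfold mid at *; omega
      simp [h1, h2] at this ⊢; try simp [this]

theorem Icc_split {M : Type*} [AddCommMonoid M] {a b : ℕ} (h : a < b) (F : ℕ → M) :
    ∑ x ∈ Finset.Icc a b, F x = F a + ∑ x ∈ Finset.Ioo a b, F x + F b := by
  rw [← Finset.add_sum_Ioc_eq_sum_Icc h.le, ← Finset.sum_Ioo_add_eq_sum_Ioc h, add_assoc]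

theorem LL_one (c s : ℕ) (hc : p (c + 1) < q (c + 1)) :
    LL p q cw (c + 1) s (2 * q (c + 1)) = NN p q cw (c + 1) s
      - (if ovl p q c then cw c (2 * p c) * NN p q cw c s else 0)
      - ∑ x ∈ Finset.Ioo (2 * p c) (2 * q c), if mid p q (c + 1) x ∧ sgt x s then
          cw c x * (NN p q cw c x - Bt p q cw c x) else 0 := by
  rw [LL_succ_pure _ _ _ _ _ _ (by unfold mid; omega), NN_succ]
  by_cases hE : p c < q c
  · rw [Icc_split (by omega), Icc_split (by omega), LL_two]
    have h1 : (if nodesc p q c (2 * p c) (2 * q (c + 1)) then cw c (2 * p c) * NN p q cw c s else 0)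
        = cw c (2 * p c) * NN p q cw c s -
          (if ovl p q c then cw c (2 * p c) * NN p q cw c s else 0) := by
      have : nodesc p q c (2 * p c) (2 * q (c + 1)) ↔ ¬ ovl p q c := by
        unfold nodesc mid; simp
      by_cases h : ovl p q c <;> simp [this, h]
    have h2 : nodesc p q c (2 * q c) (2 * q (c + 1)) := by
      unfold nodesc mid; omega
    have h3 : ∑ x ∈ Finset.Ioo (2 * p c) (2 * q c),
        (if nodesc p q c x (2 * q (c + 1)) then cw c x * LL p q cw c s x else 0) =
        ∑ x ∈ Finset.Ioo (2 * p c) (2 * q c), cw c x * LL p q cw c s x -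
        ∑ x ∈ Finset.Ioo (2 * p c) (2 * q c), if mid p q (c + 1) x ∧ sgt x s then
          cw c x * (NN p q cw c x - Bt p q cw c x) else 0 := by
      rw [← Finset.sum_sub_distrib]
      refine Finset.sum_congr rfl fun x hx => ?_
      have hm : mid p q c x := by simpa [mid] using hx
      have : nodesc p q c x (2 * q (c + 1)) ↔ ¬ mid p q (c + 1) x := by
        unfold nodesc mid at *; omega
      by_cases h : mid p q (c + 1) x <;> by_cases hs : sgt x s
      · simp [this, h, hs, LL_mid p q cw c s x hm hs]
      · simp [this, h, hs, LL_mid_not p q cw c s x hm hs]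
      · simp [this, h, hs]
      · simp [this, h, hs]
    rw [h1, if_pos h2, h3]
    ring
  · have h1 : ¬ ovl p q c := fun h => hE h.2.1
    rw [if_neg h1, Finset.Ioo_eq_empty (by omega), Finset.sum_empty, sub_zero, sub_zero]
    refine Finset.sum_congr rfl fun x hx => if_pos ?_
    unfold nodesc mid; refine ⟨fun h => h1 h.2.2, ?_, ?_⟩ <;> omega

theorem NN_sym (τ : R →+* R) (X1 X2 : R) (u : ℕ → R) (h12 : τ X1 = X2) (h21 : τ X2 = X1)
    (hu : ∀ j, τ (u j) = u j)
    (hpq : ∀ j, p j ≤ q j)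
    (hE : ∀ j, p j = q j → τ (cw j (2 * p j)) = cw j (2 * p j))
    (h1 : ∀ j, p j < q j → cw j (2 * q j) = X1 * u j)
    (h2 : ∀ j, p j < q j → cw j (2 * p j) = X2 * u j)
    (hv : ∀ j s, mid p q j s → τ (cw j s) = cw j s)
    (ht : ∀ j s, mid p q j s → mid p q (j + 1) s → cw (j + 1) s * u j = cw j s * u (j + 1)) :
    ∀ c s, τ (NN p q cw c s) = NN p q cw c s := by
  intro c
  induction c using Nat.strong_induction_on with
  | _ c ih =>
  intro s
  cases c with
  | zero => simp [NN_zero]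
  | succ c =>
  by_cases hc : p c = q c
  · rw [NN_succ, ← hc, Finset.Icc_self, Finset.sum_singleton, LL_two, map_mul, hE c hc,
      ih c (by omega)]
  have hc' : p c < q c := lt_of_le_of_ne (hpq c) hc
  have hmid : ∑ x ∈ Finset.Ioo (2 * p c) (2 * q c), cw c x * LL p q cw c s x =
      ∑ x ∈ Finset.Ioo (2 * p c) (2 * q c),
        if sgt x s then cw c x * (NN p q cw c x - Bt p q cw c x) else 0 := by
    refine Finset.sum_congr rfl fun x hx => ?_
    have hm : mid p q c x := by simpa [mid] using hx
    by_cases hs : sgt x s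
    · rw [if_pos hs, LL_mid p q cw c s x hm hs]
    · rw [if_neg hs, LL_mid_not p q cw c s x hm hs, mul_zero]
  rw [NN_succ, Icc_split (by omega), LL_two, hmid, h1 c hc', h2 c hc']
  cases c with
  | zero =>
    rw [LL_zero _ _ _ _ _ (by unfold mid; omega), NN_zero]
    simp only [map_add, map_mul, map_sum, h12, h21, hu, map_one]
    have : ∀ x ∈ Finset.Ioo (2 * p 0) (2 * q 0),
        τ (if sgt x s then cw 0 x * (NN p q cw 0 x - Bt p q cw 0 x) else 0) =
        (if sgt x s then cw 0 x * (NN p q cw 0 x - Bt p q cw 0 x) else 0) := by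
      intro x hx
      have hm : mid p q 0 x := by simpa [mid] using hx
      split_ifs <;> simp [NN_zero, Bt, hv _ _ hm]
    rw [Finset.sum_congr rfl this]
    ring
  | succ c =>
    have hS : X1 * u (c + 1) * (∑ x ∈ Finset.Ioo (2 * p c) (2 * q c),
        if mid p q (c + 1) x ∧ sgt x s then
          cw c x * (NN p q cw c x - Bt p q cw c x) else 0) =
        ∑ x ∈ Finset.Ioo (2 * p (c + 1)) (2 * q (c + 1)),
        if mid p q c x ∧ sgt x s then
          X1 * u (c + 1) * (cw c x * (NN p q cw c x - Bt p q cw c x)) else 0 := by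
      rw [Finset.mul_sum]
      simp only [mul_ite, mul_zero]
      rw [← Finset.sum_filter, ← Finset.sum_filter]
      refine Finset.sum_congr ?_ fun _ _ => rfl
      ext x
      rw [Finset.mem_filter, Finset.mem_filter, Finset.mem_Ioo, Finset.mem_Ioo]
      unfold mid
      tauto
    have key : X2 * u (c + 1) * NN p q cw (c + 1) s +
        (∑ x ∈ Finset.Ioo (2 * p (c + 1)) (2 * q (c + 1)),
          if sgt x s then cw (c + 1) x * (NN p q cw (c + 1) x - Bt p q cw (c + 1) x) else 0) +
        X1 * u (c + 1) * LL p q cw (c + 1) s (2 * q (c + 1)) =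
        (X1 + X2) * u (c + 1) * NN p q cw (c + 1) s
        - (if ovl p q c then X1 * X2 * u (c + 1) * u c * NN p q cw c s else 0)
        + ∑ x ∈ Finset.Ioo (2 * p (c + 1)) (2 * q (c + 1)),
          if sgt x s then (cw (c + 1) x * NN p q cw (c + 1) x -
            if mid p q c x then cw c x * u (c + 1) * ((X1 + X2) * NN p q cw c x
              - X1 * Bt p q cw c x) else 0) else 0 := by
      rw [LL_one p q cw c s hc', mul_sub, mul_sub, hS]
      have e : ∑ x ∈ Finset.Ioo (2 * p (c + 1)) (2 * q (c + 1)),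
          (if sgt x s then (cw (c + 1) x * NN p q cw (c + 1) x -
            if mid p q c x then cw c x * u (c + 1) * ((X1 + X2) * NN p q cw c x
              - X1 * Bt p q cw c x) else 0) else 0) =
          (∑ x ∈ Finset.Ioo (2 * p (c + 1)) (2 * q (c + 1)),
          if sgt x s then cw (c + 1) x * (NN p q cw (c + 1) x - Bt p q cw (c + 1) x) else 0) -
          ∑ x ∈ Finset.Ioo (2 * p (c + 1)) (2 * q (c + 1)),
          if mid p q c x ∧ sgt x s then
          X1 * u (c + 1) * (cw c x * (NN p q cw c x - Bt p q cw c x)) else 0 := by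
        rw [← Finset.sum_sub_distrib]
        refine Finset.sum_congr rfl fun x hx => ?_
        have hm : mid p q (c + 1) x := by simpa [mid] using hx
        by_cases hs : sgt x s <;> by_cases hm' : mid p q c x
        · have hEc : p c < q c := by unfold mid at hm'; omega
          have := ht c x hm' hm
          simp only [hs, hm', and_self, if_true]
          rw [show Bt p q cw (c + 1) x = cw c (2 * p c) * NN p q cw c x from if_pos hm', h2 c hEc]
          linear_combination X2 * NN p q cw c x * this
        · simp [hs, hm', Bt]
        · simp [hs]
        · simp [hs]
      rw [e]
      by_cases ho : ovl p q c
      · rw [if_pos ho, if_pos ho, h2 c ho.2.1]; ring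
      · rw [if_neg ho, if_neg ho]; ring
    rw [key]
    have hsum : ∀ x ∈ Finset.Ioo (2 * p (c + 1)) (2 * q (c + 1)),
        τ (if sgt x s then (cw (c + 1) x * NN p q cw (c + 1) x -
            if mid p q c x then cw c x * u (c + 1) * ((X1 + X2) * NN p q cw c x
              - X1 * Bt p q cw c x) else 0) else 0) =
        (if sgt x s then (cw (c + 1) x * NN p q cw (c + 1) x -
            if mid p q c x then cw c x * u (c + 1) * ((X1 + X2) * NN p q cw c x
              - X1 * Bt p q cw c x) else 0) else 0) := by
      intro x hx
      have hm : mid p q (c + 1) x := by simpa [mid] using hx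
      have hB : τ (X1 * Bt p q cw c x) = X1 * Bt p q cw c x := by
        cases c with
        | zero => simp [Bt]
        | succ c =>
          rw [Bt]
          split_ifs with h
          · rw [h2 c (by unfold mid at h; omega)]
            simp only [map_mul, h12, h21, hu, ih c (by omega)]
            ring
          · simp
      by_cases hs : sgt x s
      · by_cases hm' : mid p q c x
        · simp only [hs, hm', if_true]
          rw [map_sub, map_mul, map_mul, map_sub, hB]
          simp only [map_mul, map_add, h12, h21, hu, hv _ _ hm, hv _ _ hm', ih c (by omega),
            ih (c + 1) (by omega)]
          ring
        · simp [hs, hm', hv _ _ hm, ih (c + 1) (by omega)]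
      · simp [hs]
    rw [map_add, map_sum, Finset.sum_congr rfl hsum, map_sub]
    have ho : τ (if ovl p q c then X1 * X2 * u (c + 1) * u c * NN p q cw c s else 0) =
        (if ovl p q c then X1 * X2 * u (c + 1) * u c * NN p q cw c s else 0) := by
      split_ifs
      · simp only [map_mul, h12, h21, hu, ih c (by omega)]; ring
      · simp
    rw [ho]
    simp only [map_mul, map_add, h12, h21, hu, ih (c + 1) (by omega)]
    ring

end
end HG
namespace HG

theorem part_anti {f : ℕ → ℕ} (h : IsPartitionFun f) : Antitone f := antitone_nat_of_succ_le h.1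

section
variable {lam mu : ℕ → ℕ} (hlam : IsPartitionFun lam) (hmu : IsPartitionFun mu)

theorem le_trans_ne {A B C : Finset ℕ} (h1 : FinsetLE A B) (h2 : FinsetLE B C)
    (hB : B.Nonempty) : FinsetLE A C := by
  intro x hx z hz
  obtain ⟨y, hy⟩ := hB
  exact (h1 x hx y hy).trans (h2 y hy z hz)

theorem row_le {T : ℕ → ℕ → Finset ℕ} (hT : IsSVRPP lam mu T) {r j : ℕ} (d : ℕ) :
    InShape lam mu r j → InShape lam mu r (j + d + 1) → FinsetLE (T r j) (T r (j + d + 1)) := by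
  obtain ⟨-, hne, -, hr, -⟩ := hT
  induction d with
  | zero => exact fun h1 h2 => hr r j h1 h2
  | succ d ih =>
    intro h1 h2
    have h3 : InShape lam mu r (j + d + 1) := by unfold InShape at *; omega
    exact le_trans_ne (ih h1 h3) (hr r _ h3 h2) (hne r _ h3)

theorem row_le' {T : ℕ → ℕ → Finset ℕ} (hT : IsSVRPP lam mu T) {r j j' : ℕ} (h : j < j')
    (h1 : InShape lam mu r j) (h2 : InShape lam mu r j') : FinsetLE (T r j) (T r j') := by
  obtain ⟨d, rfl⟩ := Nat.exists_eq_add_of_lt h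
  exact row_le hT d h1 h2

include hlam hmu in
theorem shape_mid {r r' r'' j j' j'' : ℕ} (h1 : InShape lam mu r j) (h2 : InShape lam mu r'' j'')
    (ha : r ≤ r') (hb : r' ≤ r'') (hc : j ≤ j') (hd : j' ≤ j'') : InShape lam mu r' j' := by
  have := part_anti hlam hb
  have := part_anti hmu ha
  unfold InShape at *; omega

include hlam hmu in
theorem col_le' {T : ℕ → ℕ → Finset ℕ} (hT : IsSVRPP lam mu T) {r r' j : ℕ} (h : r < r')
    (h1 : InShape lam mu r j) (h2 : InShape lam mu r' j) : FinsetLE (T r j) (T r' j) := by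
  obtain ⟨d, rfl⟩ := Nat.exists_eq_add_of_lt h
  have hT' := hT
  obtain ⟨-, hne, -, -, hc⟩ := hT'
  clear h
  induction d with
  | zero => exact hc r j h1 h2
  | succ d ih =>
    have h3 : InShape lam mu (r + d + 1) j :=
      shape_mid hlam hmu h1 h2 (by omega) (by omega) le_rfl le_rfl
    exact le_trans_ne (ih h3) (hc _ _ h3 h2) (hne _ _ h3)

def DD (a : ℕ) (T : ℕ → ℕ → Finset ℕ) (r j : ℕ) : Prop := a ∈ T r j ∨ a + 1 ∈ T r j

theorem sandwich {a : ℕ} {A B C : Finset ℕ} (h1 : FinsetLE A B) (h2 : FinsetLE B C)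
    (hB : B.Nonempty) (hA : a ∈ A ∨ a + 1 ∈ A) (hC : a ∈ C ∨ a + 1 ∈ C) :
    a ∈ B ∨ a + 1 ∈ B := by
  obtain ⟨y, hy⟩ := hB
  have h3 : a ≤ y := by
    rcases hA with h | h
    · exact h1 _ h y hy
    · have := h1 _ h y hy; omega
  have h4 : y ≤ a + 1 := by
    rcases hC with h | h
    · have := h2 y hy _ h; omega
    · exact h2 y hy _ h
  rcases (by omega : y = a ∨ y = a + 1) with rfl | rfl
  · exact Or.inl hy
  · exact Or.inr hy

theorem DD_shape {T : ℕ → ℕ → Finset ℕ} (hT : IsSVRPP lam mu T) {a r j : ℕ} (h : DD a T r j) :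
    InShape lam mu r j := by
  by_contra hn
  have := hT.1 r j hn
  simp [DD, this] at h

include hlam hmu in
theorem DD_col {T : ℕ → ℕ → Finset ℕ} (hT : IsSVRPP lam mu T) {a r r' r'' j : ℕ}
    (h1 : DD a T r j) (h2 : DD a T r'' j) (ha : r ≤ r') (hb : r' ≤ r'') : DD a T r' j := by
  have s1 := DD_shape hT h1
  have s2 := DD_shape hT h2
  have s3 := shape_mid hlam hmu s1 s2 ha hb le_rfl le_rfl
  rcases ha.eq_or_lt with rfl | ha
  · exact h1
  rcases hb.eq_or_lt with rfl | hb
  · exact h2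
  exact sandwich (col_le' hlam hmu hT ha s1 s3) (col_le' hlam hmu hT hb s3 s2)
    (hT.2.1 _ _ s3) h1 h2

include hlam hmu in
theorem DD_corner {T : ℕ → ℕ → Finset ℕ} (hT : IsSVRPP lam mu T) {a r r' i j : ℕ}
    (hij : i < j) (hr : r ≤ r') (h1 : DD a T r i) (h2 : DD a T r' j) :
    DD a T r j ∧ DD a T r' i := by
  rcases hr.eq_or_lt with rfl | hr
  · exact ⟨h2, h1⟩
  have s1 := DD_shape hT h1
  have s2 := DD_shape hT h2
  have s3 := shape_mid hlam hmu s1 s2 le_rfl hr.le hij.le le_rfl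
  have s4 := shape_mid hlam hmu s1 s2 hr.le le_rfl le_rfl hij.le
  exact ⟨sandwich (row_le' hT hij s1 s3) (col_le' hlam hmu hT hr s3 s2) (hT.2.1 _ _ s3) h1 h2,
    sandwich (col_le' hlam hmu hT hr s1 s4) (row_le' hT hij s4 s2) (hT.2.1 _ _ s4) h1 h2⟩

theorem exists_pq (P : ℕ → Prop) (R : ℕ) (hR : ∀ r, P r → r < R)
    (hc : ∀ r r' r'', P r → P r'' → r ≤ r' → r' ≤ r'' → P r') :
    ∃ p q, p ≤ q ∧ ∀ r, P r ↔ p ≤ r ∧ r < q := by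
  by_cases h : ∃ r, P r
  · have hq : ∃ q, ∀ r, P r → r < q := ⟨R, hR⟩
    have h1 := Nat.find_spec h
    have h2 := Nat.find_spec hq
    refine ⟨Nat.find h, Nat.find hq, (h2 _ h1).le, fun r => ⟨fun hr => ⟨Nat.find_min' h hr, h2 _ hr⟩, ?_⟩⟩
    rintro ⟨h3, h4⟩
    have h5 := Nat.find_min hq h4
    push Not at h5
    obtain ⟨r'', h6, h7⟩ := h5
    exact hc _ _ _ h1 h6 h3 h7
  · push Not at h
    exact ⟨0, 0, le_rfl, fun r => by simp [h r]⟩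

/-- The data of columns. -/
def PQ (a : ℕ) (T : ℕ → ℕ → Finset ℕ) (p q : ℕ → ℕ) : Prop :=
  (∀ j, p j ≤ q j) ∧ (∀ r j, DD a T r j ↔ p j ≤ r ∧ r < q j) ∧
  (∀ i j, i < j → p i < q i → p j < q j → p j ≤ p i ∧ q j ≤ q i)

include hlam hmu in
theorem exists_PQ {T : ℕ → ℕ → Finset ℕ} (hT : IsSVRPP lam mu T) (a : ℕ) :
    ∃ p q, PQ a T p q := by
  obtain ⟨R, hR⟩ := hlam.2
  have : ∀ j, ∃ p q, p ≤ q ∧ ∀ r, DD a T r j ↔ p ≤ r ∧ r < q := by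
    intro j
    refine exists_pq _ R (fun r hr => ?_) (fun r r' r'' h1 h2 ha hb => DD_col hlam hmu hT h1 h2 ha hb)
    have := DD_shape hT hr
    by_contra hn
    have := hR r (by omega)
    unfold InShape at *; omega
  choose p q h1 h2 using this
  refine ⟨p, q, h1, fun r j => h2 j r, ?_⟩
  intro i j hij hi hj
  constructor
  · by_contra hn
    have := (DD_corner hlam hmu hT hij (by omega) ((h2 i (p i)).2 ⟨le_rfl, hi⟩)
      ((h2 j (p j)).2 ⟨le_rfl, hj⟩)).1
    rw [h2] at this
    omega
  · by_contra hn
    have := (DD_corner hlam hmu hT hij (by omega) ((h2 i (q i - 1)).2 (by omega))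
      ((h2 j (q j - 1)).2 (by omega))).2
    rw [h2] at this
    omega

noncomputable def fil (a : ℕ) (T : ℕ → ℕ → Finset ℕ) (j s r : ℕ) : Finset ℕ :=
  (T r j \ {a, a + 1}) ∪ (if DD a T r j then
    (if 2 * r + 1 ≤ s then {a} else ∅) ∪ (if s ≤ 2 * r + 1 then {a + 1} else ∅) else ∅)

theorem mem_fil {a : ℕ} {T : ℕ → ℕ → Finset ℕ} {j s r x : ℕ} : x ∈ fil a T j s r ↔
    (x ∈ T r j ∧ x ≠ a ∧ x ≠ a + 1) ∨
    (DD a T r j ∧ ((x = a ∧ 2 * r + 1 ≤ s) ∨ (x = a + 1 ∧ s ≤ 2 * r + 1))) := by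
  unfold fil
  split_ifs <;> simp <;> tauto

def Sim (a : ℕ) (T T' : ℕ → ℕ → Finset ℕ) : Prop :=
  ∀ r j, (∀ x, x ≠ a → x ≠ a + 1 → (x ∈ T r j ↔ x ∈ T' r j)) ∧ (DD a T r j ↔ DD a T' r j)

theorem Sim.symm {a : ℕ} {T T' : ℕ → ℕ → Finset ℕ} (h : Sim a T T') : Sim a T' T :=
  fun r j => ⟨fun x h1 h2 => ((h r j).1 x h1 h2).symm, (h r j).2.symm⟩

theorem fil_sim (a : ℕ) (T : ℕ → ℕ → Finset ℕ) (f : ℕ → ℕ) :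
    Sim a (fun r j => fil a T j (f j) r) T := by
  intro r j
  refine ⟨fun x h1 h2 => ?_, ?_⟩
  · simp only [mem_fil]; tauto
  · simp only [DD, mem_fil]
    by_cases h : 2 * r + 1 ≤ f j
    · have : a ≠ a + 1 := by omega
      tauto
    · have : f j ≤ 2 * r + 1 := by omega
      have : a + 1 ≠ a := by omega
      tauto

theorem fil_le {a : ℕ} {T : ℕ → ℕ → Finset ℕ} {r j s r' j' s' : ℕ}
    (h : FinsetLE (T r j) (T r' j'))
    (hns : DD a T r j → DD a T r' j' → s ≤ 2 * r + 1 → 2 * r' + 1 ≤ s' → False) :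
    FinsetLE (fil a T j s r) (fil a T j' s' r') := by
  intro x hx y hy
  rw [mem_fil] at hx hy
  rcases hx with ⟨hx, hxa, hxb⟩ | ⟨hD, hx⟩ <;> rcases hy with ⟨hy, hya, hyb⟩ | ⟨hD', hy⟩
  · exact h x hx y hy
  · rcases hD' with h' | h' <;> have := h x hx _ h' <;> omega
  · rcases hD with h' | h' <;> have := h _ h' y hy <;> omega
  · have := hns hD hD'
    by_contra hn
    apply this <;> omega

theorem fil_mem {a n : ℕ} (ha : 1 ≤ a) (han : a + 1 ≤ n) {T : ℕ → ℕ → Finset ℕ}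
    (hT : IsSVRPPn lam mu n T) {p q : ℕ → ℕ} (hpq : PQ a T p q)
    {c : ℕ} (hc : ∀ r j, InShape lam mu r j → j < c)
    {f : ℕ → ℕ} (hf : Valid p q c 0 f) (hfW : f ∈ Wd p q c) :
    IsSVRPPn lam mu n (fun r j => fil a T j (f j) r) := by
  obtain ⟨hT, hTn⟩ := hT
  obtain ⟨h1, h2, h3, h4, h5⟩ := hT
  have hT : IsSVRPP lam mu T := ⟨h1, h2, h3, h4, h5⟩
  refine ⟨⟨?_, ?_, ?_, ?_, ?_⟩, ?_⟩
  · intro i j hij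
    have e := h1 i j hij
    ext x
    simp [mem_fil, e, DD]
  · intro i j hij
    obtain ⟨x, hx⟩ := h2 i j hij
    have hs := fil_sim a T f i j
    by_cases hD : DD a T i j
    · rcases hs.2.2 hD with h | h
      · exact ⟨_, h⟩
      · exact ⟨_, h⟩
    · refine ⟨x, (hs.1 x ?_ ?_).2 hx⟩
      · rintro rfl; exact hD (Or.inl hx)
      · rintro rfl; exact hD (Or.inr hx)
  · intro i j x hx
    simp only [mem_fil] at hx
    rcases hx with ⟨hx, -⟩ | ⟨_, hx⟩
    · exact h3 i j x hx
    · omega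
  · intro i j hij hij'
    refine fil_le (h4 i j hij hij') fun hD hD' hs hs' => ?_
    obtain ⟨-, hV2, hV3⟩ := hf
    rw [hpq.2.1] at hD hD'
    have hm := hpq.2.2 j (j + 1) (by omega) (by omega) (by omega)
    have hcj := hc _ _ hij'
    have hV2 := hV2 j (j + 1) (by omega) hcj
    have hV3 := hV3 j hcj
    have hr := ((mem_Wd p q c f).1 hfW).1 j (by omega)
    have hr' := ((mem_Wd p q c f).1 hfW).1 (j + 1) (by omega)
    unfold nodesc ovl mid sgt at *
    omega
  · intro i j hij hij'
    refine fil_le (h5 i j hij hij') fun hD hD' hs hs' => ?_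
    omega
  · intro i j x hx
    simp only [mem_fil] at hx
    rcases hx with ⟨hx, -⟩ | ⟨_, hx⟩
    · exact hTn i j hx
    · rw [Finset.mem_Icc]; omega

theorem fil_inj {a : ℕ} {T : ℕ → ℕ → Finset ℕ} {p q : ℕ → ℕ} (hpq : PQ a T p q) {c : ℕ}
    {f g : ℕ → ℕ} (hf : f ∈ Wd p q c) (hg : g ∈ Wd p q c)
    (h : (fun r j => fil a T j (f j) r) = fun r j => fil a T j (g j) r) : f = g := by
  rw [mem_Wd] at hf hg
  have key : ∀ f g : ℕ → ℕ, (∀ i, i < c → 2 * p i ≤ f i ∧ f i ≤ 2 * q i) →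
      (∀ i, i < c → 2 * p i ≤ g i ∧ g i ≤ 2 * q i) →
      (fun r j => fil a T j (f j) r) = (fun r j => fil a T j (g j) r) →
      ∀ j, j < c → ¬ f j < g j := by
    intro f g hf hg h j hj hlt
    have hf := hf j hj
    have hg := hg j hj
    have h' : ∀ r x, x ∈ fil a T j (f j) r ↔ x ∈ fil a T j (g j) r := by
      intro r x
      rw [show fil a T j (f j) r = fil a T j (g j) r from congrFun (congrFun h r) j]
    have hD : DD a T (f j / 2) j := by rw [hpq.2.1]; omega
    have ha := h' (f j / 2) a
    have hb := h' (f j / 2) (a + 1)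
    simp only [mem_fil, hD] at ha hb
    have : a ≠ a + 1 := by omega
    rcases Nat.even_or_odd' (f j) with ⟨k, hk | hk⟩
    · have e : f j / 2 = k := by omega
      rw [e] at ha hb
      simp at ha hb
      omega
    · have e : f j / 2 = k := by omega
      rw [e] at ha hb
      simp at ha hb
      omega
  funext j
  by_cases hj : j < c
  · have := key f g hf.1 hg.1 h j hj
    have := key g f hg.1 hf.1 h.symm j hj
    omega
  · rw [hf.2 j (by omega), hg.2 j (by omega)]

theorem exists_seam (A B : ℕ → Prop) (p q : ℕ) (hpq : p ≤ q)
    (h1 : ∀ r, p ≤ r → r < q → A r ∨ B r)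
    (h2 : ∀ r r', p ≤ r → r < r' → r' < q → B r → A r' → False) :
    ∃ s, 2 * p ≤ s ∧ s ≤ 2 * q ∧ ∀ r, p ≤ r → r < q → (A r ↔ 2 * r + 1 ≤ s) ∧ (B r ↔ s ≤ 2 * r + 1) := by
  induction q, hpq using Nat.le_induction with
  | base => exact ⟨2 * p, le_rfl, le_rfl, fun r _ _ => by omega⟩
  | succ q hq ih =>
    obtain ⟨s, hs1, hs2, hs⟩ := ih (fun r h h' => h1 r h (by omega))
      (fun r r' a b c => h2 r r' a b (by omega))
    have hAB := h1 q hq (by omega)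
    have step : ∀ s', 2 * p ≤ s' → s' ≤ 2 * (q + 1) → (∀ r, r < q → p ≤ r →
        (2 * r + 1 ≤ s ↔ 2 * r + 1 ≤ s') ∧ (s ≤ 2 * r + 1 ↔ s' ≤ 2 * r + 1)) →
        (A q ↔ 2 * q + 1 ≤ s') → (B q ↔ s' ≤ 2 * q + 1) →
        ∃ s, 2 * p ≤ s ∧ s ≤ 2 * (q + 1) ∧ ∀ r, p ≤ r → r < q + 1 →
          (A r ↔ 2 * r + 1 ≤ s) ∧ (B r ↔ s ≤ 2 * r + 1) := by
      intro s' ha hb hc hd he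
      refine ⟨s', ha, hb, fun r hr hr' => ?_⟩
      rcases Nat.lt_succ_iff_lt_or_eq.1 hr' with h | rfl
      · rw [(hs r hr h).1, (hs r hr h).2]; exact hc r h hr
      · exact ⟨hd, he⟩
    by_cases hlt : s < 2 * q
    · have hB : B (q - 1) := (hs (q - 1) (by omega) (by omega)).2.2 (by omega)
      have hA : ¬ A q := fun h => h2 (q - 1) q (by omega) (by omega) (by omega) hB h
      have hB' : B q := by tauto
      exact step s hs1 (by omega) (fun r _ _ => ⟨Iff.rfl, Iff.rfl⟩)
        (iff_of_false hA (by omega)) (iff_of_true hB' (by omega))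
    · by_cases hA : A q <;> by_cases hB : B q
      · exact step (2 * q + 1) (by omega) (by omega) (fun r _ _ => by omega)
          (iff_of_true hA (by omega)) (iff_of_true hB (by omega))
      · exact step (2 * q + 2) (by omega) (by omega) (fun r _ _ => by omega)
          (iff_of_true hA (by omega)) (iff_of_false hB (by omega))
      · exact step (2 * q) (by omega) (by omega) (fun r _ _ => by omega)
          (iff_of_false hA (by omega)) (iff_of_true hB (by omega))
      · tauto

include hlam hmu in
theorem fil_surj {a n : ℕ} {T0 T : ℕ → ℕ → Finset ℕ}
    (hT : IsSVRPPn lam mu n T) (hs : Sim a T T0) {p q : ℕ → ℕ} (hpq : PQ a T0 p q)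
    {c : ℕ} (hc : ∀ r j, InShape lam mu r j → j < c) :
    ∃ f, f ∈ Wd p q c ∧ Valid p q c 0 f ∧ (fun r j => fil a T0 j (f j) r) = T := by
  obtain ⟨hT, -⟩ := hT
  have hDD : ∀ r j, DD a T r j ↔ p j ≤ r ∧ r < q j := fun r j => (hs r j).2.trans (hpq.2.1 r j)
  have : ∀ j, ∃ s, 2 * p j ≤ s ∧ s ≤ 2 * q j ∧ ∀ r, p j ≤ r → r < q j →
      (a ∈ T r j ↔ 2 * r + 1 ≤ s) ∧ (a + 1 ∈ T r j ↔ s ≤ 2 * r + 1) := by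
    intro j
    refine exists_seam _ _ _ _ (hpq.1 j) (fun r h h' => (hDD r j).2 ⟨h, h'⟩) ?_
    intro r r' h1 h2 h3 h4 h5
    have := col_le' hlam hmu hT h2 (DD_shape hT (Or.inr h4)) (DD_shape hT (Or.inl h5)) _ h4 _ h5
    omega
  choose g hg1 hg2 hg using this
  have hrow : ∀ r i j, i < j → ¬ (p i ≤ r ∧ r < q i ∧ p j ≤ r ∧ r < q j ∧
      g i ≤ 2 * r + 1 ∧ 2 * r + 1 ≤ g j) := by
    rintro r i j hij ⟨h1, h2, h3, h4, h5, h6⟩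
    have hb := (hg i r h1 h2).2.2 h5
    have ha := (hg j r h3 h4).1.2 h6
    have := row_le' hT hij (DD_shape hT (Or.inr hb)) (DD_shape hT (Or.inl ha)) _ hb _ ha
    omega
  have hfg : ∀ j, j < c → (fun j => if j < c then g j else 0) j = g j := fun j hj => if_pos hj
  refine ⟨fun j => if j < c then g j else 0, ?_, ?_, ?_⟩
  · rw [mem_Wd]
    constructor
    · intro i hi; simp only [if_pos hi]; exact ⟨hg1 i, hg2 i⟩
    · intro i hi; exact if_neg (by omega)
  · refine valid_congr (f := g) (fun i hi => (hfg i hi).symm) ⟨?_, ?_, ?_⟩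
    · intro i _ hm; unfold mid at hm; unfold sgt; omega
    · intro i j hij _ hm hm'
      have := hrow (g i / 2) i j hij
      have := hpq.2.2 i j hij
      unfold mid sgt at *
      omega
    · intro i _
      have hm := hpq.2.2 i (i + 1) (by omega)
      have r1 := hrow (p i) i (i + 1) (by omega)
      have r2 := hrow (g i / 2) i (i + 1) (by omega)
      have r3 := hrow ((g (i + 1) - 1) / 2) i (i + 1) (by omega)
      have := hg1 i
      have := hg2 (i + 1)
      refine ⟨?_, ?_, ?_⟩
      · unfold ovl; omega
      · unfold mid; omega
      · unfold mid; omega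
  · funext r j
    ext x
    simp only [mem_fil]
    by_cases hx : x = a ∨ x = a + 1
    · by_cases hD : DD a T0 r j
      · have hsh := DD_shape hT ((hs r j).2.2 hD)
        rw [if_pos (hc r j hsh)]
        have h' := (hpq.2.1 r j).1 hD
        have h := hg j r h'.1 h'.2
        rcases hx with rfl | rfl
        · rw [h.1]
          simp [hD]
        · rw [h.2]
          simp [hD]
      · have : ¬ DD a T r j := fun h => hD ((hs r j).2.1 h)
        unfold DD at this
        rcases hx with rfl | rfl
        · simp [hD]; tauto
        · simp [hD]; tauto
    · push Not at hx
      rw [(hs r j).1 x hx.1 hx.2]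
      simp [hx]

end
end HG
namespace HG
open MvPolynomial

def cq (lam mu : ℕ → ℕ) (j r : ℕ) (C : ℕ → Finset ℕ) : Prop :=
  InShape lam mu r j ∧ InShape lam mu (r + 1) j ∧
    ∃ m, m ∈ C r ∧ (∀ x ∈ C r, x ≤ m) ∧ m ∈ C (r + 1) ∧ ∀ x ∈ C (r + 1), m ≤ x

noncomputable def colw (lam mu : ℕ → ℕ) (n R j : ℕ) (C : ℕ → Finset ℕ) :
    MvPolynomial (Fin n ⊕ ℕ ⊕ ℕ) ℤ :=
  (∏ v : Fin n, X (Sum.inl v) ^ (if ∃ i, (v : ℕ) + 1 ∈ C i then 1 else 0)) *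
  (∏ r ∈ Finset.range R, X (Sum.inr (Sum.inl r)) ^ (if cq lam mu j r C then 1 else 0)) *
  (∏ r ∈ Finset.range R, X (Sum.inr (Sum.inr r)) ^ ((C r).card - 1))

theorem ncard_eq_sum (S : Set ℕ) (c : ℕ) (h : ∀ j ∈ S, j < c) :
    S.ncard = ∑ j ∈ Finset.range c, if j ∈ S then 1 else 0 := by
  have : S = ↑((Finset.range c).filter (fun j => j ∈ S)) := by
    ext j
    simp only [Finset.coe_filter, Finset.mem_range, Set.mem_ofPred_eq]
    exact ⟨fun hj => ⟨h j hj, hj⟩, fun hj => hj.2⟩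
  conv_lhs => rw [this]
  rw [Set.ncard_coe_finset, Finset.card_filter]

theorem mon_eq {lam mu : ℕ → ℕ} {n R c : ℕ} (hc : ∀ r j, InShape lam mu r j → j < c)
    (hR : ∀ r j, InShape lam mu r j → r < R)
    {T : ℕ → ℕ → Finset ℕ} (hT : IsSVRPP lam mu T) :
    ((∏ v : Fin n, X (Sum.inl v) ^ ircont T ((v : ℕ) + 1)) *
    (∏ᶠ r : ℕ, X (Sum.inr (Sum.inl r)) ^ ceq lam mu T r) *
    (∏ᶠ r : ℕ, X (Sum.inr (Sum.inr r)) ^ exv lam mu T r) : MvPolynomial (Fin n ⊕ ℕ ⊕ ℕ) ℤ) =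
    ∏ j ∈ Finset.range c, colw lam mu n R j (fun r => T r j) := by
  have hsh : ∀ r j x, x ∈ T r j → InShape lam mu r j := by
    intro r j x hx
    by_contra hn
    rw [hT.1 r j hn] at hx
    simp at hx
  have e1 : ∀ v, ircont T v = ∑ j ∈ Finset.range c, if ∃ i, v ∈ T i j then 1 else 0 := by
    intro v
    exact ncard_eq_sum _ c (fun j ⟨i, hi⟩ => hc i j (hsh i j v hi))
  have e2 : ∀ r, ceq lam mu T r =
      ∑ j ∈ Finset.range c, if cq lam mu j r (fun r => T r j) then 1 else 0 := by
    intro r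
    exact ncard_eq_sum _ c (fun j hj => hc r j hj.1)
  have e3 : ∀ r, exv lam mu T r = ∑ j ∈ Finset.range c, ((T r j).card - 1) := by
    intro r
    refine Finset.sum_subset (fun j hj => ?_) (fun j _ hj => ?_)
    · rw [Finset.mem_Ico] at hj
      exact Finset.mem_range.2 (hc r j hj)
    · rw [Finset.mem_Ico] at hj
      simp [hT.1 r j hj]
  have e4 : ∀ r, R ≤ r → ceq lam mu T r = 0 := by
    intro r hr
    rw [e2]
    refine Finset.sum_eq_zero fun j _ => if_neg fun h => ?_
    have := hR r j h.1
    omega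
  have e5 : ∀ r, R ≤ r → exv lam mu T r = 0 := by
    intro r hr
    rw [e3]
    refine Finset.sum_eq_zero fun j _ => ?_
    rw [hT.1 r j (fun h => by have := hR r j h; omega)]
    simp
  rw [finprod_eq_prod_of_mulSupport_subset (s := Finset.range R),
    finprod_eq_prod_of_mulSupport_subset (s := Finset.range R)]
  · unfold colw
    rw [Finset.prod_mul_distrib, Finset.prod_mul_distrib, Finset.prod_comm,
      Finset.prod_comm (s := Finset.range c) (t := Finset.range R),
      Finset.prod_comm (s := Finset.range c) (t := Finset.range R)]
    simp only [e1, e2, e3, Finset.prod_pow_eq_pow_sum]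
  · intro r hr
    by_contra hn
    simp only [Finset.coe_range, Set.mem_Iio, not_lt] at hn
    simp [e5 r hn] at hr
  · intro r hr
    by_contra hn
    simp only [Finset.coe_range, Set.mem_Iio, not_lt] at hn
    simp [e4 r hn] at hr

theorem cq_iff {lam mu : ℕ → ℕ} {j r : ℕ} {C : ℕ → Finset ℕ}
    (h : InShape lam mu r j → InShape lam mu (r + 1) j → FinsetLE (C r) (C (r + 1))) :
    cq lam mu j r C ↔ InShape lam mu r j ∧ InShape lam mu (r + 1) j ∧
      ∃ m, m ∈ C r ∧ m ∈ C (r + 1) := by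
  constructor
  · rintro ⟨h1, h2, m, h3, _, h4, _⟩
    exact ⟨h1, h2, m, h3, h4⟩
  · rintro ⟨h1, h2, m, h3, h4⟩
    exact ⟨h1, h2, m, h3, fun x hx => h h1 h2 x hx m h4, h4, fun x hx => h h1 h2 m h3 x hx⟩

noncomputable def et (lam mu : ℕ → ℕ) (a : ℕ) (T : ℕ → ℕ → Finset ℕ) (j r : ℕ) : ℕ :=
  if DD a T r j ∧ DD a T (r + 1) j then 1 else
    if cq lam mu j r (fun r => T r j) then 1 else 0

noncomputable def ew (a : ℕ) (T : ℕ → ℕ → Finset ℕ) (j r : ℕ) : ℕ :=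
  if DD a T r j then (T r j \ {a, a + 1}).card else (T r j).card - 1

section
variable {lam mu : ℕ → ℕ} {n a : ℕ} {T : ℕ → ℕ → Finset ℕ}

theorem et_eq (hT : IsSVRPP lam mu T) (j s r : ℕ) :
    (if cq lam mu j r (fil a T j s) then 1 else 0) +
      (if DD a T r j ∧ DD a T (r + 1) j ∧ s = 2 * r + 2 then 1 else 0) = et lam mu a T j r := by
  have hle : InShape lam mu r j → InShape lam mu (r + 1) j →
      FinsetLE (fil a T j s r) (fil a T j s (r + 1)) := fun h1 h2 =>
    fil_le (hT.2.2.2.2 r j h1 h2) (fun _ _ h3 h4 => by omega)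
  have hle0 := hT.2.2.2.2 r j
  have i1 := cq_iff (C := fil a T j s) hle
  have i2 := cq_iff (C := fun r => T r j) hle0
  by_cases hD : DD a T r j ∧ DD a T (r + 1) j
  · have s1 := DD_shape hT hD.1
    have s2 := DD_shape hT hD.2
    have hle0 := hle0 s1 s2
    have i3 : cq lam mu j r (fil a T j s) ↔ s ≠ 2 * r + 2 := by
      rw [i1]
      constructor
      · rintro ⟨_, _, m, h1, h2⟩ rfl
        rw [mem_fil] at h1 h2
        have b1 : m ∈ T r j → m ≤ a + 1 := by
          intro hm
          rcases hD.2 with h | h <;> have := hle0 m hm _ h <;> omega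
        have b2 : m ∈ T (r + 1) j → a ≤ m := by
          intro hm
          rcases hD.1 with h | h <;> have := hle0 _ h m hm <;> omega
        rcases h1 with ⟨h1, h1'⟩ | ⟨_, h1⟩ <;> rcases h2 with ⟨h2, h2'⟩ | ⟨_, h2⟩
        · have := b1 h1; have := b2 h2; omega
        · have := b1 h1; omega
        · have := b2 h2; omega
        · omega
      · intro hne
        refine ⟨s1, s2, ?_⟩
        by_cases h : s ≤ 2 * r + 1
        · exact ⟨a + 1, mem_fil.2 (Or.inr ⟨hD.1, Or.inr ⟨rfl, h⟩⟩),
            mem_fil.2 (Or.inr ⟨hD.2, Or.inr ⟨rfl, by omega⟩⟩)⟩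
        · exact ⟨a, mem_fil.2 (Or.inr ⟨hD.1, Or.inl ⟨rfl, by omega⟩⟩),
            mem_fil.2 (Or.inr ⟨hD.2, Or.inl ⟨rfl, by omega⟩⟩)⟩
    rw [et, if_pos hD]
    by_cases hs : s = 2 * r + 2
    · rw [if_neg (by rw [i3]; simpa using hs), if_pos ⟨hD.1, hD.2, hs⟩]
    · rw [if_pos (i3.2 hs), if_neg (fun h => hs h.2.2)]
  · have hD' : ¬ (DD a T r j ∧ DD a T (r + 1) j ∧ s = 2 * r + 2) := fun h => hD ⟨h.1, h.2.1⟩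
    rw [et, if_neg hD, if_neg hD', add_zero]
    have : cq lam mu j r (fil a T j s) ↔ cq lam mu j r (fun r => T r j) := by
      rw [i1, i2]
      refine and_congr_right fun _ => and_congr_right fun _ => exists_congr fun m => ?_
      simp only [mem_fil]
      have d1 : m = a → m ∈ T r j → DD a T r j := by rintro rfl h; exact Or.inl h
      have d2 : m = a + 1 → m ∈ T r j → DD a T r j := by rintro rfl h; exact Or.inr h
      have d3 : m = a → m ∈ T (r + 1) j → DD a T (r + 1) j := by rintro rfl h; exact Or.inl h
      have d4 : m = a + 1 → m ∈ T (r + 1) j → DD a T (r + 1) j := by rintro rfl h; exact Or.inr h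
      clear i1 i2 hle hle0 hD'
      constructor
      · rintro ⟨⟨h1, h1', h1''⟩ | ⟨h1, h1'⟩, ⟨h2, h2', h2''⟩ | ⟨h2, h2'⟩⟩
        · exact ⟨h1, h2⟩
        · omega
        · omega
        · exact absurd ⟨h1, h2⟩ hD
      · rintro ⟨h1, h2⟩
        have n1 : m ≠ a := fun h => hD ⟨d1 h h1, d3 h h2⟩
        have n2 : m ≠ a + 1 := fun h => hD ⟨d2 h h1, d4 h h2⟩
        exact ⟨Or.inl ⟨h1, n1, n2⟩, Or.inl ⟨h2, n1, n2⟩⟩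
    simp only [this]

theorem ew_eq (j s r : ℕ) :
    (fil a T j s r).card - 1 = ew a T j r + (if DD a T r j ∧ s = 2 * r + 1 then 1 else 0) := by
  unfold ew
  by_cases hD : DD a T r j
  · have hna : a ∉ T r j \ {a, a + 1} := by simp
    have hnb : a + 1 ∉ T r j \ {a, a + 1} := by simp
    simp only [hD, if_true, true_and]
    rcases lt_trichotomy s (2 * r + 1) with h | h | h
    · have : fil a T j s r = insert (a + 1) (T r j \ {a, a + 1}) := by
        ext x; simp only [mem_fil, hD, true_and, Finset.mem_insert, Finset.mem_sdiff,
          Finset.mem_singleton]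
        have h1 : ¬ (2 * r + 1 ≤ s) := by omega
        have h2 : s ≤ 2 * r + 1 := by omega
        tauto
      rw [this, Finset.card_insert_of_notMem hnb, if_neg (by omega)]; rfl
    · have : fil a T j s r = insert a (insert (a + 1) (T r j \ {a, a + 1})) := by
        ext x; simp only [mem_fil, hD, true_and, Finset.mem_insert, Finset.mem_sdiff,
          Finset.mem_singleton]
        have h1 : 2 * r + 1 ≤ s := by omega
        have h2 : s ≤ 2 * r + 1 := by omega
        tauto
      rw [this, Finset.card_insert_of_notMem (by simp), Finset.card_insert_of_notMem hnb,
        if_pos (by omega)]; rfl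
    · have : fil a T j s r = insert a (T r j \ {a, a + 1}) := by
        ext x; simp only [mem_fil, hD, true_and, Finset.mem_insert, Finset.mem_sdiff,
          Finset.mem_singleton]
        have h1 : 2 * r + 1 ≤ s := by omega
        have h2 : ¬ s ≤ 2 * r + 1 := by omega
        tauto
      rw [this, Finset.card_insert_of_notMem hna, if_neg (by omega)]; rfl
  · simp only [hD, if_false, false_and, add_zero]
    congr 2
    ext x
    simp only [mem_fil, hD, false_and, or_false]
    constructor
    · exact fun h => h.1
    · refine fun h => ⟨h, ?_, ?_⟩
      · rintro rfl; exact hD (Or.inl h)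
      · rintro rfl; exact hD (Or.inr h)

noncomputable def uu (lam mu : ℕ → ℕ) (n R a : ℕ) (T : ℕ → ℕ → Finset ℕ) (j : ℕ) :
    MvPolynomial (Fin n ⊕ ℕ ⊕ ℕ) ℤ :=
  (∏ v : Fin n, if (v : ℕ) + 1 = a ∨ (v : ℕ) + 1 = a + 1 then 1 else
    X (Sum.inl v) ^ (if ∃ i, (v : ℕ) + 1 ∈ T i j then 1 else 0)) *
  (∏ r ∈ Finset.range R, X (Sum.inr (Sum.inl r)) ^ et lam mu a T j r) *
  (∏ r ∈ Finset.range R, X (Sum.inr (Sum.inr r)) ^ ew a T j r)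

theorem colw_eq (R : ℕ) (hT : IsSVRPP lam mu T) {p q : ℕ → ℕ} (hpq : PQ a T p q)
    {j s : ℕ} (hs1 : 2 * p j ≤ s) (hs2 : s ≤ 2 * q j) (va vb : Fin n) (ha : (va : ℕ) + 1 = a)
    (hb : (vb : ℕ) = a) :
    colw lam mu n R j (fil a T j s) * (∏ r ∈ Finset.range R, X (Sum.inr (Sum.inl r)) ^
      (if DD a T r j ∧ DD a T (r + 1) j ∧ s = 2 * r + 2 then 1 else 0)) =
    X (Sum.inl va) ^ (if 2 * p j < s then 1 else 0) *
    X (Sum.inl vb) ^ (if s < 2 * q j then 1 else 0) * uu lam mu n R a T j *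
    ∏ r ∈ Finset.range R, X (Sum.inr (Sum.inr r)) ^
      (if DD a T r j ∧ s = 2 * r + 1 then 1 else 0) := by
  have hx : (∏ v : Fin n, X (Sum.inl v) ^ (if ∃ i, (v : ℕ) + 1 ∈ fil a T j s i then 1 else 0) :
      MvPolynomial (Fin n ⊕ ℕ ⊕ ℕ) ℤ) =
      X (Sum.inl va) ^ (if 2 * p j < s then 1 else 0) *
      X (Sum.inl vb) ^ (if s < 2 * q j then 1 else 0) *
      (∏ v : Fin n, if (v : ℕ) + 1 = a ∨ (v : ℕ) + 1 = a + 1 then 1 else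
        X (Sum.inl v) ^ (if ∃ i, (v : ℕ) + 1 ∈ T i j then 1 else 0)) := by
    have e1 : (X (Sum.inl va) ^ (if 2 * p j < s then 1 else 0) :
        MvPolynomial (Fin n ⊕ ℕ ⊕ ℕ) ℤ) = ∏ v : Fin n, if v = va then
        X (Sum.inl v) ^ (if 2 * p j < s then 1 else 0) else 1 := by
      rw [Finset.prod_ite_eq']; simp
    have e2 : (X (Sum.inl vb) ^ (if s < 2 * q j then 1 else 0) :
        MvPolynomial (Fin n ⊕ ℕ ⊕ ℕ) ℤ) = ∏ v : Fin n, if v = vb then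
        X (Sum.inl v) ^ (if s < 2 * q j then 1 else 0) else 1 := by
      rw [Finset.prod_ite_eq']; simp
    rw [e1, e2, ← Finset.prod_mul_distrib, ← Finset.prod_mul_distrib]
    refine Finset.prod_congr rfl fun v _ => ?_
    by_cases h1 : v = va
    · subst h1
      have : v ≠ vb := by rintro rfl; omega
      rw [if_pos rfl, if_neg this, if_pos (Or.inl ha), mul_one, mul_one]
      have : (∃ i, (v : ℕ) + 1 ∈ fil a T j s i) ↔ 2 * p j < s := by
        simp only [mem_fil, ha, hpq.2.1]
        constructor
        · rintro ⟨i, h⟩; omega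
        · intro h
          refine ⟨p j, Or.inr ⟨?_, Or.inl ⟨?_, ?_⟩⟩⟩ <;> first | trivial | omega
      simp only [this]
    · by_cases h2 : v = vb
      · subst h2
        have hb' : (v : ℕ) + 1 = a + 1 := by omega
        rw [if_neg h1, if_pos rfl, if_pos (Or.inr hb'), mul_one, one_mul]
        have : (∃ i, (v : ℕ) + 1 ∈ fil a T j s i) ↔ s < 2 * q j := by
          simp only [mem_fil, hb', hpq.2.1]
          constructor
          · rintro ⟨i, h⟩; omega
          · intro h
            refine ⟨q j - 1, Or.inr ⟨?_, Or.inr ⟨?_, ?_⟩⟩⟩ <;> first | trivial | omega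
        simp only [this]
      · have h1' : (v : ℕ) + 1 ≠ a := fun h => h1 (Fin.ext (by omega))
        have h2' : (v : ℕ) + 1 ≠ a + 1 := fun h => h2 (Fin.ext (by omega))
        have h3 : ¬ ((v : ℕ) + 1 = a ∨ (v : ℕ) + 1 = a + 1) := by tauto
        rw [if_neg h1, if_neg h2, if_neg h3, one_mul, one_mul]
        have : (∃ i, (v : ℕ) + 1 ∈ fil a T j s i) ↔ ∃ i, (v : ℕ) + 1 ∈ T i j := by
          refine exists_congr fun i => ?_
          simp only [mem_fil]; tauto
        simp only [this]
  have ht : (∏ r ∈ Finset.range R, X (Sum.inr (Sum.inl r)) ^ et lam mu a T j r :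
      MvPolynomial (Fin n ⊕ ℕ ⊕ ℕ) ℤ) =
      (∏ r ∈ Finset.range R, X (Sum.inr (Sum.inl r)) ^
        (if cq lam mu j r (fil a T j s) then 1 else 0)) *
      (∏ r ∈ Finset.range R, X (Sum.inr (Sum.inl r)) ^
      (if DD a T r j ∧ DD a T (r + 1) j ∧ s = 2 * r + 2 then 1 else 0)) := by
    rw [← Finset.prod_mul_distrib]
    refine Finset.prod_congr rfl fun r _ => ?_
    rw [← et_eq hT j s r, pow_add]
  have hw : (∏ r ∈ Finset.range R, X (Sum.inr (Sum.inr r)) ^ ((fil a T j s r).card - 1) :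
      MvPolynomial (Fin n ⊕ ℕ ⊕ ℕ) ℤ) =
      (∏ r ∈ Finset.range R, X (Sum.inr (Sum.inr r)) ^ ew a T j r) *
      ∏ r ∈ Finset.range R, X (Sum.inr (Sum.inr r)) ^
      (if DD a T r j ∧ s = 2 * r + 1 then 1 else 0) := by
    rw [← Finset.prod_mul_distrib]
    refine Finset.prod_congr rfl fun r _ => ?_
    rw [ew_eq, pow_add]
  unfold colw uu
  rw [hx, ht, hw]
  ring

noncomputable def zt (n R s : ℕ) : MvPolynomial (Fin n ⊕ ℕ ⊕ ℕ) ℤ :=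
  ∏ r ∈ Finset.range R, X (Sum.inr (Sum.inl r)) ^ (if s = 2 * r + 2 then 1 else 0)

noncomputable def yw (n R s : ℕ) : MvPolynomial (Fin n ⊕ ℕ ⊕ ℕ) ℤ :=
  ∏ r ∈ Finset.range R, X (Sum.inr (Sum.inr r)) ^ (if s = 2 * r + 1 then 1 else 0)

theorem zt_ne (n R s : ℕ) : zt n R s ≠ 0 :=
  Finset.prod_ne_zero_iff.2 fun _ _ => pow_ne_zero _ (X_ne_zero _)

theorem colw_mid (R : ℕ) (hT : IsSVRPP lam mu T) {p q : ℕ → ℕ} (hpq : PQ a T p q)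
    {j s : ℕ} (hm : mid p q j s) (va vb : Fin n) (ha : (va : ℕ) + 1 = a)
    (hb : (vb : ℕ) = a) :
    colw lam mu n R j (fil a T j s) * zt n R s =
    X (Sum.inl va) * X (Sum.inl vb) * uu lam mu n R a T j * yw n R s := by
  have h := colw_eq R hT hpq hm.1.le hm.2.le va vb ha hb
  rw [if_pos hm.1, if_pos hm.2, pow_one, pow_one] at h
  unfold mid at hm
  have e1 : ∀ r, (DD a T r j ∧ DD a T (r + 1) j ∧ s = 2 * r + 2) ↔ s = 2 * r + 2 := by
    intro r; simp only [hpq.2.1]; omega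
  have e2 : ∀ r, (DD a T r j ∧ s = 2 * r + 1) ↔ s = 2 * r + 1 := by
    intro r; simp only [hpq.2.1]; omega
  simp only [e1, e2] at h
  exact h

theorem colw_pure (R : ℕ) (hT : IsSVRPP lam mu T) {p q : ℕ → ℕ} (hpq : PQ a T p q)
    {j s : ℕ} (hs : s = 2 * p j ∨ s = 2 * q j) (va vb : Fin n) (ha : (va : ℕ) + 1 = a)
    (hb : (vb : ℕ) = a) :
    colw lam mu n R j (fil a T j s) = X (Sum.inl va) ^ (if 2 * p j < s then 1 else 0) *
    X (Sum.inl vb) ^ (if s < 2 * q j then 1 else 0) * uu lam mu n R a T j := by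
  have hle := hpq.1 j
  have h := colw_eq R hT hpq (j := j) (s := s) (by omega) (by omega) va vb ha hb
  have e1 : ∀ r, ¬ (DD a T r j ∧ DD a T (r + 1) j ∧ s = 2 * r + 2) := by
    intro r; simp only [hpq.2.1]; omega
  have e2 : ∀ r, ¬ (DD a T r j ∧ s = 2 * r + 1) := by
    intro r; simp only [hpq.2.1]; omega
  simp only [e1, e2, if_false, pow_zero, Finset.prod_const_one, mul_one] at h
  exact h

noncomputable def tau {n : ℕ} (va vb : Fin n) :
    MvPolynomial (Fin n ⊕ ℕ ⊕ ℕ) ℤ →+* MvPolynomial (Fin n ⊕ ℕ ⊕ ℕ) ℤ :=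
  (rename (Sum.map (⇑(Equiv.swap va vb)) id)).toRingHom

theorem tau_X (va vb : Fin n) (z) :
    tau va vb (X z) = X (Sum.map (⇑(Equiv.swap va vb)) id z) := by
  simp [tau]

theorem tau_uu (R : ℕ) (va vb : Fin n) (ha : (va : ℕ) + 1 = a) (hb : (vb : ℕ) = a) (j : ℕ) :
    tau va vb (uu lam mu n R a T j) = uu lam mu n R a T j := by
  unfold uu
  simp only [map_mul, map_prod, map_pow, tau_X, Sum.map_inr, id]
  congr 2
  refine Finset.prod_congr rfl fun v _ => ?_
  split_ifs with h
  · simp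
  all_goals
    have h1 : v ≠ va := by rintro rfl; omega
    have h2 : v ≠ vb := by rintro rfl; omega
    simp [tau_X, Equiv.swap_apply_of_ne_of_ne h1 h2]

theorem tau_zt (R s : ℕ) (va vb : Fin n) : tau va vb (zt n R s) = zt n R s := by
  simp only [zt, map_prod, map_pow, tau_X, Sum.map_inr, id]

theorem tau_yw (R s : ℕ) (va vb : Fin n) : tau va vb (yw n R s) = yw n R s := by
  simp only [yw, map_prod, map_pow, tau_X, Sum.map_inr, id]

theorem fiber_sym (R : ℕ) (hT : IsSVRPP lam mu T) {p q : ℕ → ℕ} (hpq : PQ a T p q)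
    (va vb : Fin n) (ha : (va : ℕ) + 1 = a) (hb : (vb : ℕ) = a) (c : ℕ) :
    tau va vb (NN p q (fun j s => colw lam mu n R j (fil a T j s)) c 0) =
      NN p q (fun j s => colw lam mu n R j (fil a T j s)) c 0 := by
  have t1 : tau va vb (X (Sum.inl va)) = X (Sum.inl vb) := by simp [tau_X]
  have t2 : tau va vb (X (Sum.inl vb)) = X (Sum.inl va) := by simp [tau_X]
  refine NN_sym p q _ (tau va vb) (X (Sum.inl va)) (X (Sum.inl vb)) (uu lam mu n R a T)
    t1 t2 (tau_uu R va vb ha hb) hpq.1 ?_ ?_ ?_ ?_ ?_ c 0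
  · intro j hj
    simp only [colw_pure R hT hpq (Or.inl rfl) va vb ha hb]
    rw [if_neg (by omega), if_neg (by omega)]
    simp [tau_uu R va vb ha hb]
  · intro j hj
    simp only [colw_pure R hT hpq (Or.inr rfl) va vb ha hb]
    rw [if_pos (by omega), if_neg (by omega)]
    simp
  · intro j hj
    simp only [colw_pure R hT hpq (Or.inl rfl) va vb ha hb]
    rw [if_neg (by omega), if_pos (by omega)]
    simp
  · intro j s hm
    have h := colw_mid R hT hpq hm va vb ha hb
    have h' := congrArg (tau va vb) h
    simp only [map_mul, t1, t2, tau_zt, tau_yw, tau_uu R va vb ha hb] at h'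
    refine mul_right_cancel₀ (zt_ne n R s) ?_
    rw [h, h']
    ring
  · intro j s hm hm'
    have h := colw_mid R hT hpq hm va vb ha hb
    have h' := colw_mid R hT hpq hm' va vb ha hb
    refine mul_right_cancel₀ (zt_ne n R s) ?_
    linear_combination uu lam mu n R a T j * h' - uu lam mu n R a T (j + 1) * h

end

theorem finite_T {lam mu : ℕ → ℕ} {n R c : ℕ} (hc : ∀ r j, InShape lam mu r j → j < c)
    (hR : ∀ r j, InShape lam mu r j → r < R) :
    {T : ℕ → ℕ → Finset ℕ | IsSVRPPn lam mu n T}.Finite := by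
  refine Set.Finite.of_injOn (f := fun T => fun x : Fin R × Fin c => T x.1 x.2)
    (t := Set.pi Set.univ (fun _ => ↑(Finset.Icc 1 n).powerset)) ?_ ?_ ?_
  · intro T hT x _
    exact Finset.mem_coe.2 (Finset.mem_powerset.2 (hT.2 x.1 x.2))
  · intro T hT T' hT' h
    funext r j
    by_cases hs : InShape lam mu r j
    · exact congrFun h (⟨r, hR r j hs⟩, ⟨j, hc r j hs⟩)
    · rw [hT.1.1 r j hs, hT'.1.1 r j hs]
  · exact Set.Finite.pi fun _ => Finset.finite_toSet _

theorem hybridG_swap {lam mu : ℕ → ℕ} (hlam : IsPartitionFun lam) (hmu : IsPartitionFun mu)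
    {n : ℕ} (va vb : Fin n) (hab : (vb : ℕ) = va + 1) :
    tau va vb (hybridG lam mu n) = hybridG lam mu n := by
  obtain ⟨R, hR0⟩ := hlam.2
  have hc : ∀ r j, InShape lam mu r j → j < lam 0 := fun r j h =>
    h.2.trans_le (part_anti hlam (Nat.zero_le r))
  have hR : ∀ r j, InShape lam mu r j → r < R := by
    intro r j h
    by_contra hn
    have := hR0 r (by omega)
    unfold InShape at h; omega
  have hfin := finite_T (n := n) hc hR
  have ha1 : 1 ≤ (vb : ℕ) := by omega
  set a : ℕ := (vb : ℕ) with haa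
  have hG : hybridG lam mu n = ∑ T ∈ hfin.toFinset,
      ∏ j ∈ Finset.range (lam 0), colw lam mu n R j (fun r => T r j) := by
    unfold hybridG
    rw [finsum_mem_eq_finite_toFinset_sum _ hfin]
    refine Finset.sum_congr rfl fun T hT => ?_
    exact mon_eq hc hR ((hfin.mem_toFinset.1 hT).1)
  rw [hG]
  let κ : (ℕ → ℕ → Finset ℕ) → (ℕ → ℕ → Finset ℕ × Prop) :=
    fun T r j => (T r j \ {a, a + 1}, DD a T r j)
  have hκ : ∀ T T', κ T = κ T' ↔ Sim a T T' := by
    intro T T'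
    constructor
    · intro h r j
      have h' := congrFun (congrFun h r) j
      simp only [κ, Prod.mk.injEq] at h'
      refine ⟨fun x hx hx' => ?_, iff_of_eq h'.2⟩
      have := Finset.ext_iff.1 h'.1 x
      simpa [hx, hx'] using this
    · intro h
      funext r j
      simp only [κ, Prod.mk.injEq]
      refine ⟨?_, propext (h r j).2⟩
      ext x
      have := (h r j).1 x
      simp only [Finset.mem_sdiff, Finset.mem_insert, Finset.mem_singleton]
      tauto
  rw [← Finset.sum_fiberwise_of_maps_to (g := κ) (t := hfin.toFinset.image κ)
    (fun T hT => Finset.mem_image_of_mem _ hT), map_sum]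
  refine Finset.sum_congr rfl fun k hk => ?_
  obtain ⟨T0, hT0, rfl⟩ := Finset.mem_image.1 hk
  have hT0 := hfin.mem_toFinset.1 hT0
  obtain ⟨p, q, hpq⟩ := exists_PQ hlam hmu hT0.1 a
  have key : ∑ T ∈ hfin.toFinset with κ T = κ T0,
      ∏ j ∈ Finset.range (lam 0), colw lam mu n R j (fun r => T r j) =
      NN p q (fun j s => colw lam mu n R j (fil a T0 j s)) (lam 0) 0 := by
    unfold NN
    rw [← Finset.sum_filter]
    symm
    refine Finset.sum_bij (fun f _ => fun r j => fil a T0 j (f j) r) ?_ ?_ ?_ ?_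
    · intro f hf
      rw [Finset.mem_filter] at hf
      rw [Finset.mem_filter, hκ, hfin.mem_toFinset]
      exact ⟨fil_mem ha1 vb.2 hT0 hpq hc hf.2 hf.1, fil_sim a T0 f⟩
    · intro f hf g hg h
      rw [Finset.mem_filter] at hf hg
      exact fil_inj hpq hf.1 hg.1 h
    · intro T hT
      rw [Finset.mem_filter, hκ, hfin.mem_toFinset] at hT
      obtain ⟨f, h1, h2, h3⟩ := fil_surj hlam hmu hT.1 hT.2 hpq hc
      exact ⟨f, Finset.mem_filter.2 ⟨h1, h2⟩, h3⟩
    · intro f hf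
      rfl
  rw [key]
  exact fiber_sym R hT0.1 hpq va vb (by omega) rfl (lam 0)

end HG

/-- For any skew shape `lam/mu` and any positive integer `n`, the hybrid
Grothendieck polynomial `G_{lam/mu}(x_1,…,x_n; t; w)` is symmetric in the `x` variables:
renaming the `x` variables by any permutation `σ` of `{1,…,n}` leaves it unchanged. -/
theorem hybridG_symmetric (lam mu : ℕ → ℕ)
    (hlam : IsPartitionFun lam) (hmu : IsPartitionFun mu)
    (hsub : ∀ i, mu i ≤ lam i) (n : ℕ) (hn : 1 ≤ n) (σ : Equiv.Perm (Fin n)) :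
    MvPolynomial.rename (Sum.map (⇑σ) id) (hybridG lam mu n) = hybridG lam mu n := by
  obtain ⟨m, rfl⟩ : ∃ m, n = m + 1 := ⟨n - 1, by omega⟩
  have hmem : σ ∈ Submonoid.closure
      (Set.range fun i : Fin m => Equiv.swap i.castSucc i.succ) := by
    rw [Equiv.Perm.mclosure_swap_castSucc_succ]; trivial
  induction hmem using Submonoid.closure_induction with
  | mem x hx =>
    obtain ⟨i, rfl⟩ := hx
    exact HG.hybridG_swap hlam hmu i.castSucc i.succ (by simp)
  | one => 
    have : Sum.map (⇑(1 : Equiv.Perm (Fin (m + 1)))) (id : ℕ ⊕ ℕ → ℕ ⊕ ℕ) = id := by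
      funext z; cases z <;> rfl
    rw [this, MvPolynomial.rename_id_apply]
  | mul x y _ _ hx hy =>
    have : Sum.map (⇑(x * y)) (id : ℕ ⊕ ℕ → ℕ ⊕ ℕ) = Sum.map (⇑x) id ∘ Sum.map (⇑y) id := by
      funext z; cases z <;> rfl
    rw [this, ← MvPolynomial.rename_rename, hy, hx]
end

section
/- For any skew shape λ/μ and any positive integer i, there exists an involution Φ_i on SVRPP(λ/μ) such that for every T ∈ SVRPP(λ/μ): ceq(Φ_i(T)) = ceq(T), ex(Φ_i(T)) = ex(T), and ircont(Φ_i(T)) is obtained from ircont(T) by exchanging its i-th and (i+1)-th entries. -/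
open scoped Classical

namespace BK

inductive Letter
  | one
  | two
  | mix (s : ℕ)

open Letter

def flipL : Letter → Letter
  | one => two
  | two => one
  | mix s => mix s

@[simp] lemma flipL_flipL (l : Letter) : flipL (flipL l) = l := by cases l <;> rfl

def wt : Letter → ℕ
  | one => 0
  | two => 2
  | mix _ => 1

def Desc (a b : ℕ → ℕ) (w : ℕ → Letter) (j : ℕ) : Prop :=
  a (j+1) ≤ a j ∧ a j < b (j+1) ∧ b (j+1) ≤ b j ∧
    ((w j = two ∧ w (j+1) = one) ∨
     (∃ s, w j = two ∧ w (j+1) = mix s ∧ 2 * a j < s) ∨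
     (∃ s, w j = mix s ∧ w (j+1) = one ∧ s < 2 * b (j+1)))

def sw (w : ℕ → Letter) (j : ℕ) : ℕ → Letter := fun k =>
  if k = j then w (j+1) else if k = j+1 then w j else w k

lemma sw_eq (w : ℕ → Letter) (j : ℕ) : sw w j = fun k => w (Equiv.swap j (j+1) k) := by
  funext k
  simp only [sw, Equiv.swap_apply_def]
  split_ifs <;> rfl

def Valid (a b : ℕ → ℕ) (w : ℕ → Letter) : Prop :=
  ∀ j, (w j = one → a j < b j) ∧ (w j = two → a j < b j) ∧
    ∀ s, w j = mix s → (2 * a j < s ∧ s < 2 * b j) ∨ (b j ≤ a j ∧ s = 0)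

def Benign (w : ℕ → Letter) : Prop :=
  ∀ j k s t, j < k → w j = mix s → w k = mix t → 0 < s → 0 < t → t < s ∨ (t = s ∧ Even s)

def Step (a b : ℕ → ℕ) (w w' : ℕ → Letter) : Prop := ∃ j, Desc a b w j ∧ w' = sw w j

abbrev Star (a b : ℕ → ℕ) := Relation.ReflTransGen (Step a b)

lemma Valid.sw {a b : ℕ → ℕ} {w : ℕ → Letter} {j : ℕ} (h : Valid a b w) (hd : Desc a b w j) :
    Valid a b (sw w j) := by
  obtain ⟨h1, h2, h3, h4⟩ := hd
  intro k
  have hj := h j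
  have hj' := h (j+1)
  have hk := h k
  simp only [BK.sw]
  split_ifs with e1 e2
  · subst e1
    rcases h4 with ⟨e, e'⟩ | ⟨s, e, e', e''⟩ | ⟨s, e, e', e''⟩ <;> simp_all <;> omega
  · subst e2
    rcases h4 with ⟨e, e'⟩ | ⟨s, e, e', e''⟩ | ⟨s, e, e', e''⟩ <;> simp_all <;> omega
  · exact hk

lemma Benign.sw {a b : ℕ → ℕ} {w : ℕ → Letter} {j : ℕ} (h : Benign w) (hd : Desc a b w j) :
    Benign (sw w j) := by
  obtain ⟨h1, h2, h3, h4⟩ := hd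
  intro k l s t hkl hk hl hs ht
  have key : ¬ (k = j ∧ l = j + 1) := by
    rintro ⟨rfl, rfl⟩
    simp only [BK.sw] at hk hl
    rcases h4 with ⟨e, e'⟩ | ⟨s, e, e', e''⟩ | ⟨s, e, e', e''⟩ <;> simp_all
  rw [sw_eq] at hk hl
  refine h _ _ s t ?_ hk hl hs ht
  simp only [Equiv.swap_apply_def]
  split_ifs <;> omega

lemma Valid.flip {a b : ℕ → ℕ} {w : ℕ → Letter} (h : Valid a b w) :
    Valid a b (fun j => flipL (w j)) := by
  intro j
  have := h j
  cases e : w j <;> simp_all [flipL]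

lemma Benign.flip {w : ℕ → Letter} (h : Benign w) :
    Benign (fun j => flipL (w j)) := by
  intro j k s t hjk h1 h2
  apply h j k s t hjk
  · cases e : w j <;> simp_all [flipL]
  · cases e : w k <;> simp_all [flipL]

lemma Step.flip {a b : ℕ → ℕ} {w w' : ℕ → Letter} (hv : Valid a b w) (h : Step a b w w') :
    Step a b (fun j => flipL (w' j)) (fun j => flipL (w j)) := by
  obtain ⟨j, ⟨h1, h2, h3, h4⟩, rfl⟩ := h
  refine ⟨j, ⟨h1, h2, h3, ?_⟩, ?_⟩
  · have hj := hv j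
    have hj' := hv (j+1)
    rcases h4 with ⟨e, e'⟩ | ⟨s, e, e', e''⟩ | ⟨s, e, e', e''⟩
    · left; simp [BK.sw, e, e', flipL]
    · right; right; refine ⟨s, ?_⟩; simp_all [BK.sw, flipL]; omega
    · right; left; refine ⟨s, ?_⟩; simp_all [BK.sw, flipL]; omega
  · funext k
    simp only [BK.sw]
    split_ifs <;> simp_all

lemma Star.inv {a b : ℕ → ℕ} {w w' : ℕ → Letter} (h : Star a b w w') (hv : Valid a b w)
    (hb : Benign w) : Valid a b w' ∧ Benign w' ∧
      Star a b (fun j => flipL (w' j)) (fun j => flipL (w j)) ∧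
      ∃ π : Equiv.Perm ℕ, w' = fun j => w (π j) := by
  induction h with
  | refl => exact ⟨hv, hb, .refl, 1, rfl⟩
  | tail h1 h2 ih =>
    obtain ⟨i1, i2, i3, π, i4⟩ := ih
    have h3 := Step.flip i1 h2
    obtain ⟨j, hd, rfl⟩ := h2
    refine ⟨i1.sw hd, i2.sw hd, .head h3 i3, π * Equiv.swap j (j+1), ?_⟩
    · rw [sw_eq, i4]; rfl

def meas (n : ℕ) (w : ℕ → Letter) : ℕ := ∑ k ∈ Finset.range n, (n - k) * wt (w k)

lemma meas_lt {a b : ℕ → ℕ} {w : ℕ → Letter} {j n : ℕ} (hn : j + 1 < n) (hd : Desc a b w j) :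
    meas n (sw w j) < meas n w := by
  obtain ⟨h1, h2, h3, h4⟩ := hd
  unfold meas
  have m1 : j ∈ Finset.range n := by simp; omega
  have m2 : j + 1 ∈ (Finset.range n).erase j := by simp; omega
  rw [← Finset.add_sum_erase _ _ m1, ← Finset.add_sum_erase _ _ m2,
    ← Finset.add_sum_erase _ _ m1, ← Finset.add_sum_erase _ _ m2]
  have : ∑ x ∈ ((Finset.range n).erase j).erase (j+1), (n - x) * wt (sw w j x)
    = ∑ x ∈ ((Finset.range n).erase j).erase (j+1), (n - x) * wt (w x) := by
    apply Finset.sum_congr rfl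
    intro x hx
    simp at hx
    simp [sw, hx]
  rw [this]
  have e1 : sw w j j = w (j+1) := by simp [sw]
  have e2 : sw w j (j+1) = w j := by simp [sw]
  rw [e1, e2]
  obtain ⟨c, hc⟩ : ∃ c, n = j + 1 + c + 1 := ⟨n - j - 2, by omega⟩
  have e3 : n - j = c + 2 := by omega
  have e4 : n - (j+1) = c + 1 := by omega
  rw [e3, e4]
  rcases h4 with ⟨e, e'⟩ | ⟨s, e, e', e''⟩ | ⟨s, e, e', e''⟩ <;> simp [e, e', wt] <;> omega

lemma step_sw {a b : ℕ → ℕ} {w : ℕ → Letter} {j : ℕ} (hd : Desc a b w j) :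
    Step a b w (sw w j) := ⟨j, hd, rfl⟩

lemma local_conf {a b : ℕ → ℕ} {w : ℕ → Letter} {j k : ℕ} (hjk : j < k)
    (hj : Desc a b w j) (hk : Desc a b w k) :
    ∃ u, Star a b (sw w j) u ∧ Star a b (sw w k) u := by
  by_cases hk1 : k = j + 1
  · subst hk1
    obtain ⟨h1, h2, h3, h4⟩ := hj
    obtain ⟨g1, g2, g3, g4⟩ := hk
    obtain ⟨s, e0, e1, e2, hs1, hs2⟩ : ∃ s, w j = two ∧ w (j+1) = mix s ∧ w (j+1+1) = one ∧
      2 * a j < s ∧ s < 2 * b (j+1+1) := by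
      rcases h4 with ⟨e, e'⟩ | ⟨s, e, e', e''⟩ | ⟨s, e, e', e''⟩ <;>
      rcases g4 with ⟨f, f'⟩ | ⟨t, f, f', f''⟩ | ⟨t, f, f', f''⟩ <;> simp_all
    refine ⟨sw (sw (sw w j) (j+1)) j, ?_, ?_⟩
    · refine .head (step_sw (j := j+1) ?_) (.head (step_sw (j := j) ?_) .refl)
      · refine ⟨g1, g2, g3, ?_⟩
        left; simp [sw, e0, e1, e2]; try omega
      · refine ⟨h1, h2, h3, ?_⟩
        right; right; refine ⟨s, ?_⟩; simp [sw, e0, e1, e2]; omega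
    · have : sw (sw (sw w j) (j+1)) j = sw (sw (sw w (j+1)) j) (j+1) := by
        funext x
        simp only [sw]
        split_ifs <;> first | rfl | omega
      rw [this]
      refine .head (step_sw (j := j) ?_) (.head (step_sw (j := j+1) ?_) .refl)
      · refine ⟨h1, h2, h3, ?_⟩
        left; simp [sw, e0, e1, e2]; try omega
      · refine ⟨g1, g2, g3, ?_⟩
        right; left; refine ⟨s, ?_⟩; simp [sw, e0, e1, e2]; omega
  · refine ⟨sw (sw w j) k, .head (step_sw (j := k) ?_) .refl, ?_⟩
    · have e1 : sw w j k = w k := by simp only [sw]; split_ifs <;> first | rfl | omega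
      have e2 : sw w j (k+1) = w (k+1) := by simp only [sw]; split_ifs <;> first | rfl | omega
      unfold Desc at hk ⊢
      rwa [e1, e2]
    · have : sw (sw w j) k = sw (sw w k) j := by
        funext x
        simp only [sw]
        split_ifs <;> first | rfl | omega
      rw [this]
      refine .head (step_sw (j := j) ?_) .refl
      have e1 : sw w k j = w j := by simp only [sw]; split_ifs <;> first | rfl | omega
      have e2 : sw w k (j+1) = w (j+1) := by simp only [sw]; split_ifs <;> first | rfl | omega
      unfold Desc at hj ⊢
      rwa [e1, e2]

def Red (a b : ℕ → ℕ) (w : ℕ → Letter) : Prop := ∀ j, ¬ Desc a b w j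

lemma exists_nf {a b : ℕ → ℕ} {n : ℕ} (hn : ∀ w j, Desc a b w j → j + 1 < n) :
    ∀ m w, meas n w = m → ∃ u, Star a b w u ∧ Red a b u := by
  intro m
  induction m using Nat.strong_induction_on with
  | _ m ih =>
    intro w hw
    by_cases h : Red a b w
    · exact ⟨w, .refl, h⟩
    · simp only [Red, not_forall, not_not] at h
      obtain ⟨j, hj⟩ := h
      obtain ⟨u, h1, h2⟩ := ih _ (hw ▸ meas_lt (hn _ _ hj) hj) _ rfl
      exact ⟨u, .head (step_sw hj) h1, h2⟩

lemma unique_nf {a b : ℕ → ℕ} {n : ℕ} (hn : ∀ w j, Desc a b w j → j + 1 < n) :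
    ∀ m w, meas n w = m → ∀ u v, Star a b w u → Star a b w v → Red a b u → Red a b v → u = v := by
  intro m
  induction m using Nat.strong_induction_on with
  | _ m ih =>
    intro w hw u v hu hv ru rv
    rcases hu.cases_head with rfl | ⟨w1, s1, hu⟩
    · rcases hv.cases_head with rfl | ⟨w2, s2, hv⟩
      · rfl
      · obtain ⟨j, hj, _⟩ := s2
        exact absurd hj (ru j)
    · rcases hv.cases_head with rfl | ⟨w2, s2, hv⟩
      · obtain ⟨j, hj, _⟩ := s1
        exact absurd hj (rv j)
      · obtain ⟨j, hj, rfl⟩ := s1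
        obtain ⟨k, hk, rfl⟩ := s2
        have hc : ∃ x, Star a b (sw w j) x ∧ Star a b (sw w k) x := by
          rcases lt_trichotomy j k with h | h | h
          · exact local_conf h hj hk
          · subst h; exact ⟨_, .refl, .refl⟩
          · obtain ⟨x, h1, h2⟩ := local_conf h hk hj
            exact ⟨x, h2, h1⟩
        obtain ⟨x, hx1, hx2⟩ := hc
        obtain ⟨y, hy1, hy2⟩ := exists_nf hn _ x rfl
        have := ih _ (hw ▸ meas_lt (hn _ _ hj) hj) _ rfl u y hu (hx1.trans hy1) ru hy2
        have := ih _ (hw ▸ meas_lt (hn _ _ hk) hk) _ rfl v y hv (hx2.trans hy1) rv hy2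
        simp_all

noncomputable def Psi (a b : ℕ → ℕ) (w : ℕ → Letter) : ℕ → Letter :=
  if h : ∃ u, Star a b (fun j => flipL (w j)) u ∧ Red a b u then h.choose else w

lemma Psi_spec {a b : ℕ → ℕ} {n : ℕ} (hn : ∀ w j, Desc a b w j → j + 1 < n) {w : ℕ → Letter}
    (hv : Valid a b w) (hb : Benign w) (hr : Red a b w) :
    Valid a b (Psi a b w) ∧ Benign (Psi a b w) ∧ Red a b (Psi a b w) ∧
    Psi a b (Psi a b w) = w ∧ ∃ π : Equiv.Perm ℕ, Psi a b w = fun j => flipL (w (π j)) := by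
  have H : ∀ w, Star a b (fun j => flipL (w j)) (Psi a b w) ∧ Red a b (Psi a b w) := by
    intro w
    have h := exists_nf hn _ (fun j => flipL (w j)) rfl
    rw [Psi, dif_pos h]
    exact h.choose_spec
  obtain ⟨h1, h2⟩ := H w
  obtain ⟨i1, i2, i3, π, i4⟩ := Star.inv h1 hv.flip hb.flip
  refine ⟨i1, i2, h2, ?_, π, i4⟩
  obtain ⟨g1, g2⟩ := H (Psi a b w)
  simp only [flipL_flipL] at i3
  exact unique_nf hn _ _ rfl _ _ g1 i3 g2 hr

lemma ncard_perm (π : Equiv.Perm ℕ) (p : ℕ → Prop) :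
    Set.ncard {j | p (π j)} = Set.ncard {j | p j} := by
  rw [← Set.ncard_image_of_injective {j | p (π j)} π.injective]
  congr 1
  ext x
  simp only [Set.mem_image, Set.mem_ofPred_eq]
  constructor
  · rintro ⟨y, hy, rfl⟩; exact hy
  · intro h; exact ⟨π.symm x, by simpa using h, by simp⟩

def has1 : Letter → ℕ → Prop
  | one, _ => True
  | two, _ => False
  | mix s, r => 2 * r < s

def has2 : Letter → ℕ → Prop
  | one, _ => False
  | two, _ => True
  | mix s, r => s ≤ 2 * r + 1

lemma has_or (l : Letter) (r : ℕ) : has1 l r ∨ has2 l r := by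
  cases l <;> simp [has1, has2]; omega

abbrev Tab := ℕ → ℕ → Finset ℕ

def PP (i : ℕ) (T : Tab) (r j : ℕ) : Prop := i ∈ T r j ∨ i + 1 ∈ T r j

noncomputable def dec (i : ℕ) (T : Tab) (w : ℕ → Letter) : Tab := fun r j =>
  (T r j).filter (fun x => x ≠ i ∧ x ≠ i + 1) ∪
    ((if PP i T r j ∧ has1 (w j) r then {i} else ∅) ∪
     (if PP i T r j ∧ has2 (w j) r then {i+1} else ∅))

lemma mem_dec_i {i : ℕ} {T : Tab} {w : ℕ → Letter} {r j : ℕ} :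
    i ∈ dec i T w r j ↔ PP i T r j ∧ has1 (w j) r := by
  unfold dec
  split_ifs <;> simp_all

lemma mem_dec_i1 {i : ℕ} {T : Tab} {w : ℕ → Letter} {r j : ℕ} :
    i + 1 ∈ dec i T w r j ↔ PP i T r j ∧ has2 (w j) r := by
  unfold dec
  split_ifs <;> simp_all

lemma mem_dec_ne {i : ℕ} {T : Tab} {w : ℕ → Letter} {r j x : ℕ} (h1 : x ≠ i) (h2 : x ≠ i + 1) :
    x ∈ dec i T w r j ↔ x ∈ T r j := by
  unfold dec
  split_ifs <;> simp_all

lemma PP_dec (i : ℕ) (T : Tab) (w : ℕ → Letter) : PP i (dec i T w) = PP i T := by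
  funext r j
  simp only [PP, mem_dec_i, mem_dec_i1, eq_iff_iff]
  have := has_or (w j) r
  tauto

lemma dec_dec (i : ℕ) (T : Tab) (w w' : ℕ → Letter) : dec i (dec i T w) w' = dec i T w' := by
  funext r j
  ext x
  by_cases h1 : x = i
  · subst h1; rw [mem_dec_i, mem_dec_i, PP_dec]
  by_cases h2 : x = i + 1
  · subst h2; rw [mem_dec_i1, mem_dec_i1, PP_dec]
  rw [mem_dec_ne h1 h2, mem_dec_ne h1 h2, mem_dec_ne h1 h2]

lemma dec_inj {i : ℕ} {T : Tab} {a b : ℕ → ℕ} (hP : ∀ r j, PP i T r j ↔ a j ≤ r ∧ r < b j)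
    {w w' : ℕ → Letter} (hw : Valid a b w) (hw' : Valid a b w') (h : dec i T w = dec i T w') :
    w = w' := by
  funext j
  have H1 : ∀ r, a j ≤ r → r < b j → (has1 (w j) r ↔ has1 (w' j) r) := by
    intro r h1 h2
    have e : i ∈ dec i T w r j ↔ i ∈ dec i T w' r j := by rw [h]
    rw [mem_dec_i, mem_dec_i] at e
    have := (hP r j).2 ⟨h1, h2⟩
    tauto
  have H2 : ∀ r, a j ≤ r → r < b j → (has2 (w j) r ↔ has2 (w' j) r) := by
    intro r h1 h2
    have e : i + 1 ∈ dec i T w r j ↔ i + 1 ∈ dec i T w' r j := by rw [h]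
    rw [mem_dec_i1, mem_dec_i1] at e
    have := (hP r j).2 ⟨h1, h2⟩
    tauto
  have v := hw j
  have v' := hw' j
  have A1 := H1 (a j) le_rfl
  have A2 := H2 (a j) le_rfl
  have B1 := H1 (b j - 1)
  have B2 := H2 (b j - 1)
  cases e : w j with
  | one =>
    cases e' : w' j with
    | one => rfl
    | two => simp_all [has1, has2]
    | mix t => simp [e, e', has1, has2] at A1 A2 B1 B2 v v'; omega
  | two =>
    cases e' : w' j with
    | one => simp_all [has1, has2]
    | two => rfl
    | mix t => simp [e, e', has1, has2] at A1 A2 B1 B2 v v'; omega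
  | mix s =>
    cases e' : w' j with
    | one => simp [e, e', has1, has2] at A1 A2 B1 B2 v v'; omega
    | two => simp [e, e', has1, has2] at A1 A2 B1 B2 v v'; omega
    | mix t =>
      congr 1
      have C1 := H1 (s/2)
      have C2 := H2 (s/2)
      have D1 := H1 (t/2)
      have D2 := H2 (t/2)
      simp only [e, e', has1, has2] at *
      simp at v v'
      omega

section shape
variable {lam mu : ℕ → ℕ} {T : Tab} {i : ℕ}

lemma anti {f : ℕ → ℕ} (h : IsPartitionFun f) {r r' : ℕ} (hr : r ≤ r') : f r' ≤ f r :=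
  antitone_nat_of_succ_le h.1 hr

lemma inShape_of_mem (hT : IsSVRPP lam mu T) {r j x : ℕ} (h : x ∈ T r j) : InShape lam mu r j := by
  by_contra hc
  rw [hT.1 r j hc] at h
  simp at h

lemma row_le (hT : IsSVRPP lam mu T) {r j k x y : ℕ} (hjk : j < k) (hx : x ∈ T r j)
    (hy : y ∈ T r k) : x ≤ y := by
  induction k, hjk using Nat.le_induction generalizing y with
  | base => exact hT.2.2.2.1 r j (inShape_of_mem hT hx) (inShape_of_mem hT hy) x hx y hy
  | succ k hk ih =>
    have h1 := inShape_of_mem hT hx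
    have h2 := inShape_of_mem hT hy
    have h3 : InShape lam mu r k := ⟨by have := h1.1; omega, by have := h2.2; omega⟩
    obtain ⟨z, hz⟩ := hT.2.1 r k h3
    exact (ih hz).trans (hT.2.2.2.1 r k h3 h2 z hz y hy)

lemma col_le (hlam : IsPartitionFun lam) (hmu : IsPartitionFun mu)
    (hT : IsSVRPP lam mu T) {r r' j x y : ℕ} (hr : r < r') (hx : x ∈ T r j)
    (hy : y ∈ T r' j) : x ≤ y := by
  induction r', hr using Nat.le_induction generalizing y with
  | base => exact hT.2.2.2.2 r j (inShape_of_mem hT hx) (inShape_of_mem hT hy) x hx y hy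
  | succ k hk ih =>
    have h1 := inShape_of_mem hT hx
    have h2 := inShape_of_mem hT hy
    have h3 : InShape lam mu k j := ⟨(anti hmu (by omega)).trans h1.1,
      h2.2.trans_le (anti hlam (by omega))⟩
    obtain ⟨z, hz⟩ := hT.2.1 k j h3
    exact (ih hz).trans (hT.2.2.2.2 k j h3 h2 z hz y hy)

lemma mono_le (hlam : IsPartitionFun lam) (hmu : IsPartitionFun mu)
    (hT : IsSVRPP lam mu T) {r r' j j' x y : ℕ} (hr : r ≤ r') (hj : j ≤ j')
    (hne : r ≠ r' ∨ j ≠ j') (hx : x ∈ T r j) (hy : y ∈ T r' j') : x ≤ y := by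
  rcases hr.lt_or_eq with hr | rfl
  · rcases hj.lt_or_eq with hj | rfl
    · have h1 := inShape_of_mem hT hx
      have h2 := inShape_of_mem hT hy
      have h3 : InShape lam mu r' j := ⟨(anti hmu hr.le).trans h1.1, hj.trans h2.2⟩
      obtain ⟨z, hz⟩ := hT.2.1 r' j h3
      exact (col_le hlam hmu hT hr hx hz).trans (row_le hT hj hz hy)
    · exact col_le hlam hmu hT hr hx hy
  · exact row_le hT (by omega) hx hy

lemma PP_inShape (hT : IsSVRPP lam mu T) {r j : ℕ} (h : PP i T r j) : InShape lam mu r j := by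
  rcases h with h | h <;> exact inShape_of_mem hT h

lemma PP_exists {r j : ℕ} (h : PP i T r j) : ∃ x, x ∈ T r j ∧ i ≤ x ∧ x ≤ i + 1 := by
  rcases h with h | h
  · exact ⟨_, h, by omega, by omega⟩
  · exact ⟨_, h, by omega, by omega⟩

lemma PP_convex (hlam : IsPartitionFun lam) (hmu : IsPartitionFun mu)
    (hT : IsSVRPP lam mu T) {r r' j j' r0 j0 : ℕ} (h : PP i T r j) (h' : PP i T r' j')
    (hr : r ≤ r0) (hr' : r0 ≤ r') (hj : j ≤ j0) (hj' : j0 ≤ j') : PP i T r0 j0 := by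
  by_cases e : r = r0 ∧ j = j0
  · obtain ⟨rfl, rfl⟩ := e; exact h
  by_cases e' : r0 = r' ∧ j0 = j'
  · obtain ⟨rfl, rfl⟩ := e'; exact h'
  have s1 := PP_inShape hT h
  have s2 := PP_inShape hT h'
  have s3 : InShape lam mu r0 j0 := ⟨(anti hmu hr).trans (s1.1.trans hj),
    (hj'.trans_lt s2.2).trans_le (anti hlam hr')⟩
  obtain ⟨z, hz⟩ := hT.2.1 r0 j0 s3
  obtain ⟨x, hx, hx1, hx2⟩ := PP_exists h
  obtain ⟨y, hy, hy1, hy2⟩ := PP_exists h'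
  have l1 := mono_le hlam hmu hT hr hj (by omega) hx hz
  have l2 := mono_le hlam hmu hT hr' hj' (by omega) hz hy
  have : z = i ∨ z = i + 1 := by omega
  rcases this with rfl | rfl
  · exact Or.inl hz
  · exact Or.inr hz

noncomputable def bd (P : ℕ → ℕ → Prop) (j : ℕ) : ℕ × ℕ :=
  if h : ∃ ab : ℕ × ℕ, ∀ r, P r j ↔ ab.1 ≤ r ∧ r < ab.2 then h.choose else 0

lemma bd_spec (hlam : IsPartitionFun lam) (hmu : IsPartitionFun mu)
    (hT : IsSVRPP lam mu T) (r j : ℕ) :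
    PP i T r j ↔ (bd (PP i T) j).1 ≤ r ∧ r < (bd (PP i T) j).2 := by
  have h : ∃ ab : ℕ × ℕ, ∀ r, PP i T r j ↔ ab.1 ≤ r ∧ r < ab.2 := by
    by_cases hne : ∃ r, PP i T r j
    · obtain ⟨N, hN⟩ := hlam.2
      have hb : ∀ r, PP i T r j → r ≤ N := by
        intro r hr
        by_contra hc
        have := (PP_inShape hT hr).2
        rw [hN r (by omega)] at this
        omega
      refine ⟨(Nat.find hne, Nat.findGreatest (fun r => PP i T r j) N + 1), fun r => ?_⟩
      have g1 := Nat.find_spec hne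
      obtain ⟨r1, hr1⟩ := hne
      have g2 := Nat.findGreatest_spec (P := fun r => PP i T r j) (hb r1 hr1) hr1
      constructor
      · intro h
        exact ⟨Nat.find_min' _ h, Nat.lt_succ_of_le (Nat.le_findGreatest (hb r h) h)⟩
      · rintro ⟨h1, h2⟩
        exact PP_convex hlam hmu hT g1 g2 h1 (by simpa using Nat.le_of_lt_succ h2) le_rfl le_rfl
    · refine ⟨(0, 0), fun r => ?_⟩
      constructor
      · intro h; exact absurd ⟨r, h⟩ hne
      · rintro ⟨h1, h2⟩; simp at h2
  have := h.choose_spec r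
  rw [bd, dif_pos h]
  exact this

lemma exists_enc (hlam : IsPartitionFun lam) (hmu : IsPartitionFun mu)
    (hT : IsSVRPP lam mu T) {a b : ℕ → ℕ} (hP : ∀ r j, PP i T r j ↔ a j ≤ r ∧ r < b j) :
    ∃ w, Valid a b w ∧ dec i T w = T := by
  have key : ∀ j, ∃ l : Letter, ((l = one → a j < b j) ∧ (l = two → a j < b j) ∧
      ∀ s, l = mix s → (2 * a j < s ∧ s < 2 * b j) ∨ (b j ≤ a j ∧ s = 0)) ∧
      ∀ r, (i ∈ T r j ↔ PP i T r j ∧ has1 l r) ∧ (i + 1 ∈ T r j ↔ PP i T r j ∧ has2 l r) := by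
    intro j
    by_cases hab : b j ≤ a j
    · refine ⟨mix 0, by simp; omega, fun r => ?_⟩
      have : ¬ PP i T r j := by rw [hP]; omega
      simp only [this, false_and, iff_false]
      exact not_or.1 this
    · push Not at hab
      by_cases h2 : ∃ q, i + 1 ∈ T q j
      · have q1 := Nat.find_spec h2
        have q2 : ∀ r, i + 1 ∈ T r j → Nat.find h2 ≤ r := fun r hr => Nat.find_min' h2 hr
        generalize Nat.find h2 = q at q1 q2
        have hq := (hP q j).1 (Or.inr q1)
        have q3 : ∀ r, q < r → i ∉ T r j := by
          intro r hr hi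
          have := col_le hlam hmu hT hr q1 hi
          omega
        have q4 : ∀ r, PP i T r j → r < q → i ∈ T r j := by
          intro r hp hr
          rcases hp with h | h
          · exact h
          · have := q2 r h; omega
        have q5 : ∀ r, PP i T r j → q < r → i + 1 ∈ T r j := by
          intro r hp hr
          rcases hp with h | h
          · exact absurd h (q3 r hr)
          · exact h
        have p1 : ∀ r, i ∈ T r j → PP i T r j := fun r h => Or.inl h
        have p2 : ∀ r, i + 1 ∈ T r j → PP i T r j := fun r h => Or.inr h
        by_cases hb : i ∈ T q j
        · refine ⟨mix (2 * q + 1), by simp; omega, fun r => ?_⟩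
          simp only [has1, has2]
          rcases lt_trichotomy r q with h | h | h
          · have := q4 r; have := p1 r; have := p2 r; have := q2 r; have := q3 r; grind
          · subst h; have := p1 r; have := p2 r; grind
          · have := q5 r; have := p1 r; have := p2 r; have := q2 r; have := q3 r; grind
        · by_cases hqa : q = a j
          · refine ⟨two, by simp; omega, fun r => ?_⟩
            simp only [has1, has2]
            have := hP r j
            rcases lt_trichotomy r q with h | h | h
            · have := q4 r; have := p1 r; have := p2 r; have := q2 r; have := q3 r; grind
            · subst h; have := p1 r; have := p2 r; grind
            · have := q5 r; have := p1 r; have := p2 r; have := q2 r; have := q3 r; grind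
          · refine ⟨mix (2 * q), by simp; omega, fun r => ?_⟩
            simp only [has1, has2]
            rcases lt_trichotomy r q with h | h | h
            · have := q4 r; have := p1 r; have := p2 r; have := q2 r; have := q3 r; grind
            · subst h; have := p1 r; have := p2 r; grind
            · have := q5 r; have := p1 r; have := p2 r; have := q2 r; have := q3 r; grind
      · refine ⟨one, by simp; omega, fun r => ?_⟩
        have : i + 1 ∉ T r j := fun h => h2 ⟨r, h⟩
        simp [has1, has2, PP, this]
  choose w hw1 hw2 using key
  refine ⟨w, hw1, ?_⟩
  funext r j
  ext x
  by_cases h1 : x = i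
  · subst h1; rw [mem_dec_i]; exact (hw2 j r).1.symm
  by_cases h2 : x = i + 1
  · subst h2; rw [mem_dec_i1]; exact (hw2 j r).2.symm
  rw [mem_dec_ne h1 h2]

lemma bad_pair {a b : ℕ → ℕ} (hlam : IsPartitionFun lam) (hmu : IsPartitionFun mu)
    (hT : IsSVRPP lam mu T) (hP : ∀ r j, PP i T r j ↔ a j ≤ r ∧ r < b j)
    {w : ℕ → Letter} (hd : dec i T w = T) {r r' j j' : ℕ}
    (hr : r ≤ r') (hj : j < j') (h1 : a j ≤ r) (h2 : r < b j) (h3 : a j' ≤ r') (h4 : r' < b j')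
    (h5 : has2 (w j) r) (h6 : has1 (w j') r') : False := by
  have m1 : i + 1 ∈ T r j := by
    rw [← hd, mem_dec_i1]; exact ⟨(hP _ _).2 ⟨h1, h2⟩, h5⟩
  have m2 : i ∈ T r' j' := by
    rw [← hd, mem_dec_i]; exact ⟨(hP _ _).2 ⟨h3, h4⟩, h6⟩
  have := mono_le hlam hmu hT hr hj.le (by omega) m1 m2
  omega

lemma good_enc {a b : ℕ → ℕ} (hlam : IsPartitionFun lam) (hmu : IsPartitionFun mu)
    (hT : IsSVRPP lam mu T) (hP : ∀ r j, PP i T r j ↔ a j ≤ r ∧ r < b j)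
    {w : ℕ → Letter} (hv : Valid a b w) (hd : dec i T w = T) : Benign w ∧ Red a b w := by
  constructor
  · intro j k s t hjk hj hk hs ht
    by_contra hc
    have v1 := (hv j).2.2 s hj
    have v2 := (hv k).2.2 t hk
    have hc' : s ≤ t ∧ (s = t → s % 2 = 1) := by
      refine ⟨by omega, fun e => ?_⟩
      by_contra h
      exact hc (Or.inr ⟨e.symm, Nat.even_iff.2 (by omega)⟩)
    refine bad_pair hlam hmu hT hP hd (r := s / 2) (r' := (t - 1) / 2) (j := j) (j' := k)
      (by omega) hjk (by omega) (by omega) (by omega) (by omega) ?_ ?_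
    · rw [hj]; simp only [has2]; omega
    · rw [hk]; simp only [has1]; omega
  · rintro j ⟨h1, h2, h3, h4⟩
    have v1 := hv j
    have v2 := hv (j+1)
    rcases h4 with ⟨e, e'⟩ | ⟨s, e, e', e''⟩ | ⟨s, e, e', e''⟩
    · refine bad_pair hlam hmu hT hP hd (r := a j) (r' := a j) (j := j) (j' := j + 1)
        (by omega) (by omega) (by omega) (by omega) (by omega) (by omega) ?_ ?_
      · rw [e]; trivial
      · rw [e']; trivial
    · refine bad_pair hlam hmu hT hP hd (r := a j) (r' := a j) (j := j) (j' := j + 1)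
        (by omega) (by omega) (by omega) (by omega) (by omega) (by omega) ?_ ?_
      · rw [e]; trivial
      · rw [e']; exact e''
    · have v := v1.2.2 s e
      refine bad_pair hlam hmu hT hP hd (r := b (j+1) - 1) (r' := b (j+1) - 1) (j := j)
        (j' := j + 1)
        (by omega) (by omega) (by omega) (by omega) (by omega) (by omega) ?_ ?_
      · rw [e]; simp only [has2]; omega
      · rw [e']; trivial

lemma dec_le {w : ℕ → Letter} {r j r' j' : ℕ} (hle : FinsetLE (T r j) (T r' j'))
    (hbad : PP i T r j → PP i T r' j' → has2 (w j) r → has1 (w j') r' → False) :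
    FinsetLE (dec i T w r j) (dec i T w r' j') := by
  intro x hx y hy
  have X : (x ≠ i ∧ x ≠ i + 1 ∧ x ∈ T r j) ∨ (PP i T r j ∧ (x = i ∨ (x = i + 1 ∧ has2 (w j) r))) := by
    by_cases h1 : x = i
    · subst h1; rw [mem_dec_i] at hx; tauto
    by_cases h2 : x = i + 1
    · subst h2; rw [mem_dec_i1] at hx; tauto
    rw [mem_dec_ne h1 h2] at hx; tauto
  have Y : (y ≠ i ∧ y ≠ i + 1 ∧ y ∈ T r' j') ∨
      (PP i T r' j' ∧ (y = i + 1 ∨ (y = i ∧ has1 (w j') r'))) := by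
    by_cases h1 : y = i
    · subst h1; rw [mem_dec_i] at hy; tauto
    by_cases h2 : y = i + 1
    · subst h2; rw [mem_dec_i1] at hy; tauto
    rw [mem_dec_ne h1 h2] at hy; tauto
  rcases X with ⟨x1, x2, x3⟩ | ⟨x1, x2⟩
  · rcases Y with ⟨y1, y2, y3⟩ | ⟨y1, y2⟩
    · exact hle x x3 y y3
    · obtain ⟨z, hz, hz1, hz2⟩ := PP_exists y1
      have := hle x x3 z hz
      omega
  · rcases Y with ⟨y1, y2, y3⟩ | ⟨y1, y2⟩
    · obtain ⟨z, hz, hz1, hz2⟩ := PP_exists x1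
      have := hle z hz y y3
      omega
    · have := hbad x1 y1
      by_contra hc
      have e1 : x ≠ i := by omega
      have e2 : y ≠ i + 1 := by omega
      tauto

lemma svrpp_dec {a b : ℕ → ℕ} (hlam : IsPartitionFun lam) (hmu : IsPartitionFun mu)
    (hi : 1 ≤ i)
    (hT : IsSVRPP lam mu T) (hP : ∀ r j, PP i T r j ↔ a j ≤ r ∧ r < b j)
    {w : ℕ → Letter} (hv : Valid a b w) (hb : Benign w) (hr : Red a b w) :
    IsSVRPP lam mu (dec i T w) := by
  refine ⟨?_, ?_, ?_, ?_, ?_⟩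
  · intro r j h
    have h1 : ¬ PP i T r j := fun h' => h (PP_inShape hT h')
    simp [dec, h1, hT.1 r j h]
  · intro r j h
    obtain ⟨x, hx⟩ := hT.2.1 r j h
    by_cases hp : PP i T r j
    · rcases has_or (w j) r with h | h
      · exact ⟨i, mem_dec_i.2 ⟨hp, h⟩⟩
      · exact ⟨i + 1, mem_dec_i1.2 ⟨hp, h⟩⟩
    · refine ⟨x, (mem_dec_ne ?_ ?_).2 hx⟩
      · rintro rfl; exact hp (Or.inl hx)
      · rintro rfl; exact hp (Or.inr hx)
  · intro r j x hx
    by_cases h1 : x = i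
    · omega
    by_cases h2 : x = i + 1
    · omega
    exact hT.2.2.1 r j x ((mem_dec_ne h1 h2).1 hx)
  · intro r j s1 s2
    refine dec_le (hT.2.2.2.1 r j s1 s2) ?_
    intro p1 p2 g1 g2
    have q1 := (hP _ _).1 p1
    have q2 := (hP _ _).1 p2
    have A : a (j+1) ≤ a j := by
      have : PP i T (a j) (j+1) :=
        PP_convex hlam hmu hT ((hP (a j) j).2 ⟨le_rfl, by omega⟩) p2 le_rfl (by omega) (by omega)
          le_rfl
      exact ((hP _ _).1 this).1
    have B : b (j+1) ≤ b j := by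
      have : PP i T (b (j+1) - 1) j :=
        PP_convex hlam hmu hT p1 ((hP (b (j+1) - 1) (j+1)).2 ⟨by omega, by omega⟩) (by omega)
          le_rfl le_rfl (by omega)
      have := ((hP _ _).1 this).2
      omega
    refine absurd ?_ (hr j)
    refine ⟨A, by omega, B, ?_⟩
    cases e : w j with
    | one => simp [e, has2] at g1
    | two =>
      cases e' : w (j+1) with
      | one => simp
      | two => simp [e', has1] at g2
      | mix t => simp [e', has1] at g2; simp; omega
    | mix s =>
      cases e' : w (j+1) with
      | one => simp [e, has2] at g1; simp; omega
      | two => simp [e', has1] at g2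
      | mix t =>
        exfalso
        simp only [e, e', has1, has2] at g1 g2
        have hs : 0 < s := by
          have := (hv j).2.2 s e
          omega
        rcases hb j (j+1) s t (by omega) e e' hs (by omega) with h | ⟨h, h'⟩
        · omega
        · rw [Nat.even_iff] at h'; omega
  · intro r j s1 s2
    refine dec_le (hT.2.2.2.2 r j s1 s2) ?_
    intro p1 p2 g1 g2
    cases e : w j <;> simp only [e, has1, has2] at g1 g2
    omega

lemma ircont_other {w : ℕ → Letter} {v : ℕ} (h1 : v ≠ i) (h2 : v ≠ i + 1) :
    ircont (dec i T w) v = ircont T v := by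
  simp only [ircont, mem_dec_ne h1 h2]

lemma ircont_i {a b : ℕ → ℕ} (hP : ∀ r j, PP i T r j ↔ a j ≤ r ∧ r < b j)
    {w : ℕ → Letter} (hv : Valid a b w) :
    ircont (dec i T w) i = Set.ncard {j | w j = one ∨ ∃ s, 0 < s ∧ w j = mix s} := by
  unfold ircont
  congr 1
  ext j
  simp only [Set.mem_ofPred_eq, mem_dec_i, hP]
  have v := hv j
  cases e : w j with
  | one => simp [has1]; exact ⟨a j, le_rfl, v.1 e⟩
  | two => simp [has1]
  | mix s =>
    have v := v.2.2 s e
    simp only [has1]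
    constructor
    · rintro ⟨r, h1, h2⟩; exact Or.inr ⟨s, by omega, rfl⟩
    · rintro (h | ⟨t, h1, h2⟩)
      · cases h
      · cases h2; exact ⟨a j, by omega⟩

lemma ircont_i1 {a b : ℕ → ℕ} (hP : ∀ r j, PP i T r j ↔ a j ≤ r ∧ r < b j)
    {w : ℕ → Letter} (hv : Valid a b w) :
    ircont (dec i T w) (i + 1) = Set.ncard {j | w j = two ∨ ∃ s, 0 < s ∧ w j = mix s} := by
  unfold ircont
  congr 1
  ext j
  simp only [Set.mem_ofPred_eq, mem_dec_i1, hP]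
  have v := hv j
  cases e : w j with
  | one => simp [has2]
  | two => simp [has2]; exact ⟨a j, le_rfl, v.2.1 e⟩
  | mix s =>
    have v := v.2.2 s e
    simp only [has2]
    constructor
    · rintro ⟨r, h1, h2⟩; exact Or.inr ⟨s, by omega, rfl⟩
    · rintro (h | ⟨t, h1, h2⟩)
      · cases h
      · cases h2; exact ⟨b j - 1, by omega⟩

lemma ceq_dec {a b : ℕ → ℕ}
    (hT : IsSVRPP lam mu T) (hP : ∀ r j, PP i T r j ↔ a j ≤ r ∧ r < b j)
    {w : ℕ → Letter} (hv : Valid a b w) (hS : IsSVRPP lam mu (dec i T w)) (r : ℕ) :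
    ceq lam mu (dec i T w) r + Set.ncard {j | w j = mix (2 * r + 2)} =
      Set.ncard {j | (PP i T r j ∧ PP i T (r+1) j) ∨
        ∃ m, m ≠ i ∧ m ≠ i + 1 ∧ m ∈ T r j ∧ m ∈ T (r+1) j} := by
  have hE : ceq lam mu (dec i T w) r =
      Set.ncard {j | ∃ m, m ∈ dec i T w r j ∧ m ∈ dec i T w (r+1) j} := by
    unfold ceq
    congr 1
    ext j
    simp only [Set.mem_ofPred_eq]
    constructor
    · rintro ⟨_, _, m, h1, _, h2, _⟩; exact ⟨m, h1, h2⟩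
    · rintro ⟨m, h1, h2⟩
      have s1 := inShape_of_mem hS h1
      have s2 := inShape_of_mem hS h2
      have := hS.2.2.2.2 r j s1 s2
      exact ⟨s1, s2, m, h1, fun x hx => this x hx m h2, h2, fun x hx => this m h1 x hx⟩
  have hM : ∀ j, w j = mix (2 * r + 2) → PP i T r j ∧ PP i T (r+1) j := by
    intro j hj
    have := (hv j).2.2 _ hj
    rw [hP, hP]; omega
  have hfin : ∀ s : Set ℕ, (∀ j ∈ s, InShape lam mu r j) → s.Finite := by
    intro s hs
    exact (Set.finite_Iio (lam r)).subset fun j hj => (hs j hj).2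
  rw [hE, ← Set.ncard_union_eq ?_ (hfin _ ?_) (hfin _ ?_)]
  · congr 1
    ext j
    simp only [Set.mem_union, Set.mem_ofPred_eq]
    constructor
    · rintro (⟨m, h1, h2⟩ | h)
      · by_cases e1 : m = i
        · subst e1; rw [mem_dec_i] at h1 h2; exact Or.inl ⟨h1.1, h2.1⟩
        by_cases e2 : m = i + 1
        · subst e2; rw [mem_dec_i1] at h1 h2; exact Or.inl ⟨h1.1, h2.1⟩
        rw [mem_dec_ne e1 e2] at h1 h2
        exact Or.inr ⟨m, e1, e2, h1, h2⟩
      · exact Or.inl (hM j h)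
    · rintro (⟨h1, h2⟩ | ⟨m, e1, e2, h1, h2⟩)
      · have : (has1 (w j) r ∧ has1 (w j) (r+1)) ∨ (has2 (w j) r ∧ has2 (w j) (r+1)) ∨
            w j = mix (2 * r + 2) := by
          cases e : w j with
          | one => simp [has1]
          | two => simp [has2]
          | mix s => simp only [has1, has2, mix.injEq]; omega
        rcases this with h | h | h
        · exact Or.inl ⟨i, mem_dec_i.2 ⟨h1, h.1⟩, mem_dec_i.2 ⟨h2, h.2⟩⟩
        · exact Or.inl ⟨i + 1, mem_dec_i1.2 ⟨h1, h.1⟩, mem_dec_i1.2 ⟨h2, h.2⟩⟩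
        · exact Or.inr h
      · exact Or.inl ⟨m, (mem_dec_ne e1 e2).2 h1, (mem_dec_ne e1 e2).2 h2⟩
  · rw [Set.disjoint_left]
    rintro j ⟨m, h1, h2⟩ hj
    simp only [Set.mem_ofPred_eq] at hj
    by_cases e1 : m = i
    · subst e1; rw [mem_dec_i, hj] at h2; simp only [has1] at h2; omega
    by_cases e2 : m = i + 1
    · subst e2; rw [mem_dec_i1, hj] at h1; simp [has2] at h1
    rw [mem_dec_ne e1 e2] at h1 h2
    obtain ⟨p1, p2⟩ := hM j hj
    have hle := hT.2.2.2.2 r j (inShape_of_mem hT h1) (inShape_of_mem hT h2)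
    obtain ⟨x, hx, hx1, hx2⟩ := PP_exists p1
    obtain ⟨y, hy, hy1, hy2⟩ := PP_exists p2
    have := hle x hx m h2
    have := hle m h1 y hy
    omega
  · rintro j ⟨m, h1, h2⟩; exact inShape_of_mem hS h1
  · intro j hj; exact PP_inShape hT (hM j hj).1

lemma exv_dec {a b : ℕ → ℕ}
    (hT : IsSVRPP lam mu T) (hP : ∀ r j, PP i T r j ↔ a j ≤ r ∧ r < b j)
    {w : ℕ → Letter} (hv : Valid a b w) (r : ℕ) :
    exv lam mu (dec i T w) r = (∑ j ∈ Finset.Ico (mu r) (lam r),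
      (((T r j).filter (fun x => x ≠ i ∧ x ≠ i + 1)).card + (if PP i T r j then 1 else 0) - 1)) +
      Set.ncard {j | w j = mix (2 * r + 1)} := by
  have hM : ∀ j, w j = mix (2 * r + 1) → PP i T r j := by
    intro j hj
    have := (hv j).2.2 _ hj
    rw [hP]; omega
  have hN : Set.ncard {j | w j = mix (2 * r + 1)} =
      ∑ j ∈ Finset.Ico (mu r) (lam r), (if w j = mix (2 * r + 1) then 1 else 0) := by
    rw [← Finset.card_filter, ← Set.ncard_coe_finset]
    congr 1
    ext j
    simp only [Set.mem_ofPred_eq, Finset.coe_filter, Finset.mem_Ico]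
    constructor
    · intro h; exact ⟨PP_inShape hT (hM j h), h⟩
    · exact fun h => h.2
  rw [hN, ← Finset.sum_add_distrib]
  unfold exv
  apply Finset.sum_congr rfl
  intro j _
  unfold dec
  rw [Finset.card_union_of_disjoint, Finset.card_union_of_disjoint]
  · by_cases hp : PP i T r j
    · cases e : w j with
      | one => simp [hp, has1, has2]
      | two => simp [hp, has1, has2]
      | mix s =>
        simp only [hp, has1, has2, mix.injEq, true_and, if_true]
        split_ifs <;> simp <;> omega
    · have := mt (hM j) hp
      simp [hp, this]
  · split_ifs <;> simp
  · rw [Finset.disjoint_left]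
    intro x hx
    simp only [Finset.mem_filter] at hx
    split_ifs <;> simp <;> omega

end shape

lemma exists_word {lam mu : ℕ → ℕ} {T : Tab} {i : ℕ} (hlam : IsPartitionFun lam)
    (hmu : IsPartitionFun mu) (hT : IsSVRPP lam mu T) :
    ∃ w, Valid (fun j => (bd (PP i T) j).1) (fun j => (bd (PP i T) j).2) w ∧ dec i T w = T :=
  exists_enc hlam hmu hT (fun r j => bd_spec hlam hmu hT r j)

noncomputable def enc (i : ℕ) (T : Tab) : ℕ → Letter :=
  if h : ∃ w, Valid (fun j => (bd (PP i T) j).1) (fun j => (bd (PP i T) j).2) w ∧ dec i T w = T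
  then h.choose else fun _ => one

noncomputable def Phi (i : ℕ) (T : Tab) : Tab :=
  dec i T (Psi (fun j => (bd (PP i T) j).1) (fun j => (bd (PP i T) j).2) (enc i T))

lemma Phi_spec {lam mu : ℕ → ℕ} {T : Tab} {i : ℕ} (hlam : IsPartitionFun lam)
    (hmu : IsPartitionFun mu) (hi : 1 ≤ i) (hT : IsSVRPP lam mu T) :
    IsSVRPP lam mu (Phi i T) ∧ Phi i (Phi i T) = T ∧
      (∀ r, ceq lam mu (Phi i T) r = ceq lam mu T r) ∧
      (∀ r, exv lam mu (Phi i T) r = exv lam mu T r) ∧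
      (∀ v, ircont (Phi i T) v = ircont T (Equiv.swap i (i + 1) v)) := by
  have E : ∀ T, IsSVRPP lam mu T →
      Valid (fun j => (bd (PP i T) j).1) (fun j => (bd (PP i T) j).2) (enc i T) ∧
      dec i T (enc i T) = T := by
    intro T hT
    have h := exists_word (i := i) hlam hmu hT
    rw [enc, dif_pos h]
    exact h.choose_spec
  obtain ⟨e1, e2⟩ := E T hT
  have hP : ∀ r j, PP i T r j ↔ (fun j => (bd (PP i T) j).1) j ≤ r ∧
      r < (fun j => (bd (PP i T) j).2) j := fun r j => bd_spec hlam hmu hT r j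
  have key : ∀ w, Phi i (dec i T w) = dec i T (Psi (fun j => (bd (PP i T) j).1)
      (fun j => (bd (PP i T) j).2) (enc i (dec i T w))) := by
    intro w
    rw [Phi, dec_dec, PP_dec]
  have E' : ∀ w, IsSVRPP lam mu (dec i T w) →
      Valid (fun j => (bd (PP i T) j).1) (fun j => (bd (PP i T) j).2) (enc i (dec i T w)) ∧
      dec i T (enc i (dec i T w)) = dec i T w := by
    intro w hw
    have := E _ hw
    rwa [PP_dec, dec_dec] at this
  have hPhi : Phi i T = dec i T (Psi (fun j => (bd (PP i T) j).1)
      (fun j => (bd (PP i T) j).2) (enc i T)) := rfl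
  generalize (fun j => (bd (PP i T) j).1) = a at *
  generalize (fun j => (bd (PP i T) j).2) = b at *
  have hn : ∀ w j, Desc a b w j → j + 1 < lam 0 := by
    rintro w j ⟨h1, h2, h3, -⟩
    have : PP i T (a j) (j+1) := (hP _ _).2 ⟨h1, h2⟩
    exact (PP_inShape hT this).2.trans_le (anti hlam (Nat.zero_le _))
  obtain ⟨g1, g2⟩ := good_enc hlam hmu hT hP e1 e2
  obtain ⟨p1, p2, p3, p4, π, p5⟩ := Psi_spec hn e1 g1 g2
  have hS := svrpp_dec hlam hmu hi hT hP p1 p2 p3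
  rw [hPhi]
  refine ⟨hS, ?_, ?_, ?_, ?_⟩
  · obtain ⟨q1, q2⟩ := E' _ hS
    have := dec_inj hP q1 p1 q2
    rw [key, this, p4, e2]
  · intro r
    have c1 := ceq_dec hT hP p1 hS r
    have c2 := ceq_dec hT hP e1 (by rwa [e2]) r
    rw [e2] at c2
    have c3 : Set.ncard {j | Psi a b (enc i T) j = mix (2 * r + 2)} =
        Set.ncard {j | enc i T j = mix (2 * r + 2)} := by
      rw [p5, ncard_perm π (fun j => flipL (enc i T j) = mix (2 * r + 2))]
      congr 1; ext j
      simp only [Set.mem_ofPred_eq]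
      cases enc i T j <;> simp [flipL]
    omega
  · intro r
    have c1 := exv_dec hT hP p1 r
    have c2 := exv_dec hT hP e1 r
    rw [e2] at c2
    have c3 : Set.ncard {j | Psi a b (enc i T) j = mix (2 * r + 1)} =
        Set.ncard {j | enc i T j = mix (2 * r + 1)} := by
      rw [p5, ncard_perm π (fun j => flipL (enc i T j) = mix (2 * r + 1))]
      congr 1; ext j
      simp only [Set.mem_ofPred_eq]
      cases enc i T j <;> simp [flipL]
    rw [c1, c2, c3]
  · intro v
    have c1 := ircont_i hP e1
    have c2 := ircont_i1 hP e1
    rw [e2] at c1 c2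
    by_cases h1 : v = i
    · subst h1
      rw [Equiv.swap_apply_left, ircont_i hP p1, c2, p5,
        ncard_perm π (fun j => flipL (enc v T j) = one ∨ ∃ s, 0 < s ∧ flipL (enc v T j) = mix s)]
      congr 1; ext j
      simp only [Set.mem_ofPred_eq]
      cases enc v T j <;> simp [flipL]
    by_cases h2 : v = i + 1
    · subst h2
      rw [Equiv.swap_apply_right, ircont_i1 hP p1, c1, p5,
        ncard_perm π (fun j => flipL (enc i T j) = two ∨ ∃ s, 0 < s ∧ flipL (enc i T j) = mix s)]
      congr 1; ext j
      simp only [Set.mem_ofPred_eq]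
      cases enc i T j <;> simp [flipL]
    rw [Equiv.swap_apply_of_ne_of_ne h1 h2, ircont_other h1 h2]

end BK

/-- For any skew shape `lam/mu` and any positive integer `i`, there exists
an involution `Φ` on `SVRPP(lam/mu)` preserving the `ceq` and `ex` statistics and exchanging
the `i`-th and `(i+1)`-th entries of the `ircont` statistic. -/
theorem exists_bender_knuth_involution (lam mu : ℕ → ℕ)
    (hlam : IsPartitionFun lam) (hmu : IsPartitionFun mu)
    (hsub : ∀ r, mu r ≤ lam r) (i : ℕ) (hi : 1 ≤ i) :
    ∃ Φ : {T : ℕ → ℕ → Finset ℕ // IsSVRPP lam mu T} →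
          {T : ℕ → ℕ → Finset ℕ // IsSVRPP lam mu T},
      Function.Involutive Φ ∧
      ∀ T, (∀ r, ceq lam mu (Φ T).1 r = ceq lam mu T.1 r) ∧
           (∀ r, exv lam mu (Φ T).1 r = exv lam mu T.1 r) ∧
           (∀ v, ircont (Φ T).1 v = ircont T.1 (Equiv.swap i (i + 1) v)) := by
  refine ⟨fun T => ⟨BK.Phi i T.1, (BK.Phi_spec hlam hmu hi T.2).1⟩, ?_, ?_⟩
  · intro T
    exact Subtype.ext (BK.Phi_spec hlam hmu hi T.2).2.1
  · intro T
    exact (BK.Phi_spec hlam hmu hi T.2).2.2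
end

section
/- For any skew shape λ/μ, there exists an involution Φ on SVRPP^{12}(λ/μ) (the set of SVRPPs of shape λ/μ whose entries are nonempty subsets of {1,2}) such that for every T: ceq(Φ(T)) = ceq(T), ex(Φ(T)) = ex(T), and ircont(Φ(T)) is obtained from ircont(T) by exchanging its first two entries. -/
open scoped Classical

/-- Column letters. -/
inductive Ltr where
  | one : Ltr
  | two : Ltr
  | E : Ltr
  | M : ℕ → Ltr

namespace Ltr

def isTwo : List Ltr → Prop
  | (two :: _) => True
  | _ => False

def isM : List Ltr → Prop
  | (M _ :: _) => True
  | _ => False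

def n1 : List Ltr → ℕ
  | [] => 0
  | (one :: l) => n1 l + 1
  | (_ :: l) => n1 l

def n2 : List Ltr → ℕ
  | [] => 0
  | (two :: l) => n2 l + 1
  | (_ :: l) => n2 l

def seams : List Ltr → List ℕ
  | [] => []
  | (M s :: l) => s :: seams l
  | (_ :: l) => seams l

theorem isTwo_two (l) : isTwo (two :: l) := trivial
theorem isTwo_one (l) : ¬ isTwo (one :: l) := fun h => h
theorem isTwo_E (l) : ¬ isTwo (E :: l) := fun h => h
theorem isTwo_M (s l) : ¬ isTwo (M s :: l) := fun h => h
theorem isM_two (l) : ¬ isM (two :: l) := fun h => h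
theorem isM_one (l) : ¬ isM (one :: l) := fun h => h
theorem isM_E (l) : ¬ isM (E :: l) := fun h => h
theorem isM_M (s l) : isM (M s :: l) := trivial

noncomputable def Wd (emp conn : ℕ → Prop) (C : List ℕ → ℕ → Prop) :
    ℕ → List ℕ → Finset (List Ltr)
  | 0, S => if S = [] then {[]} else ∅
  | n + 1, S => if emp n then (Wd emp conn C n S).image (List.cons E) else
      ((Wd emp conn C n S).image (List.cons two) ∪
       ((Wd emp conn C n S).filter
          (fun l => ¬ (conn n ∧ isTwo l) ∧ ¬ (C S n ∧ isM l))).image (List.cons one)) ∪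
       (if C S n then
          ((Wd emp conn C n S.tail).filter (fun l => ¬ (C S (n-1) ∧ isTwo l))).image
            (List.cons (M (S.headD 0)))
        else ∅)

section GF
variable {R : Type} [CommRing R] (x y : R)
variable (emp conn : ℕ → Prop) (C : List ℕ → ℕ → Prop)

def wt (w : List Ltr) : R := x ^ n1 w * y ^ n2 w

noncomputable def F (n : ℕ) (S : List ℕ) : R := ∑ w ∈ Wd emp conn C n S, wt x y w
noncomputable def Bh (n : ℕ) (S : List ℕ) : R :=
  ∑ w ∈ Wd emp conn C n S, if isTwo w then wt x y w else 0
noncomputable def Mh (n : ℕ) (S : List ℕ) : R :=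
  ∑ w ∈ Wd emp conn C n S, if isM w then wt x y w else 0

theorem not_two_M (w : List Ltr) : ¬ (isTwo w ∧ isM w) := by
  rcases w with _ | ⟨_ | _ | _ | _, l⟩ <;> simp [isTwo, isM]

theorem sum_filter_aux (A : Finset (List Ltr)) (p q : Prop) (g : List Ltr → R) :
    ∑ w ∈ A.filter (fun l => ¬ (p ∧ isTwo l) ∧ ¬ (q ∧ isM l)), g w
      = ∑ w ∈ A, g w - (if p then ∑ w ∈ A, (if isTwo w then g w else 0) else 0)
        - (if q then ∑ w ∈ A, (if isM w then g w else 0) else 0) := by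
  rw [Finset.sum_filter]
  have h : ∀ w ∈ A, (if ¬ (p ∧ isTwo w) ∧ ¬ (q ∧ isM w) then g w else 0)
      = g w - (if p then (if isTwo w then g w else 0) else 0)
        - (if q then (if isM w then g w else 0) else 0) := by
    intro w _
    have := not_two_M w
    by_cases p <;> by_cases q <;> by_cases isTwo w <;> by_cases isM w <;> simp_all
  rw [Finset.sum_congr rfl h, Finset.sum_sub_distrib, Finset.sum_sub_distrib]
  by_cases p <;> by_cases q <;> simp_all

theorem sum_Wd_succ (n : ℕ) (S : List ℕ) (g : List Ltr → R) :
    ∑ w ∈ Wd emp conn C (n+1) S, g w =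
      if emp n then ∑ w ∈ Wd emp conn C n S, g (E :: w) else
      ∑ w ∈ Wd emp conn C n S, g (two :: w) +
       ∑ w ∈ (Wd emp conn C n S).filter
          (fun l => ¬ (conn n ∧ isTwo l) ∧ ¬ (C S n ∧ isM l)), g (one :: w) +
      (if C S n then ∑ w ∈ (Wd emp conn C n S.tail).filter (fun l => ¬ (C S (n-1) ∧ isTwo l)),
            g (M (S.headD 0) :: w) else 0) := by
  rw [Wd]
  have inj : ∀ c : Ltr, ∀ A : Set (List Ltr), Set.InjOn (List.cons c) A := by
    intro c A a _ b _ h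
    simpa using h
  split_ifs with h1 h2
  · rw [Finset.sum_image (inj _ _)]
  · rw [Finset.sum_union, Finset.sum_union, Finset.sum_image (inj _ _),
      Finset.sum_image (inj _ _), Finset.sum_image (inj _ _)]
    · rw [Finset.disjoint_left]
      intro a ha hb
      simp only [Finset.mem_image] at ha hb
      obtain ⟨u, _, rfl⟩ := ha
      obtain ⟨v, _, hv⟩ := hb
      simp at hv
    · rw [Finset.disjoint_left]
      intro a ha hb
      simp only [Finset.mem_image, Finset.mem_union] at ha hb
      obtain ⟨v, _, rfl⟩ := hb
      rcases ha with ⟨u, _, hu⟩ | ⟨u, _, hu⟩ <;> simp at hu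
  · rw [Finset.sum_union (Finset.disjoint_empty_right _), Finset.sum_union,
      Finset.sum_image (inj _ _), Finset.sum_image (inj _ _)]
    · simp
    · rw [Finset.disjoint_left]
      intro a ha hb
      simp only [Finset.mem_image] at ha hb
      obtain ⟨u, _, rfl⟩ := ha
      obtain ⟨v, _, hv⟩ := hb
      simp at hv

theorem Bh_zero (S) : Bh x y emp conn C 0 S = 0 := by
  unfold Bh Wd
  split_ifs <;> simp [isTwo]

theorem Mh_zero (S) : Mh x y emp conn C 0 S = 0 := by
  unfold Mh Wd
  split_ifs <;> simp [isM]

theorem F_zero (S) : F x y emp conn C 0 S = if S = [] then 1 else 0 := by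
  unfold F Wd
  split_ifs <;> simp [wt, n1, n2]

theorem Bh_succ (n S) : Bh x y emp conn C (n+1) S
    = if emp n then 0 else y * F x y emp conn C n S := by
  unfold Bh F
  rw [sum_Wd_succ]
  simp only [isTwo_two, isTwo_one, isTwo_E, isTwo_M, wt, n1, n2, if_true, if_false, Finset.sum_const_zero, ite_self, add_zero,
    Finset.mul_sum]
  split_ifs
  · rfl
  · refine Finset.sum_congr rfl fun w _ => by ring

theorem Mh_succ (hC : ∀ S n, C S n → ¬ emp n) (n S) : Mh x y emp conn C (n+1) S
    = if C S n then F x y emp conn C n S.tail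
        - (if C S (n-1) then Bh x y emp conn C n S.tail else 0) else 0 := by
  unfold Mh F Bh
  rw [sum_Wd_succ]
  simp only [isM_two, isM_one, isM_E, isM_M, if_true, if_false, Finset.sum_const_zero, add_zero, zero_add]
  have := sum_filter_aux (R := R) (Wd emp conn C n S.tail) (C S (n-1)) False (wt x y)
  simp only [false_and, not_false_eq_true, and_true, if_false, sub_zero] at this
  have h2 : ∀ w, wt x y (M (S.headD 0) :: w) = wt x y w := fun w => rfl
  simp only [h2]
  rw [this]
  by_cases h : C S n
  · simp only [h, hC S n h, if_true, if_false]
  · simp [h]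

theorem F_succ (hC : ∀ S n, C S n → ¬ emp n) (n S) : F x y emp conn C (n+1) S
    = if emp n then F x y emp conn C n S else
      y * F x y emp conn C n S + x * (F x y emp conn C n S
        - (if conn n then Bh x y emp conn C n S else 0)
        - (if C S n then Mh x y emp conn C n S else 0)) + Mh x y emp conn C (n+1) S := by
  have hM : ¬ emp n → Mh x y emp conn C (n+1) S = (if C S n then
      ∑ w ∈ (Wd emp conn C n S.tail).filter (fun l => ¬ (C S (n-1) ∧ isTwo l)),
            wt x y (M (S.headD 0) :: w) else 0) := by
    intro h
    unfold Mh
    rw [sum_Wd_succ]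
    simp only [isM_two, isM_one, isM_E, isM_M, if_true, if_false, Finset.sum_const_zero, add_zero, zero_add, h]
  unfold F
  rw [sum_Wd_succ]
  by_cases h : emp n
  · simp only [h, if_true]; rfl
  · rw [hM h]
    simp only [h, if_false]
    congr 1
    have e1 : ∀ w, wt x y (one :: w) = x * wt x y w := fun w => by simp [wt, n1, n2]; ring
    have e2 : ∀ w, wt x y (two :: w) = y * wt x y w := fun w => by simp [wt, n1, n2]; ring
    simp only [e1, e2, ← Finset.mul_sum]
    rw [sum_filter_aux]
    rfl

theorem F_symm (hC : ∀ S n, C S n → ¬ emp n) (hconn : ∀ n, conn (n+1) → ¬ emp n)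
    (n : ℕ) : ∀ S, F x y emp conn C n S = F y x emp conn C n S := by
  induction n using Nat.strong_induction_on with
  | _ n ih =>
  intro S
  rcases n with _ | n
  · simp [F_zero]
  rw [F_succ x y emp conn C hC, F_succ y x emp conn C hC]
  by_cases he : emp n
  · simp only [he, if_true]; exact ih n (by omega) S
  simp only [he, if_false]
  have h1 := ih n (by omega) S
  have h1' := ih n (by omega) S.tail
  have hA : x * (if conn n then Bh x y emp conn C n S else 0)
      = y * (if conn n then Bh y x emp conn C n S else 0) := by
    split_ifs with hc
    · rcases n with _ | m
      · simp [Bh_zero]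
      · simp only [Bh_succ, hconn m hc, if_false]
        rw [ih m (by omega) S]; ring
    · simp
  have hB : Mh x y emp conn C (n+1) S - x * (if C S n then Mh x y emp conn C n S else 0)
      = Mh y x emp conn C (n+1) S - y * (if C S n then Mh y x emp conn C n S else 0) := by
    rw [Mh_succ x y emp conn C hC, Mh_succ y x emp conn C hC]
    by_cases hc : C S n
    · simp only [hc, if_true]
      rcases n with _ | m
      · simp [Bh_zero, Mh_zero, h1']
      · rw [Mh_succ x y emp conn C hC, Mh_succ y x emp conn C hC]
        simp only [Nat.add_sub_cancel]
        by_cases hd : C S m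
        · have h2 := ih m (by omega) S.tail
          simp only [hd, if_true, Bh_succ, hC S m hd, if_false]
          have h3 : x * (if C S (m-1) then Bh x y emp conn C m S.tail else 0)
              = y * (if C S (m-1) then Bh y x emp conn C m S.tail else 0) := by
            split_ifs with hk
            · rcases m with _ | k
              · simp [Bh_zero]
              · simp only [Bh_succ]
                rw [ih k (by omega) S.tail]
                split_ifs
                · simp
                · ring
            · simp
          linear_combination h1' - (x + y) * h2 + h3
        · simp [hd, h1']
    · simp [hc]
  linear_combination (x + y) * h1 - hA + hB

end GF

theorem card_symm (emp conn : ℕ → Prop) (C : List ℕ → ℕ → Prop)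
    (hC : ∀ S n, C S n → ¬ emp n) (hconn : ∀ n, conn (n+1) → ¬ emp n)
    (n : ℕ) (S : List ℕ) (a b : ℕ) :
    ((Wd emp conn C n S).filter (fun w => n1 w = a ∧ n2 w = b)).card
     = ((Wd emp conn C n S).filter (fun w => n1 w = b ∧ n2 w = a)).card := by
  have h := F_symm (R := Polynomial (Polynomial ℤ)) (Polynomial.C Polynomial.X) Polynomial.X
    emp conn C hC hconn n S
  have key : ∀ u v : ℕ, ((((Polynomial.C Polynomial.X : Polynomial (Polynomial ℤ)) ^ u
      * Polynomial.X ^ v).coeff b).coeff a) = if u = a ∧ v = b then 1 else 0 := by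
    intro u v
    rw [← Polynomial.C_pow, Polynomial.coeff_C_mul_X_pow]
    by_cases h1 : b = v
    · simp [h1, Polynomial.coeff_X_pow, eq_comm]
    · simp [h1, Ne.symm h1]
  have h2 := congrArg (fun p => (p.coeff b).coeff a) h
  simp only [F, wt, Polynomial.finsetSum_coeff] at h2
  simp only [mul_comm ((Polynomial.X : Polynomial (Polynomial ℤ)) ^ (_ : ℕ))
    ((Polynomial.C Polynomial.X) ^ (_ : ℕ)), key] at h2
  rw [Finset.sum_boole, Finset.sum_boole] at h2
  have h3 : (fun w => n2 w = a ∧ n1 w = b) = (fun w => n1 w = b ∧ n2 w = a) := by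
    funext w; exact propext and_comm
  simp only [and_comm (a := n2 _ = a)] at h2
  exact_mod_cast h2

theorem exists_invol {α H : Type} (h : α → H) (f g : α → ℕ)
    (E : ∀ (s : H) (a b : ℕ), Nonempty ({z : α // h z = s ∧ f z = a ∧ g z = b} ≃
      {z : α // h z = s ∧ f z = b ∧ g z = a})) :
    ∃ Φ : α → α, Function.Involutive Φ ∧
      ∀ z, h (Φ z) = h z ∧ f (Φ z) = g z ∧ g (Φ z) = f z := by
  let e := fun s a b => (E s a b).some
  let Φ : α → α := fun z =>
    if f z < g z then (e (h z) (f z) (g z) ⟨z, rfl, rfl, rfl⟩).1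
    else if g z < f z then ((e (h z) (g z) (f z)).symm ⟨z, rfl, rfl, rfl⟩).1 else z
  have hΦ : ∀ z, h (Φ z) = h z ∧ f (Φ z) = g z ∧ g (Φ z) = f z := by
    intro z
    simp only [Φ]
    split_ifs with h1 h2
    · exact (e (h z) (f z) (g z) ⟨z, rfl, rfl, rfl⟩).2
    · exact ((e (h z) (g z) (f z)).symm ⟨z, rfl, rfl, rfl⟩).2
    · have : f z = g z := by omega
      simp [this]
  have up : ∀ s a b (z : α) (hz : h z = s ∧ f z = a ∧ g z = b), a < b →
      Φ z = (e s a b ⟨z, hz⟩).1 := by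
    rintro s a b z ⟨rfl, rfl, rfl⟩ hab
    simp [Φ, hab]
  have dn : ∀ s a b (z : α) (hz : h z = s ∧ f z = b ∧ g z = a), a < b →
      Φ z = ((e s a b).symm ⟨z, hz⟩).1 := by
    rintro s a b z ⟨rfl, rfl, rfl⟩ hab
    simp [Φ, hab, hab.le]
  refine ⟨Φ, ?_, hΦ⟩
  intro z
  rcases lt_trichotomy (f z) (g z) with hl | hl | hl
  · have h1 := up _ _ _ z ⟨rfl, rfl, rfl⟩ hl
    have h2 := dn _ _ _ (Φ z) (hΦ z) hl
    rw [h2]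
    have : (⟨Φ z, hΦ z⟩ : {w : α // h w = h z ∧ f w = g z ∧ g w = f z})
      = e (h z) (f z) (g z) ⟨z, rfl, rfl, rfl⟩ := Subtype.ext h1
    rw [this, Equiv.symm_apply_apply]
  · have : Φ z = z := by simp [Φ, hl]
    rw [this, this]
  · have h1 := dn _ _ _ z ⟨rfl, rfl, rfl⟩ hl
    have h2 := up _ _ _ (Φ z) (hΦ z) hl
    rw [h2]
    have : (⟨Φ z, hΦ z⟩ : {w : α // h w = h z ∧ f w = g z ∧ g w = f z})
      = (e (h z) (g z) (f z)).symm ⟨z, rfl, rfl, rfl⟩ := Subtype.ext h1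
    rw [this, Equiv.apply_symm_apply]

section Conc
variable (lam mu : ℕ → ℕ)

def empC (n : ℕ) : Prop := ¬ ∃ i, InShape lam mu i n
def connC (n : ℕ) : Prop := ∃ i, InShape lam mu i (n-1) ∧ InShape lam mu i n
def Cs (s n : ℕ) : Prop := InShape lam mu (s/2) n ∧ InShape lam mu ((s+1)/2) n
def good (t : ℕ) (S : List ℕ) : Prop := ∀ s, S.head? = some s → t < s ∨ (t = s ∧ s % 2 = 1)
def Cx (S : List ℕ) (n : ℕ) : Prop := ∃ t S', S = t :: S' ∧ Cs lam mu t n ∧ good t S'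

def fill : Ltr → ℕ → Finset ℕ
  | one, _ => {1}
  | two, _ => {2}
  | E, _ => ∅
  | M s, i => if 2 * i < s then {1} else if 2 * i = s then {1, 2} else {2}

def allowed (j : ℕ) : Ltr → Prop
  | one => ¬ empC lam mu j
  | two => ¬ empC lam mu j
  | E => empC lam mu j
  | M s => Cs lam mu s j

def okp (j : ℕ) (c c' : Ltr) : Prop :=
  ∀ i, InShape lam mu i j → InShape lam mu i (j+1) → ¬ (2 ∈ fill c i ∧ 1 ∈ fill c' i)

theorem one_mem_M (s i : ℕ) : 1 ∈ fill (M s) i ↔ 2 * i ≤ s := by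
  simp only [fill]; split_ifs <;> simp <;> omega

theorem two_mem_M (s i : ℕ) : 2 ∈ fill (M s) i ↔ s ≤ 2 * i := by
  simp only [fill]; split_ifs <;> simp <;> omega

theorem fill_sub (c : Ltr) (i : ℕ) : fill c i ⊆ Finset.Icc 1 2 := by
  cases c <;> simp only [fill]
  · simp
  · simp
  · simp
  · intro x; split_ifs <;> simp <;> omega

theorem ext12 {A B : Finset ℕ} (hA : A ⊆ Finset.Icc 1 2) (hB : B ⊆ Finset.Icc 1 2)
    (h1 : 1 ∈ A ↔ 1 ∈ B) (h2 : 2 ∈ A ↔ 2 ∈ B) : A = B := by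
  have aux : ∀ x, x ∈ Finset.Icc 1 2 → x = 1 ∨ x = 2 := by
    intro x hx; simp at hx; omega
  ext x
  constructor
  · intro hx
    rcases aux x (hA hx) with rfl | rfl
    · exact h1.1 hx
    · exact h2.1 hx
  · intro hx
    rcases aux x (hB hx) with rfl | rfl
    · exact h1.2 hx
    · exact h2.2 hx

theorem le12 {A B : Finset ℕ} (hA : A ⊆ Finset.Icc 1 2) (hB : B ⊆ Finset.Icc 1 2) :
    FinsetLE A B ↔ ¬ (2 ∈ A ∧ 1 ∈ B) := by
  constructor
  · rintro h ⟨h2, h1⟩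
    have := h 2 h2 1 h1
    omega
  · intro h a ha b hb
    have h1 := hA ha
    have h2 := hB hb
    simp only [Finset.mem_Icc] at h1 h2
    by_contra hlt
    have ea : a = 2 := by omega
    have eb : b = 1 := by omega
    subst ea eb
    exact h ⟨ha, hb⟩

theorem mem_step (n : ℕ) (S : List ℕ) (c : Ltr) (l : List Ltr) (emp conn : ℕ → Prop)
    (C : List ℕ → ℕ → Prop) (hC : ∀ S n, C S n → ¬ emp n) :
    (c :: l) ∈ Wd emp conn C (n+1) S ↔
      match c with
      | E => emp n ∧ l ∈ Wd emp conn C n S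
      | two => ¬ emp n ∧ l ∈ Wd emp conn C n S
      | one => ¬ emp n ∧ l ∈ Wd emp conn C n S ∧ ¬ (conn n ∧ isTwo l) ∧ ¬ (C S n ∧ isM l)
      | M t => C S n ∧ t = S.headD 0 ∧ l ∈ Wd emp conn C n S.tail ∧ ¬ (C S (n-1) ∧ isTwo l) := by
  have := hC S n
  rw [Wd]
  split_ifs with h1 h2
  · cases c <;> simp_all
  · cases c <;> simp [*]
    constructor
    · rintro ⟨a, h, h', rfl⟩
      simp_all
    · rintro ⟨rfl, h, h'⟩
      first | exact ⟨l, ⟨h, h'⟩, rfl, rfl⟩ | (refine ⟨l, ?_⟩; simp_all) | simp_all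
  · cases c <;> simp [*]

def wd (f : ℕ → Ltr) : ℕ → List Ltr
  | 0 => []
  | n + 1 => f n :: wd f n

theorem wd_congr {f g : ℕ → Ltr} (n : ℕ) (h : ∀ j < n, f j = g j) : wd f n = wd g n := by
  induction n with
  | zero => rfl
  | succ n ih => simp only [wd]; rw [h n (by omega), ih (fun j hj => h j (by omega))]

theorem wd_inj {f g : ℕ → Ltr} (n : ℕ) (h : wd f n = wd g n) : ∀ j < n, f j = g j := by
  induction n with
  | zero => intro j hj; omega
  | succ n ih =>
    simp only [wd, List.cons.injEq] at h
    intro j hj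
    rcases Nat.lt_succ_iff_lt_or_eq.1 hj with h' | rfl
    · exact ih h.2 j h'
    · exact h.1

theorem exists_wd (n : ℕ) : ∀ w : List Ltr, w.length = n → ∃ f, wd f n = w ∧ ∀ j, n ≤ j → f j = E := by
  induction n with
  | zero => intro w hw; exact ⟨fun _ => E, by simp_all [wd], by simp⟩
  | succ n ih =>
    intro w hw
    rcases w with _ | ⟨c, l⟩
    · simp at hw
    obtain ⟨f, hf, hE⟩ := ih l (by simpa using hw)
    refine ⟨Function.update f n c, ?_, ?_⟩
    · simp only [wd, Function.update_self, List.cons.injEq, true_and]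
      rw [← hf]
      apply wd_congr
      intro j hj
      exact Function.update_of_ne (by omega) _ _
    · intro j hj
      rw [Function.update_of_ne (by omega)]
      exact hE j (by omega)

theorem Wd_length (emp conn : ℕ → Prop) (C : List ℕ → ℕ → Prop) (n : ℕ) :
    ∀ S, ∀ w ∈ Wd emp conn C n S, w.length = n := by
  induction n with
  | zero => intro S w hw; rw [Wd] at hw; split_ifs at hw <;> simp_all
  | succ n ih =>
    intro S w hw
    rw [Wd] at hw
    split_ifs at hw <;> simp at hw
    · obtain ⟨a, h, rfl⟩ := hw; simp [ih _ _ h]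
    · rcases hw with ⟨a, h, rfl⟩ | ⟨a, h, rfl⟩ | ⟨a, h, rfl⟩
      · simp [ih _ _ h]
      · simp [ih _ _ h.1]
      · simp [ih _ _ h.1]
    · rcases hw with ⟨a, h, rfl⟩ | ⟨a, h, rfl⟩
      · simp [ih _ _ h]
      · simp [ih _ _ h.1]

theorem Cx_emp : ∀ S n, Cx lam mu S n → ¬ empC lam mu n := by
  rintro S n ⟨t, S', -, h, -⟩ he
  exact he ⟨_, h.1⟩

theorem connC_emp : ∀ n, connC lam mu (n+1) → ¬ empC lam mu n := by
  rintro n ⟨i, h, -⟩ he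
  exact he ⟨i, h⟩

variable {lam mu}

theorem ok_two_one (j : ℕ) : okp lam mu j two one ↔ ¬ connC lam mu (j+1) := by
  simp [okp, connC, fill]

theorem ok_two_M (hl : Antitone lam) (hm : Antitone mu) (j t : ℕ) (h : Cs lam mu t (j+1)) :
    okp lam mu j two (M t) ↔ ¬ Cs lam mu t j := by
  constructor
  · intro ho hc
    refine ho _ hc.1 h.1 ⟨by simp [fill], ?_⟩
    rw [one_mem_M]; omega
  · rintro hc i h1 h2 ⟨-, h3⟩
    rw [one_mem_M] at h3
    apply hc
    obtain ⟨⟨a1, a2⟩, ⟨a3, a4⟩⟩ := h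
    have := hm (show i ≤ t / 2 by omega)
    have := hm (show i ≤ (t+1) / 2 by omega)
    obtain ⟨b1, b2⟩ := h1
    exact ⟨⟨by omega, by omega⟩, ⟨by omega, by omega⟩⟩

theorem ok_M_one (hl : Antitone lam) (hm : Antitone mu) (j s : ℕ) (h : Cs lam mu s j) :
    okp lam mu j (M s) one ↔ ¬ Cs lam mu s (j+1) := by
  constructor
  · intro ho hc
    refine ho _ h.2 hc.2 ⟨?_, by simp [fill]⟩
    rw [two_mem_M]; omega
  · rintro hc i h1 h2 ⟨h3, -⟩
    rw [two_mem_M] at h3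
    apply hc
    obtain ⟨⟨a1, a2⟩, ⟨a3, a4⟩⟩ := h
    have := hl (show s / 2 ≤ i by omega)
    have := hl (show (s+1) / 2 ≤ i by omega)
    obtain ⟨b1, b2⟩ := h2
    exact ⟨⟨by omega, by omega⟩, ⟨by omega, by omega⟩⟩

theorem ok_M_M (j s t : ℕ) (h : t < s ∨ (t = s ∧ s % 2 = 1)) : okp lam mu j (M s) (M t) := by
  rintro i - - ⟨h1, h2⟩
  rw [two_mem_M] at h1
  rw [one_mem_M] at h2
  omega

theorem ok_one (j c) : okp lam mu j one c := by simp [okp, fill]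
theorem ok_E (j c) : okp lam mu j E c := by simp [okp, fill]
theorem ok_to_two (j c) : okp lam mu j c two := by simp [okp, fill]
theorem ok_to_E (j c) : okp lam mu j c E := by simp [okp, fill]

theorem head_inv (hl : Antitone lam) (f : ℕ → Ltr) (ha : ∀ j, allowed lam mu j (f j))
    (ho : ∀ j, okp lam mu j (f j) (f (j+1))) (m : ℕ) :
    ∀ s, (seams (wd f m)).head? = some s → mu ((s+1)/2) < m ∧
      ∀ j, m = j + 1 → InShape lam mu ((s+1)/2) j → 2 ∈ fill (f j) ((s+1)/2) := by
  induction m with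
  | zero => simp [wd, seams]
  | succ m ih =>
    intro s hs
    have key : (seams (wd f m)).head? = some s → mu ((s+1)/2) < m + 1 ∧
      ∀ j, m + 1 = j + 1 → InShape lam mu ((s+1)/2) j → 2 ∈ fill (f j) ((s+1)/2) := by
      intro hs'
      obtain ⟨h1, h2⟩ := ih s hs'
      refine ⟨by omega, ?_⟩
      intro j hj hin
      obtain rfl : m = j := by omega
      rcases m with _ | k
      · omega
      have h3 : InShape lam mu ((s+1)/2) k := ⟨by omega, by have := hin.2; omega⟩
      have h4 := h2 k rfl h3
      have h5 := ho k _ h3 hin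
      have h6 := ha (k+1)
      revert h5 h6
      cases f (k+1) with
      | one => intro h5 _; exact absurd ⟨h4, by simp [fill]⟩ h5
      | two => simp [fill]
      | E => intro _ h; exact absurd ⟨_, hin⟩ h
      | M t => rw [one_mem_M, two_mem_M]; intro h5 _; have : ¬ (2 * ((s+1)/2) ≤ t) := fun h => h5 ⟨h4, h⟩; omega
    have ham := ha m
    rcases hf : f m with _ | _ | _ | t
    · apply key; simpa [wd, hf, seams] using hs
    · apply key; simpa [wd, hf, seams] using hs
    · apply key; simpa [wd, hf, seams] using hs
    · have : t = s := by simpa [wd, hf, seams] using hs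
      subst this
      rw [hf] at ham
      refine ⟨by have := ham.2.1; omega, ?_⟩
      intro j hj _
      obtain rfl : m = j := by omega
      rw [hf, two_mem_M]; omega

theorem good_of (hl : Antitone lam) (f : ℕ → Ltr) (ha : ∀ j, allowed lam mu j (f j))
    (ho : ∀ j, okp lam mu j (f j) (f (j+1))) (m t : ℕ) (hf : f m = M t) :
    good t (seams (wd f m)) := by
  intro s hs
  by_contra hc
  obtain ⟨h1, h2⟩ := head_inv hl f ha ho m s hs
  rcases m with _ | k
  · omega
  have ham := ha (k+1)
  rw [hf] at ham
  obtain ⟨⟨a1, a2⟩, -⟩ := ham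
  have h3 := hl (show (s+1)/2 ≤ t/2 by omega)
  have h4 : InShape lam mu ((s+1)/2) k := ⟨by omega, by omega⟩
  have h5 := h2 k rfl h4
  refine ho k _ h4 ⟨by omega, by omega⟩ ⟨h5, ?_⟩
  rw [hf, one_mem_M]; omega

theorem wd_mem (hl : Antitone lam) (hm : Antitone mu) (f : ℕ → Ltr) (ha : ∀ j, allowed lam mu j (f j))
    (ho : ∀ j, okp lam mu j (f j) (f (j+1))) (m : ℕ) :
    wd f m ∈ Wd (empC lam mu) (connC lam mu) (Cx lam mu) m (seams (wd f m)) := by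
  induction m with
  | zero => simp [wd, seams, Wd]
  | succ m ih =>
    have ham := ha m
    rw [wd, mem_step _ _ _ _ _ _ _ (Cx_emp lam mu)]
    rcases hf : f m with _ | _ | _ | t <;> rw [hf] at ham <;> simp only [seams]
    · refine ⟨ham, ih, ?_, ?_⟩
      · rintro ⟨h1, h2⟩
        rcases m with _ | k
        · exact h2
        rcases hk : f k with _ | _ | _ | s <;> simp only [wd, hk] at h2
        · exact h2
        · have := ho k
          rw [hk, hf, ok_two_one] at this
          exact this h1
        · exact h2
        · exact h2
      · rintro ⟨h1, h2⟩
        rcases m with _ | k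
        · exact h2
        rcases hk : f k with _ | _ | _ | s <;> simp only [wd, hk] at h2
        · exact h2
        · exact h2
        · exact h2
        · have := ho k
          have hak := ha k
          rw [hk] at hak
          rw [hk, hf, ok_M_one hl hm _ _ hak] at this
          obtain ⟨t, S', he, hcs, -⟩ := h1
          simp only [wd, hk, seams, List.cons.injEq] at he
          obtain ⟨rfl, -⟩ := he
          exact this hcs
    · exact ⟨ham, ih⟩
    · exact ⟨ham, ih⟩
    · refine ⟨⟨t, _, rfl, ham, good_of hl f ha ho m t hf⟩, rfl, ih, ?_⟩
      rintro ⟨h1, h2⟩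
      rcases m with _ | k
      · exact h2
      rcases hk : f k with _ | _ | _ | s <;> simp only [wd, hk] at h2
      · exact h2
      · have := ho k
        rw [hk, hf, ok_two_M hl hm _ _ ham] at this
        obtain ⟨t', S', he, hcs, -⟩ := h1
        simp only [List.cons.injEq] at he
        obtain ⟨rfl, -⟩ := he
        exact this hcs
      · exact h2
      · exact h2

theorem mem_wd (hl : Antitone lam) (hm : Antitone mu) (f : ℕ → Ltr) (m : ℕ) : ∀ S,
    wd f m ∈ Wd (empC lam mu) (connC lam mu) (Cx lam mu) m S →
    seams (wd f m) = S ∧ (∀ j < m, allowed lam mu j (f j)) ∧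
    (∀ j, j + 1 < m → okp lam mu j (f j) (f (j+1))) ∧
    (∀ s S', S = s :: S' → good s S') := by
  induction m with
  | zero =>
    intro S h
    rw [Wd] at h
    split_ifs at h with h1
    · subst h1; simp [wd, seams]
    · simp at h
  | succ m ih =>
    intro S h
    rw [wd, mem_step _ _ _ _ _ _ _ (Cx_emp lam mu)] at h
    have fin1 : ∀ S0, wd f m ∈ Wd (empC lam mu) (connC lam mu) (Cx lam mu) m S0 →
        allowed lam mu m (f m) → ∀ j < m + 1, allowed lam mu j (f j) := by
      intro S0 h0 h1 j hj
      rcases Nat.lt_succ_iff_lt_or_eq.1 hj with h' | rfl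
      · exact (ih S0 h0).2.1 j h'
      · exact h1
    have fin2 : ∀ S0, wd f m ∈ Wd (empC lam mu) (connC lam mu) (Cx lam mu) m S0 →
        (∀ k, m = k + 1 → okp lam mu k (f k) (f m)) →
        ∀ j, j + 1 < m + 1 → okp lam mu j (f j) (f (j+1)) := by
      intro S0 h0 h1 j hj
      rcases Nat.lt_succ_iff_lt_or_eq.1 hj with h' | h'
      · exact (ih S0 h0).2.2.1 j h'
      · subst h'; exact h1 j rfl
    rcases hf : f m with _ | _ | _ | t <;> rw [hf] at h fin1 fin2 <;> simp only at h
    · obtain ⟨he, h0, h1, h2⟩ := h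
      obtain ⟨e1, e2, e3, e4⟩ := ih S h0
      refine ⟨by simpa [wd, hf, seams] using e1, fin1 S h0 he, fin2 S h0 ?_, e4⟩
      rintro k rfl
      have hak := e2 k (by omega)
      rcases hk : f k with _ | _ | _ | s <;> rw [hk] at hak
      · exact ok_one _ _
      · rw [ok_two_one]
        intro hc
        exact h1 ⟨hc, by simp [wd, hk, isTwo]⟩
      · exact ok_E _ _
      · rw [ok_M_one hl hm _ _ hak]
        intro hc
        simp only [wd, hk, seams] at e1
        exact h2 ⟨⟨s, _, e1.symm, hc, e4 _ _ e1.symm⟩, by simp [wd, hk, isM]⟩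
    · obtain ⟨he, h0⟩ := h
      obtain ⟨e1, e2, e3, e4⟩ := ih S h0
      exact ⟨by simpa [wd, hf, seams] using e1, fin1 S h0 he,
        fin2 S h0 (fun k _ => ok_to_two _ _), e4⟩
    · obtain ⟨he, h0⟩ := h
      obtain ⟨e1, e2, e3, e4⟩ := ih S h0
      exact ⟨by simpa [wd, hf, seams] using e1, fin1 S h0 he,
        fin2 S h0 (fun k _ => ok_to_E _ _), e4⟩
    · obtain ⟨hC, ht, h0, h1⟩ := h
      obtain ⟨e1, e2, e3, e4⟩ := ih _ h0
      have hC' := hC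
      obtain ⟨t', S', rfl, hcs, hg⟩ := hC
      simp only [List.headD_cons, List.tail_cons] at ht e1 e2 e3 e4 h0
      subst ht
      refine ⟨by simpa [wd, hf, seams] using e1, fin1 _ h0 hcs, fin2 _ h0 ?_, ?_⟩
      · rintro k rfl
        have hak := e2 k (by omega)
        rcases hk : f k with _ | _ | _ | s <;> rw [hk] at hak
        · exact ok_one _ _
        · rw [ok_two_M hl hm _ _ hcs]
          intro hc
          exact h1 ⟨⟨t, S', rfl, hc, hg⟩, by simp [wd, hk, isTwo]⟩
        · exact ok_E _ _
        · apply ok_M_M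
          apply hg
          rw [← e1]
          simp [wd, hk, seams]
      · intro s S'' he
        simp only [List.cons.injEq] at he
        obtain ⟨rfl, rfl⟩ := he
        exact hg

theorem allowed_unique (j : ℕ) (c c' : Ltr) (h : allowed lam mu j c) (h' : allowed lam mu j c')
    (he : ∀ i, InShape lam mu i j → fill c i = fill c' i) : c = c' := by
  have h12 : ({1} : Finset ℕ) ≠ {2} := by decide
  have one_M : ∀ s, Cs lam mu s j → (∀ i, InShape lam mu i j → fill one i = fill (M s) i) → False := by
    intro s hs h
    have : 2 ∈ fill (M s) ((s+1)/2) := by rw [two_mem_M]; omega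
    rw [← h _ hs.2] at this
    simp [fill] at this
  have two_M : ∀ s, Cs lam mu s j → (∀ i, InShape lam mu i j → fill two i = fill (M s) i) → False := by
    intro s hs h
    have : 1 ∈ fill (M s) (s/2) := by rw [one_mem_M]; omega
    rw [← h _ hs.1] at this
    simp [fill] at this
  have one_two : ¬ empC lam mu j → (∀ i, InShape lam mu i j → fill one i = fill two i) → False := by
    intro hs h
    apply hs
    rintro ⟨i, hi⟩
    exact h12 (h i hi)
  rcases c with _ | _ | _ | s <;> rcases c' with _ | _ | _ | t <;> simp only [allowed] at h h'
  · rfl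
  · exact (one_two h he).elim
  · exact absurd h' h
  · exact (one_M t h' he).elim
  · exact (one_two h fun i hi => (he i hi).symm).elim
  · rfl
  · exact absurd h' h
  · exact (two_M t h' he).elim
  · exact absurd h h'
  · exact absurd h h'
  · rfl
  · exact absurd ⟨_, h'.1⟩ h
  · exact (one_M s h fun i hi => (he i hi).symm).elim
  · exact (two_M s h fun i hi => (he i hi).symm).elim
  · exact absurd ⟨_, h.1⟩ h'
  · have k1 : ∀ i, InShape lam mu i j → (2 * i ≤ s ↔ 2 * i ≤ t) := by
      intro i hi; rw [← one_mem_M, ← one_mem_M, he i hi]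
    have k2 : ∀ i, InShape lam mu i j → (s ≤ 2 * i ↔ t ≤ 2 * i) := by
      intro i hi; rw [← two_mem_M, ← two_mem_M, he i hi]
    have := k1 _ h.1
    have := k1 _ h.2
    have := k1 _ h'.1
    have := k1 _ h'.2
    have := k2 _ h.1
    have := k2 _ h.2
    have := k2 _ h'.1
    have := k2 _ h'.2
    congr 1
    omega

theorem col_le (hl : Antitone lam) (hm : Antitone mu) (T : ℕ → ℕ → Finset ℕ) (hT : IsSVRPPn lam mu 2 T) (j i d : ℕ) :
    InShape lam mu i j → InShape lam mu (i+d+1) j → FinsetLE (T i j) (T (i+d+1) j) := by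
  obtain ⟨⟨h0, h1, h2, h3, h4⟩, h5⟩ := hT
  intro hi
  induction d with
  | zero => intro hd; exact h4 i j hi hd
  | succ d ih =>
    intro hd
    have hmid : InShape lam mu (i+d+1) j :=
      ⟨(hm (show i ≤ i+d+1 by omega)).trans hi.1,
        lt_of_lt_of_le hd.2 (hl (show i+d+1 ≤ i+(d+1)+1 by omega))⟩
    have ha := ih hmid
    have hb := h4 _ _ hmid hd
    obtain ⟨z, hz⟩ := h1 _ _ hmid
    intro a haa b hbb
    exact (ha a haa z hz).trans (hb z hz b hbb)

theorem exists_col (hl : Antitone lam) (hm : Antitone mu) (N : ℕ) (hN : ∀ i, N ≤ i → lam i = 0)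
    (T : ℕ → ℕ → Finset ℕ) (hT : IsSVRPPn lam mu 2 T) (j : ℕ) :
    ∃ c, allowed lam mu j c ∧ ∀ i, InShape lam mu i j → T i j = fill c i := by
  have hle := col_le hl hm T hT j
  obtain ⟨⟨h0, h1, h2, h3, h4⟩, h5⟩ := hT
  have hor : ∀ i, InShape lam mu i j → 1 ∈ T i j ∨ 2 ∈ T i j := by
    intro i hi
    obtain ⟨z, hz⟩ := h1 i j hi
    have := h5 i j hz
    simp only [Finset.mem_Icc] at this
    have : z = 1 ∨ z = 2 := by omega
    rcases this with rfl | rfl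
    · exact Or.inl hz
    · exact Or.inr hz
  have hin : ∀ i x, x ∈ T i j → InShape lam mu i j := by
    intro i x hx
    by_contra hc
    rw [h0 i j hc] at hx
    simp at hx
  by_cases he : empC lam mu j
  · exact ⟨E, he, fun i hi => absurd ⟨i, hi⟩ he⟩
  by_cases e2 : ∃ i, 2 ∈ T i j
  swap
  · push Not at e2
    refine ⟨one, he, fun i hi => ext12 (h5 i j) (fill_sub _ _) ?_ ?_⟩
    · have := hor i hi
      simp [fill]; tauto
    · simp [fill, e2 i]
  by_cases e1 : ∃ i, 1 ∈ T i j
  swap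
  · push Not at e1
    refine ⟨two, he, fun i hi => ext12 (h5 i j) (fill_sub _ _) ?_ ?_⟩
    · simp [fill, e1 i]
    · have := hor i hi
      have := e1 i
      simp [fill]; tauto
  have hb := Nat.find_spec e2
  have hbmin : ∀ i, 2 ∈ T i j → Nat.find e2 ≤ i := fun i hi => Nat.find_min' e2 hi
  obtain ⟨a, ha, hamax⟩ : ∃ a, 1 ∈ T a j ∧ ∀ i, 1 ∈ T i j → i ≤ a := by
    have hbd : ∀ i, 1 ∈ T i j → i ≤ N := by
      intro i hi
      by_contra hc
      have := (hin i 1 hi).2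
      rw [hN i (by omega)] at this
      omega
    obtain ⟨i0, hi0⟩ := e1
    refine ⟨Nat.findGreatest (fun i => 1 ∈ T i j) N,
      Nat.findGreatest_spec (P := fun i => 1 ∈ T i j) (hbd i0 hi0) hi0, ?_⟩
    intro i hi
    exact Nat.le_findGreatest (hbd i hi) hi
  generalize Nat.find e2 = b at hb hbmin
  have hab : a ≤ b := by
    by_contra hc
    obtain ⟨d, rfl⟩ : ∃ d, a = b + d + 1 := ⟨a - b - 1, by omega⟩
    have := hle b d (hin _ _ hb) (hin _ _ ha) 2 hb 1 ha
    omega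
  have hba : b ≤ a + 1 := by
    by_contra hc
    have hs : InShape lam mu (a+1) j :=
      ⟨(hm (show a ≤ a + 1 by omega)).trans (hin _ _ ha).1,
        lt_of_lt_of_le (hin _ _ hb).2 (hl (show a + 1 ≤ b by omega))⟩
    rcases hor _ hs with h | h
    · have := hamax _ h; omega
    · have := hbmin _ h; omega
  refine ⟨M (a+b), ⟨?_, ?_⟩, fun i hi => ext12 (h5 i j) (fill_sub _ _) ?_ ?_⟩
  · rw [show (a+b)/2 = a by omega]; exact hin _ _ ha
  · rw [show (a+b+1)/2 = b by omega]; exact hin _ _ hb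
  · rw [one_mem_M]
    constructor
    · intro h; have := hamax _ h; omega
    · intro h
      by_cases hia : i = a
      · rw [hia]; exact ha
      · rcases hor i hi with h' | h'
        · exact h'
        · have := hbmin _ h'; omega
  · rw [two_mem_M]
    constructor
    · intro h; have := hbmin _ h; omega
    · intro h
      by_cases hia : i = b
      · rw [hia]; exact hb
      · rcases hor i hi with h' | h'
        · have := hamax _ h'; omega
        · exact h'

end Conc

section Stats

theorem card_n1 (f : ℕ → Ltr) (n : ℕ) :
    ((Finset.range n).filter (fun j => f j = one ∨ ∃ s, f j = M s)).card
      = n1 (wd f n) + (seams (wd f n)).length := by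
  induction n with
  | zero => simp [wd, n1, seams]
  | succ n ih =>
    rw [Finset.range_add_one, Finset.filter_insert, wd]
    rcases hf : f n with _ | _ | _ | t <;> simp [n1, seams, ih] <;> omega

theorem card_n2 (f : ℕ → Ltr) (n : ℕ) :
    ((Finset.range n).filter (fun j => f j = two ∨ ∃ s, f j = M s)).card
      = n2 (wd f n) + (seams (wd f n)).length := by
  induction n with
  | zero => simp [wd, n2, seams]
  | succ n ih =>
    rw [Finset.range_add_one, Finset.filter_insert, wd]
    rcases hf : f n with _ | _ | _ | t <;> simp [n2, seams, ih] <;> omega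

theorem card_M (f : ℕ → Ltr) (n s : ℕ) :
    ((Finset.range n).filter (fun j => f j = M s)).card = (seams (wd f n)).count s := by
  induction n with
  | zero => simp [wd, seams]
  | succ n ih =>
    rw [Finset.range_add_one, Finset.filter_insert, wd]
    rcases hf : f n with _ | _ | _ | t <;> simp [seams, ih, List.count_cons]
    split_ifs <;> simp [ih]

variable {lam mu : ℕ → ℕ}

def Rep (lam mu : ℕ → ℕ) (T : ℕ → ℕ → Finset ℕ) (f : ℕ → Ltr) : Prop :=
  (∀ j, allowed lam mu j (f j)) ∧ (∀ i j, InShape lam mu i j → T i j = fill (f j) i) ∧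
  ∀ i j, ¬ InShape lam mu i j → T i j = ∅

theorem lt_lam0 (hl : Antitone lam) {i j : ℕ} (h : InShape lam mu i j) : j < lam 0 :=
  lt_of_lt_of_le h.2 (hl (Nat.zero_le i))

theorem rep_in {T f} (h : Rep lam mu T f) {i j x : ℕ} (hx : x ∈ T i j) : InShape lam mu i j := by
  by_contra hc
  rw [h.2.2 i j hc] at hx
  simp at hx

theorem ircont_one (hl : Antitone lam) {T f} (h : Rep lam mu T f) :
    ircont T 1 = n1 (wd f (lam 0)) + (seams (wd f (lam 0))).length := by
  rw [← card_n1, ircont, ← Set.ncard_coe_finset]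
  congr 1
  ext j
  simp only [Set.mem_setOf_eq, Finset.coe_filter, Finset.mem_range]
  have ha := h.1 j
  constructor
  · rintro ⟨i, hi⟩
    have hs := rep_in h hi
    refine ⟨lt_lam0 hl hs, ?_⟩
    rw [h.2.1 i j hs] at hi
    rcases hf : f j with _ | _ | _ | t <;> rw [hf] at hi <;> simp [fill] at hi ⊢
  · rintro ⟨hj, hf | ⟨s, hf⟩⟩ <;> rw [hf] at ha
    · obtain ⟨i, hi⟩ := not_not.1 ha
      exact ⟨i, by rw [h.2.1 i j hi, hf]; simp [fill]⟩
    · exact ⟨s/2, by rw [h.2.1 _ j ha.1, hf, one_mem_M]; omega⟩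

theorem ircont_two (hl : Antitone lam) {T f} (h : Rep lam mu T f) :
    ircont T 2 = n2 (wd f (lam 0)) + (seams (wd f (lam 0))).length := by
  rw [← card_n2, ircont, ← Set.ncard_coe_finset]
  congr 1
  ext j
  simp only [Set.mem_setOf_eq, Finset.coe_filter, Finset.mem_range]
  have ha := h.1 j
  constructor
  · rintro ⟨i, hi⟩
    have hs := rep_in h hi
    refine ⟨lt_lam0 hl hs, ?_⟩
    rw [h.2.1 i j hs] at hi
    rcases hf : f j with _ | _ | _ | t <;> rw [hf] at hi <;> simp [fill] at hi ⊢
  · rintro ⟨hj, hf | ⟨s, hf⟩⟩ <;> rw [hf] at ha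
    · obtain ⟨i, hi⟩ := not_not.1 ha
      exact ⟨i, by rw [h.2.1 i j hi, hf]; simp [fill]⟩
    · exact ⟨(s+1)/2, by rw [h.2.1 _ j ha.2, hf, two_mem_M]; omega⟩

theorem ircont_other {T : ℕ → ℕ → Finset ℕ} (h : IsSVRPPn lam mu 2 T) (v : ℕ) (h1 : v ≠ 1)
    (h2 : v ≠ 2) : ircont T v = 0 := by
  rw [ircont]
  convert Set.ncard_empty ℕ
  ext j
  simp only [Set.mem_setOf_eq, Set.mem_empty_iff_false, iff_false]
  rintro ⟨i, hi⟩
  have := h.2 i j hi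
  simp only [Finset.mem_Icc] at this
  omega

theorem exv_eq (hl : Antitone lam) {T f} (h : Rep lam mu T f) (r : ℕ) :
    exv lam mu T r = (seams (wd f (lam 0))).count (2 * r) := by
  rw [← card_M, Finset.card_filter, exv]
  have hsub : Finset.Ico (mu r) (lam r) ⊆ Finset.range (lam 0) := by
    intro j hj
    simp only [Finset.mem_Ico] at hj
    simpa using lt_lam0 hl (show InShape lam mu r j from hj)
  rw [← Finset.sum_subset hsub]
  · refine Finset.sum_congr rfl fun j hj => ?_
    simp only [Finset.mem_Ico] at hj
    rw [h.2.1 r j hj]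
    rcases hf : f j with _ | _ | _ | t <;> simp [fill]
    split_ifs <;> first | omega | simp
  · intro j _ hj
    rw [if_neg]
    intro hf
    apply hj
    have ha := h.1 j
    rw [hf] at ha
    have := ha.1
    rw [show 2 * r / 2 = r by omega] at this
    exact Finset.mem_Ico.2 this

theorem ceq_eq (hl : Antitone lam) {T f} (h : Rep lam mu T f) (r : ℕ) :
    ceq lam mu T r + (seams (wd f (lam 0))).count (2 * r + 1) =
      ((Finset.range (lam 0)).filter
        (fun j => InShape lam mu r j ∧ InShape lam mu (r+1) j)).card := by
  rw [← card_M]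
  have h1 : ceq lam mu T r = (((Finset.range (lam 0)).filter
        (fun j => InShape lam mu r j ∧ InShape lam mu (r+1) j)).filter
        (fun j => ¬ f j = M (2 * r + 1))).card := by
    rw [ceq, ← Set.ncard_coe_finset]
    congr 1
    ext j
    simp only [Set.mem_setOf_eq, Finset.coe_filter, Finset.mem_range, Finset.mem_filter]
    constructor
    · rintro ⟨a, b, m, m1, m2, m3, m4⟩
      refine ⟨⟨lt_lam0 hl a, a, b⟩, ?_⟩
      intro hf
      rw [h.2.1 _ j a, hf] at m1
      rw [h.2.1 _ j b, hf] at m3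
      simp only [fill] at m1 m3
      rw [if_pos (by omega)] at m1
      rw [if_neg (by omega), if_neg (by omega)] at m3
      simp at m1 m3
      omega
    · rintro ⟨⟨-, a, b⟩, hne⟩
      refine ⟨a, b, ?_⟩
      rw [h.2.1 _ j a, h.2.1 _ j b]
      have ha := h.1 j
      rcases hf : f j with _ | _ | _ | t <;> rw [hf] at ha hne
      · exact ⟨1, by simp [fill]⟩
      · exact ⟨2, by simp [fill]⟩
      · exact absurd ⟨_, a⟩ ha
      · have hne' : t ≠ 2 * r + 1 := fun e => hne (by rw [e])
        rcases lt_or_gt_of_ne hne' with hlt | hgt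
        · refine ⟨2, ?_, ?_, ?_, ?_⟩
          · rw [two_mem_M]; omega
          · intro x hx; have := fill_sub _ _ hx; simp at this; omega
          · rw [two_mem_M]; omega
          · intro x hx
            simp only [fill] at hx
            rw [if_neg (by omega), if_neg (by omega)] at hx
            simp at hx; omega
        · refine ⟨1, ?_, ?_, ?_, ?_⟩
          · rw [one_mem_M]; omega
          · intro x hx
            simp only [fill] at hx
            rw [if_pos (by omega)] at hx
            simp at hx; omega
          · rw [one_mem_M]; omega
          · intro x hx; have := fill_sub _ _ hx; simp at this; omega
  have h2 : (Finset.range (lam 0)).filter (fun j => f j = M (2 * r + 1)) =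
      ((Finset.range (lam 0)).filter
        (fun j => InShape lam mu r j ∧ InShape lam mu (r+1) j)).filter
        (fun j => f j = M (2 * r + 1)) := by
    ext j
    simp only [Finset.mem_filter, Finset.mem_range]
    constructor
    · rintro ⟨hj, hf⟩
      have ha := h.1 j
      rw [hf] at ha
      obtain ⟨a, b⟩ := ha
      rw [show (2 * r + 1) / 2 = r by omega] at a
      rw [show (2 * r + 1 + 1) / 2 = r + 1 by omega] at b
      exact ⟨⟨hj, a, b⟩, hf⟩
    · rintro ⟨⟨hj, -⟩, hf⟩
      exact ⟨hj, hf⟩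
  rw [h1, h2, add_comm]
  exact Finset.card_filter_add_card_filter_not _

theorem rep_ok {T f} (hT : IsSVRPPn lam mu 2 T) (h : Rep lam mu T f) (j : ℕ) :
    okp lam mu j (f j) (f (j+1)) := by
  intro i h1 h2
  have := hT.1.2.2.2.1 i j h1 h2
  rw [h.2.1 _ _ h1, h.2.1 _ _ h2, le12 (fill_sub _ _) (fill_sub _ _)] at this
  exact this

theorem exists_rep (hl : Antitone lam) (hm : Antitone mu) (N : ℕ) (hN : ∀ i, N ≤ i → lam i = 0)
    {T} (hT : IsSVRPPn lam mu 2 T) : ∃ f, Rep lam mu T f := by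
  choose f hf using exists_col hl hm N hN T hT
  exact ⟨f, fun j => (hf j).1, fun i j => (hf j).2 i, hT.1.1⟩

theorem fill_col (c : Ltr) (j i i' : ℕ) (h : allowed lam mu j c) (hi : InShape lam mu i j)
    (hii : i < i') : FinsetLE (fill c i) (fill c i') := by
  rw [le12 (fill_sub _ _) (fill_sub _ _)]
  rcases c with _ | _ | _ | t
  · simp [fill]
  · simp [fill]
  · simp [fill]
  · rw [one_mem_M, two_mem_M]; omega

theorem of_rep (f : ℕ → Ltr) (ha : ∀ j, allowed lam mu j (f j))
    (ho : ∀ j, okp lam mu j (f j) (f (j+1))) :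
    ∃ T, IsSVRPPn lam mu 2 T ∧ Rep lam mu T f := by
  refine ⟨fun i j => if InShape lam mu i j then fill (f j) i else ∅, ⟨⟨?_, ?_, ?_, ?_, ?_⟩, ?_⟩,
    ha, ?_, ?_⟩
  · intro i j h; simp [h]
  · intro i j h
    have haj := ha j
    simp only [h, if_true]
    rcases hf : f j with _ | _ | _ | t <;> rw [hf] at haj
    · simp [fill]
    · simp [fill]
    · exact absurd ⟨i, h⟩ haj
    · by_cases hc : 2 * i ≤ t
      · exact ⟨1, by rwa [one_mem_M]⟩
      · exact ⟨2, by rw [two_mem_M]; omega⟩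
  · intro i j x hx
    dsimp only at hx
    split_ifs at hx
    · have := fill_sub _ _ hx; simp at this; omega
    · simp at hx
  · intro i j h h'
    simp only [h, h', if_true]
    rw [le12 (fill_sub _ _) (fill_sub _ _)]
    exact ho j i h h'
  · intro i j h h'
    simp only [h, h', if_true]
    exact fill_col _ j i (i+1) (ha j) h (by omega)
  · intro i j
    dsimp only
    split_ifs
    · exact fill_sub _ _
    · simp
  · intro i j h; simp [h]
  · intro i j h; simp [h]

end Stats

end Ltr

open Ltr in
/-- For any skew shape `lam/mu`, there exists an involution `Φ` on
`SVRPP^{12}(lam/mu)` (SVRPPs whose entries are nonempty subsets of `{1,2}`) preserving the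
`ceq` and `ex` statistics and exchanging the first two entries of the `ircont` statistic. -/
theorem exists_involution_svrpp12 (lam mu : ℕ → ℕ)
    (hlam : IsPartitionFun lam) (hmu : IsPartitionFun mu)
    (hsub : ∀ r, mu r ≤ lam r) :
    ∃ Φ : {T : ℕ → ℕ → Finset ℕ // IsSVRPPn lam mu 2 T} →
          {T : ℕ → ℕ → Finset ℕ // IsSVRPPn lam mu 2 T},
      Function.Involutive Φ ∧
      ∀ T, (∀ r, ceq lam mu (Φ T).1 r = ceq lam mu T.1 r) ∧
           (∀ r, exv lam mu (Φ T).1 r = exv lam mu T.1 r) ∧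
           (∀ v, ircont (Φ T).1 v = ircont T.1 (Equiv.swap 1 2 v)) := by
  have hl : Antitone lam := antitone_nat_of_succ_le hlam.1
  have hm : Antitone mu := antitone_nat_of_succ_le hmu.1
  obtain ⟨N, hN⟩ := hlam.2
  have hrep : ∀ T : {T : ℕ → ℕ → Finset ℕ // IsSVRPPn lam mu 2 T}, ∃ f, Rep lam mu T.1 f :=
    fun T => exists_rep hl hm N hN T.2
  choose col hcol using hrep
  let W : {T : ℕ → ℕ → Finset ℕ // IsSVRPPn lam mu 2 T} → List Ltr :=
    fun T => wd (col T) (lam 0)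
  have hempE : ∀ f : ℕ → Ltr, (∀ j, allowed lam mu j (f j)) → ∀ j, lam 0 ≤ j → f j = Ltr.E := by
    intro f hf j hj
    refine allowed_unique j _ _ (hf j) ?_ ?_
    · rintro ⟨i, hi⟩
      have := lt_lam0 hl hi
      omega
    · intro i hi
      have := lt_lam0 hl hi
      omega
  have hWmem : ∀ T, W T ∈ Wd (empC lam mu) (connC lam mu) (Cx lam mu) (lam 0) (seams (W T)) :=
    fun T => wd_mem hl hm (col T) (hcol T).1 (rep_ok T.2 (hcol T)) (lam 0)
  have hWinj : Function.Injective W := by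
    intro T T' h
    have h1 := wd_inj _ h
    have h2 : col T = col T' := by
      funext j
      by_cases hj : j < lam 0
      · exact h1 j hj
      · rw [hempE _ (hcol T).1 j (by omega), hempE _ (hcol T').1 j (by omega)]
    apply Subtype.ext
    funext i j
    by_cases hi : InShape lam mu i j
    · rw [(hcol T).2.1 i j hi, (hcol T').2.1 i j hi, h2]
    · rw [(hcol T).2.2 i j hi, (hcol T').2.2 i j hi]
  have hWsurj : ∀ S w, w ∈ Wd (empC lam mu) (connC lam mu) (Cx lam mu) (lam 0) S →
      seams w = S ∧ ∃ T, W T = w := by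
    intro S w hw
    obtain ⟨f, rfl, hfE⟩ := exists_wd (lam 0) w (Wd_length _ _ _ _ _ _ hw)
    obtain ⟨h1, h2, h3, -⟩ := mem_wd hl hm f (lam 0) S hw
    refine ⟨h1, ?_⟩
    have ha : ∀ j, allowed lam mu j (f j) := by
      intro j
      by_cases hj : j < lam 0
      · exact h2 j hj
      · rw [hfE j (by omega)]
        rintro ⟨i, hi⟩
        exact hj (lt_lam0 hl hi)
    have ho : ∀ j, okp lam mu j (f j) (f (j+1)) := by
      intro j
      by_cases hj : j + 1 < lam 0
      · exact h3 j hj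
      · rw [hfE (j+1) (by omega)]
        exact ok_to_E _ _
    obtain ⟨T, hT, hr⟩ := of_rep f ha ho
    refine ⟨⟨T, hT⟩, ?_⟩
    apply wd_congr
    intro j _
    refine allowed_unique j _ _ ((hcol ⟨T, hT⟩).1 j) (ha j) ?_
    intro i hi
    rw [← (hcol ⟨T, hT⟩).2.1 i j hi, ← hr.2.1 i j hi]
  have hequiv : ∀ (s : List ℕ) (a b : ℕ),
      Nonempty ({T // seams (W T) = s ∧ n1 (W T) = a ∧ n2 (W T) = b} ≃
        {w // w ∈ (Wd (empC lam mu) (connC lam mu) (Cx lam mu) (lam 0) s).filter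
          (fun w => n1 w = a ∧ n2 w = b)}) := by
    intro s a b
    refine ⟨Equiv.ofBijective (fun T => ⟨W T.1, ?_⟩) ⟨?_, ?_⟩⟩
    · obtain ⟨T, rfl, h2⟩ := T
      exact Finset.mem_filter.2 ⟨hWmem T, h2⟩
    · intro T T' h
      exact Subtype.ext (hWinj (congrArg Subtype.val h))
    · rintro ⟨w, hw⟩
      obtain ⟨hw1, hw2⟩ := Finset.mem_filter.1 hw
      obtain ⟨h1, T, rfl⟩ := hWsurj _ _ hw1
      exact ⟨⟨T, h1, hw2⟩, rfl⟩
  obtain ⟨Φ, hΦ, hst⟩ := exists_invol (fun T => seams (W T)) (fun T => n1 (W T))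
    (fun T => n2 (W T)) (by
      intro s a b
      obtain ⟨e1⟩ := hequiv s a b
      obtain ⟨e2⟩ := hequiv s b a
      exact ⟨e1.trans ((Finset.equivOfCardEq (card_symm _ _ _ (Cx_emp lam mu)
        (connC_emp lam mu) (lam 0) s a b)).trans e2.symm)⟩)
  refine ⟨Φ, hΦ, fun T => ?_⟩
  obtain ⟨s1, s2, s3⟩ := hst T
  simp only [W] at s1 s2 s3
  refine ⟨fun r => ?_, fun r => ?_, fun v => ?_⟩
  · have e1 := ceq_eq hl (hcol T) r
    have e2 := ceq_eq hl (hcol (Φ T)) r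
    rw [s1] at e2
    omega
  · rw [exv_eq hl (hcol T), exv_eq hl (hcol (Φ T)), s1]
  · by_cases h1 : v = 1
    · subst h1
      rw [Equiv.swap_apply_left, ircont_one hl (hcol (Φ T)), ircont_two hl (hcol T), s1, s2]
    · by_cases h2 : v = 2
      · subst h2
        rw [Equiv.swap_apply_right, ircont_two hl (hcol (Φ T)), ircont_one hl (hcol T), s1, s3]
      · rw [Equiv.swap_apply_of_ne_of_ne h1 h2, ircont_other T.2 v h1 h2,
          ircont_other (Φ T).2 v h1 h2]
end
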